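/- arXiv:1512.07044 — 2 statements merged into one kernel-verified Lean document; each statement's English description precedes it below -/
import Mathlib

section
/- Subgroups of groups of subexponential growth: Let B be a group. There exists a group W with a finite generating set such that W has subexponential growth and B embeds as a subgroup of W, if and only if B is countable and locally of subexponential growth (i.e., every finitely generated subgroup of B has subexponential growth). -/
/-- The word norm of `g` with respect to a generating set `S`. -/
noncomputable def wordNorm {G : Type*} [Group G] (S : Set G) (g : G) : ℕ :=
  sInf {n | ∃ l : List G, (∀ s ∈ l, s ∈ S) ∧ l.length = n ∧ l.prod = g}

/-- The growth function `v_{G,S}(R) = #{g : ‖g‖_S ≤ R}`. -/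
noncomputable def growthFn {G : Type*} [Group G] (S : Set G) (R : ℕ) : ℕ :=
  Nat.card {g : G // wordNorm S g ≤ R}

/-- `(G, S)` has subexponential growth: `v_{G,S}(R)^{1/R} → 1` as `R → ∞`. -/
def HasSubexpGrowth {G : Type*} [Group G] (S : Set G) : Prop :=
  Filter.Tendsto (fun R : ℕ => (growthFn S R : ℝ) ^ ((R : ℝ)⁻¹)) Filter.atTop (nhds 1)

/-! A group inside a finitely generated group of subexponential growth is countable and inherits
the growth bound on its finite subsets. For the converse, any sequence of commutators of a locally
subexponential group `C` can be realised in a finitely generated group of subexponential growth: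

* Let a group act on the rays of the `5`-regular tree, each carrying a label in `C`, and let it be
  generated by the cyclic permutations of the first level and by directed elements along the ray
  `4^∞`. At level `k`, a directed element rotates the subtree at `0` according to a linear form on
  `𝔽₅²`, and it multiplies labels below `1` and `2` by powers of the two entries of a pair `c k`.
  A commutator of two conjugates of such an element multiplies a single label by
  `⁅(c k).1, (c k).2⁆` and does nothing else.
* The linear forms run periodically through the six lines of `𝔽₅²`. Every vector is annihilated by
  one of them, so at some level it contributes nothing to the length of the components. This gives
  weights on vectors which contract the length by `19 / 20` from one level to the next.
* The partition function of the group at level `k` is therefore controlled by the one at level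
  `k + 1`, and it suffices that it is finite at arbitrarily high levels. Since `c` may be trivial at
  most levels, this can be arranged whatever the growth rates of the finitely generated subgroups
  of `C` are.

It remains to embed `B` in the commutator subgroup of such a `C`. Take the permutations of `ℚ × B`
that are piecewise translations of `ℚ`, with a label in `B` on each piece; a ball in this group is
described by boundedly many labels, so growth remains subexponential. Here the element `b` acting
on one cell `[0, 1)` is a full turn of a rotation that can be performed by any rational angle. The
class of this rotation in the abelianization `A` is a homomorphism `ℚ →+ A` and, up to the class of
the untwisted rotation, depends multiplicatively on `b`. Expressing it in a `ℚ`-basis of the span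
of these classes in `ℚ →+ A`, one cancels the class of `b` by twisted rotations of other cells.
-/

namespace SubexpEmbedding

section WordBalls

open scoped Pointwise

variable {G H : Type*}

section Monoid

variable [Monoid G] [Monoid H] {S T : Set G} {g h : G} {m n r s : ℕ}

/-- The ball of radius `r` for the word metric with respect to `T`: all products of at most `r`
elements of `T`. -/
def wordBall (T : Set G) (r : ℕ) : Set G :=
  insert 1 T ^ r

lemma wordBall_zero (T : Set G) : wordBall T 0 = {1} :=
  pow_zero _

lemma wordBall_one (T : Set G) : wordBall T 1 = insert 1 T :=
  pow_one _

lemma wordBall_add (T : Set G) (r s : ℕ) : wordBall T (r + s) = wordBall T r * wordBall T s :=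
  pow_add _ r s

lemma one_mem_wordBall (T : Set G) (r : ℕ) : 1 ∈ wordBall T r :=
  Set.one_mem_pow (Set.mem_insert 1 T)

lemma subset_wordBall_one : T ⊆ wordBall T 1 :=
  (Set.subset_insert 1 T).trans (wordBall_one T).ge

lemma wordBall_mono (hST : S ⊆ T) (hrs : r ≤ s) : wordBall S r ⊆ wordBall T s :=
  (Set.pow_subset_pow_left (Set.insert_subset_insert hST)).trans
    (Set.pow_subset_pow_right (Set.mem_insert 1 T) hrs)

lemma mul_mem_wordBall (hg : g ∈ wordBall T r) (hh : h ∈ wordBall T s) :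
    g * h ∈ wordBall T (r + s) :=
  wordBall_add T r s ▸ Set.mul_mem_mul hg hh

lemma mul_mem_wordBall_succ (hg : g ∈ T) (hh : h ∈ wordBall T r) : g * h ∈ wordBall T (r + 1) :=
  add_comm r 1 ▸ mul_mem_wordBall (subset_wordBall_one hg) hh

lemma wordBall_finite (hT : T.Finite) (r : ℕ) : (wordBall T r).Finite := by
  induction r with
  | zero => simp [wordBall_zero]
  | succ r ih =>
    rw [wordBall_add, wordBall_one]
    exact ih.mul (hT.insert 1)

lemma one_le_ncard_wordBall (hT : T.Finite) (r : ℕ) : 1 ≤ (wordBall T r).ncard :=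
  (Set.ncard_pos (wordBall_finite hT r)).2 ⟨1, one_mem_wordBall T r⟩

lemma wordBall_image (φ : G →* H) (T : Set G) (r : ℕ) :
    wordBall (φ '' T) r = φ '' wordBall T r := by
  rw [wordBall, wordBall, Set.image_pow, Set.image_insert_eq, map_one]

lemma wordBall_subset_of_subset_wordBall (h : T ⊆ wordBall S m) (r : ℕ) :
    wordBall T r ⊆ wordBall S (m * r) := by
  rw [wordBall, wordBall, pow_mul]
  exact Set.pow_subset_pow_left (Set.insert_subset (one_mem_wordBall S m) h)

lemma mem_wordBall_iff_exists_list :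
    g ∈ wordBall T r ↔ ∃ l : List G, (∀ t ∈ l, t ∈ T) ∧ l.length ≤ r ∧ l.prod = g := by
  constructor
  · intro hg
    induction r generalizing g with
    | zero => exact ⟨[], by simp, by simp, by simpa [wordBall_zero, eq_comm] using hg⟩
    | succ r ih =>
      rw [add_comm, wordBall_add, wordBall_one] at hg
      obtain ⟨a, ha, b, hb, rfl⟩ := hg
      obtain ⟨l, hl, hlen, rfl⟩ := ih hb
      rcases ha with rfl | ha
      · exact ⟨l, hl, hlen.trans r.le_succ, by simp⟩
      · exact ⟨a :: l, by simpa using ⟨ha, hl⟩, by simpa using hlen, by simp⟩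
  · rintro ⟨l, hl, hlen, rfl⟩
    refine wordBall_mono subset_rfl hlen ?_
    clear hlen
    induction l with
    | nil => exact one_mem_wordBall T 0
    | cons a l ih =>
      rw [List.forall_mem_cons] at hl
      exact mul_mem_wordBall_succ hl.1 (ih hl.2)

end Monoid

section Group

variable [Group G] {S F : Set G}

lemma zpow_mem_wordBall {g : G} (h : g ∈ S) (h' : g⁻¹ ∈ S) (n : ℤ) :
    g ^ n ∈ wordBall S n.natAbs := by
  have pow_mem {x : G} (hx : x ∈ S) (n : ℕ) : x ^ n ∈ wordBall S n :=
    Set.pow_mem_pow (Set.mem_insert_of_mem 1 hx)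
  obtain ⟨k, rfl | rfl⟩ := n.eq_nat_or_neg
  · simpa using pow_mem h k
  · simpa [← inv_pow] using pow_mem h' k

lemma exists_mem_wordBall (hinv : S⁻¹ = S) (hS : Subgroup.closure S = ⊤) (g : G) :
    ∃ r, g ∈ wordBall S r := by
  have hg : g ∈ (Subgroup.closure S).toSubmonoid := hS ▸ Subgroup.mem_top g
  rw [Subgroup.closure_toSubmonoid, hinv, Set.union_self] at hg
  obtain ⟨l, hl, rfl⟩ := Submonoid.exists_list_of_mem_closure hg
  exact ⟨l.length, mem_wordBall_iff_exists_list.2 ⟨l, hl, le_rfl, rfl⟩⟩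

lemma exists_subset_wordBall (hinv : S⁻¹ = S) (hS : Subgroup.closure S = ⊤) (hF : F.Finite) :
    ∃ m, F ⊆ wordBall S m := by
  obtain ⟨m, hm⟩ := Directed.exists_mem_subset_of_finset_subset_biUnion
    (s := hF.toFinset) (f := wordBall S)
    (Monotone.directed_le fun _ _ h => wordBall_mono subset_rfl h)
    fun g _ => Set.mem_iUnion.2 (exists_mem_wordBall hinv hS g)
  exact ⟨m, hF.coe_toFinset ▸ hm⟩

lemma countable_of_finite_generating (hfin : S.Finite) (hinv : S⁻¹ = S)
    (hS : Subgroup.closure S = ⊤) : Countable G := by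
  rw [← Set.countable_univ_iff,
    ← Set.iUnion_eq_univ_iff.2 (exists_mem_wordBall hinv hS)]
  exact Set.countable_iUnion fun r => (wordBall_finite hfin r).countable

lemma wordNorm_le_iff_mem_wordBall (hinv : S⁻¹ = S) (hS : Subgroup.closure S = ⊤) (g : G)
    (r : ℕ) : wordNorm S g ≤ r ↔ g ∈ wordBall S r := by
  rw [mem_wordBall_iff_exists_list]
  constructor
  · intro h
    obtain ⟨n, hn⟩ := exists_mem_wordBall hinv hS g
    obtain ⟨l, hl, -, hprod⟩ := mem_wordBall_iff_exists_list.1 hn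
    obtain ⟨l', hl', hlen', hprod'⟩ : wordNorm S g ∈
        {n | ∃ l : List G, (∀ s ∈ l, s ∈ S) ∧ l.length = n ∧ l.prod = g} :=
      Nat.sInf_mem ⟨l.length, l, hl, rfl, hprod⟩
    exact ⟨l', hl', hlen'.trans_le h, hprod'⟩
  · rintro ⟨l, hl, hlen, hprod⟩
    exact (Nat.sInf_le ⟨l, hl, rfl, hprod⟩ : wordNorm S g ≤ l.length).trans hlen

lemma growthFn_eq_ncard_wordBall (hinv : S⁻¹ = S) (hS : Subgroup.closure S = ⊤) (r : ℕ) :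
    growthFn S r = (wordBall S r).ncard := by
  simp_rw [growthFn, wordNorm_le_iff_mem_wordBall hinv hS]
  exact Nat.card_coe_set_eq _

end Group

end WordBalls

section SubexponentialBalls

variable {G H : Type*}

/-- Subexponential growth of the submonoid generated by `T`, in the quantitative form in which it
is transported between groups. -/
def SubexpBalls [Monoid G] (T : Set G) : Prop :=
  ∀ ε > 0, ∃ K : ℝ, ∀ r : ℕ, ((wordBall T r).ncard : ℝ) ≤ K * Real.exp (ε * r)

/-- Every finitely generated submonoid (equivalently, for a group, every finitely generated
subgroup) of `G` has subexponential growth. -/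
def LocallySubexp (G : Type*) [Monoid G] : Prop :=
  ∀ F : Set G, F.Finite → SubexpBalls F

section Monoid

variable [Monoid G] [Monoid H] {S T : Set G}

lemma SubexpBalls.of_ncard_le_pow {S : Set G} {T : Set H} (hS : SubexpBalls S) (a d : ℕ)
    (h : ∀ r, (wordBall T r).ncard ≤ (a * (wordBall S r).ncard) ^ d) : SubexpBalls T := by
  intro ε hε
  obtain ⟨K, hK⟩ := hS (ε / (d + 1)) (by positivity)
  refine ⟨(a * K) ^ d, fun r => ?_⟩
  calc ((wordBall T r).ncard : ℝ)
      ≤ (a * ((wordBall S r).ncard : ℝ)) ^ d := mod_cast h r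
    _ ≤ (a * (K * Real.exp (ε / (d + 1) * r))) ^ d := by gcongr; exact hK r
    _ = (a * K) ^ d * Real.exp (d * (ε / (d + 1) * r)) := by
        rw [← mul_assoc, mul_pow, Real.exp_nat_mul]
    _ ≤ (a * K) ^ d * Real.exp (ε * r) := by
        have hK0 : 0 ≤ K := (Nat.cast_nonneg _).trans (by simpa using hK 0)
        have hd : d * (ε / (d + 1)) ≤ ε := by
          rw [mul_div_assoc', div_le_iff₀ (by positivity)]
          linarith
        rw [← mul_assoc]
        gcongr

lemma SubexpBalls.of_subset_wordBall (hfin : S.Finite) {m : ℕ} (h : T ⊆ wordBall S m)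
    (hS : SubexpBalls S) : SubexpBalls T := by
  intro ε hε
  obtain ⟨K, hK⟩ := hS (ε / (m + 1)) (by positivity)
  have hK0 : 0 ≤ K := (Nat.cast_nonneg _).trans (by simpa using hK 0)
  refine ⟨K, fun r => ?_⟩
  calc ((wordBall T r).ncard : ℝ)
      ≤ (wordBall S (m * r)).ncard :=
        mod_cast Set.ncard_le_ncard (wordBall_subset_of_subset_wordBall h r)
          (wordBall_finite hfin _)
    _ ≤ K * Real.exp (ε / (m + 1) * (m * r : ℕ)) := hK _
    _ ≤ K * Real.exp (ε * r) := by
        have hm : ε / (m + 1) * m ≤ ε := by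
          rw [div_mul_eq_mul_div, div_le_iff₀ (by positivity)]
          linarith
        push_cast
        rw [← mul_assoc]
        gcongr

lemma subexpBalls_image_iff {φ : G →* H} (hφ : Function.Injective φ) :
    SubexpBalls (φ '' T) ↔ SubexpBalls T := by
  simp only [SubexpBalls, wordBall_image, Set.ncard_image_of_injective _ hφ]

lemma LocallySubexp.of_injective (h : LocallySubexp H) {φ : G →* H}
    (hφ : Function.Injective φ) : LocallySubexp G :=
  fun _ hF => (subexpBalls_image_iff hφ).1 (h _ (hF.image φ))

end Monoid

lemma tendsto_rpow_inv_one_iff {u : ℕ → ℝ} (hu : ∀ n, 1 ≤ u n) :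
    Filter.Tendsto (fun n : ℕ => u n ^ (n : ℝ)⁻¹) Filter.atTop (nhds 1) ↔
      ∀ ε > 0, ∃ K : ℝ, ∀ n : ℕ, u n ≤ K * Real.exp (ε * n) := by
  have hu0 (n : ℕ) : 0 ≤ u n := zero_le_one.trans (hu n)
  constructor
  · intro h ε hε
    have hev : ∀ᶠ n : ℕ in Filter.atTop, ‖u n‖ ≤ 1 * ‖Real.exp (ε * n)‖ := by
      filter_upwards [h.eventually_lt_const (Real.one_lt_exp_iff.2 hε),
        Filter.eventually_gt_atTop 0] with n hn hn0
      rw [Real.rpow_inv_lt_iff_of_pos (hu0 n) (Real.exp_nonneg ε) (by positivity),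
        ← Real.exp_mul] at hn
      simpa [abs_of_nonneg (hu0 n)] using hn.le
    obtain ⟨K, -, hK⟩ := Asymptotics.bound_of_isBigO_nat_atTop (Asymptotics.IsBigO.of_bound 1 hev)
    exact ⟨K, fun n => by simpa [abs_of_nonneg (hu0 n)] using hK (x := n) (Real.exp_ne_zero _)⟩
  · refine fun h => tendsto_order.2 ⟨fun a ha => .of_forall fun n =>
      ha.trans_le (Real.one_le_rpow (hu n) (by positivity)), fun a ha => ?_⟩
    have hε : 0 < Real.log a / 2 := half_pos (Real.log_pos ha)
    have ha0 : 0 < a := zero_lt_one.trans ha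
    obtain ⟨K, hK⟩ := h _ hε
    have hexp : Filter.Tendsto (fun n : ℕ => Real.exp (Real.log a / 2 * n))
        Filter.atTop Filter.atTop :=
      Real.tendsto_exp_atTop.comp (tendsto_natCast_atTop_atTop.const_mul_atTop hε)
    filter_upwards [hexp.eventually_gt_atTop K, Filter.eventually_gt_atTop 0] with n hn hn0
    rw [Real.rpow_inv_lt_iff_of_pos (hu0 n) ha0.le (by positivity)]
    calc u n ≤ K * Real.exp (Real.log a / 2 * n) := hK n
      _ < Real.exp (Real.log a / 2 * n) * Real.exp (Real.log a / 2 * n) := by gcongr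
      _ = a ^ (n : ℝ) := by
        rw [← Real.exp_add, Real.rpow_def_of_pos ha0]
        congr 1
        ring

variable [Group G] {S F : Set G}

lemma hasSubexpGrowth_iff_subexpBalls (hfin : S.Finite) (hinv : S⁻¹ = S)
    (hS : Subgroup.closure S = ⊤) : HasSubexpGrowth S ↔ SubexpBalls S := by
  simp only [HasSubexpGrowth, growthFn_eq_ncard_wordBall hinv hS]
  exact tendsto_rpow_inv_one_iff fun r => mod_cast one_le_ncard_wordBall hfin r

lemma hasSubexpGrowth_closure_iff (hfin : F.Finite) (hinv : F⁻¹ = F) :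
    HasSubexpGrowth {x : Subgroup.closure F | (x : G) ∈ F} ↔ SubexpBalls F := by
  have himage : (Subgroup.closure F).subtype '' {x | (x : G) ∈ F} = F := by
    refine (Set.image_preimage_eq_range_inter (f := Subtype.val)).trans ?_
    simp
  have hinv' : {x : Subgroup.closure F | (x : G) ∈ F}⁻¹ =
      {x : Subgroup.closure F | (x : G) ∈ F} := by
    ext x
    simp only [Set.mem_inv, Set.mem_ofPred_eq, Subgroup.coe_inv]
    rw [← Set.mem_inv, hinv]
  refine (hasSubexpGrowth_iff_subexpBalls (hfin.preimage Subtype.val_injective.injOn) hinv'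
    Subgroup.closure_closure_coe_preimage).trans ?_
  rw [← subexpBalls_image_iff (Subgroup.closure F).subtype_injective]
  exact iff_of_eq (congrArg SubexpBalls himage)

lemma SubexpBalls.locallySubexp (h : SubexpBalls S) (hfin : S.Finite) (hinv : S⁻¹ = S)
    (hS : Subgroup.closure S = ⊤) : LocallySubexp G := by
  intro F hF
  obtain ⟨m, hm⟩ := exists_subset_wordBall hinv hS hF
  exact h.of_subset_wordBall hfin hm

lemma locallySubexp_iff_hasSubexpGrowth : LocallySubexp G ↔ ∀ F : Set G, F.Finite →
    HasSubexpGrowth {x : Subgroup.closure (F ∪ F⁻¹) | (x : G) ∈ F ∪ F⁻¹} := by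
  have hinv (F : Set G) : (F ∪ F⁻¹)⁻¹ = F ∪ F⁻¹ := by
    rw [Set.union_inv, inv_inv, Set.union_comm]
  refine ⟨fun h F hF => ?_, fun h F hF => ?_⟩
  · exact (hasSubexpGrowth_closure_iff (hF.union hF.inv) (hinv F)).2 (h _ (hF.union hF.inv))
  · exact ((hasSubexpGrowth_closure_iff (hF.union hF.inv) (hinv F)).1 (h F hF)).of_subset_wordBall
      (hF.union hF.inv) (Set.subset_union_left.trans subset_wordBall_one)

end SubexponentialBalls

section Tree

/-- The boundary of the regular tree on the alphabet `A`, with a label in `C` attached to each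
ray. All groups of the construction act on such a set. -/
abbrev Point (A C : Type*) := Stream' A × C

variable {A C : Type*}

/-- The point obtained by prefixing the letter `a` to the ray of `y`. -/
def cons (a : A) (y : Point A C) : Point A C :=
  (Stream'.cons a y.1, y.2)

lemma cons_injective2 : Function.Injective2 (cons : A → Point A C → Point A C) := by
  intro a b y y' h
  obtain ⟨hab, htail⟩ := Stream'.cons_injective2 (congrArg Prod.fst h)
  exact ⟨hab, Prod.ext htail (congrArg Prod.snd h :)⟩

/-- A point is determined by the first letter of its ray and by the remaining point. -/
def headTail : (Σ _ : A, Point A C) ≃ Point A C where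
  toFun p := cons p.1 p.2
  invFun y := ⟨y.1.head, (y.1.tail, y.2)⟩
  left_inv _ := rfl
  right_inv y := Prod.ext (Stream'.eta y.1) rfl

lemma exists_eq_cons (y : Point A C) : ∃ a y', y = cons a y' :=
  ⟨_, _, (headTail.apply_symm_apply y).symm⟩

lemma perm_ext_cons {f g : Equiv.Perm (Point A C)} (h : ∀ a y, f (cons a y) = g (cons a y)) :
    f = g := by
  ext1 y
  obtain ⟨a, y, rfl⟩ := exists_eq_cons y
  exact h a y

/-- The permutation with components `g a`: it fixes the first letter `a` of a point and acts by
`g a` on the rest. -/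
def wreath : (A → Equiv.Perm (Point A C)) →* Equiv.Perm (Point A C) :=
  headTail.permCongrHom.toMonoidHom.comp
    (Equiv.Perm.sigmaCongrRightHom fun _ : A => Point A C)

@[simp] lemma wreath_cons (g : A → Equiv.Perm (Point A C)) (a : A) (y : Point A C) :
    wreath g (cons a y) = cons a (g a y) :=
  rfl

section Rotation

variable [AddGroup A]

/-- Right translation by `a` of the first letter. -/
def rot (a : A) : Equiv.Perm (Point A C) where
  toFun y := cons (y.1.head + a) (y.1.tail, y.2)
  invFun y := cons (y.1.head - a) (y.1.tail, y.2)
  left_inv y := by simp [cons, Stream'.eta]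
  right_inv y := by simp [cons, Stream'.eta]

@[simp] lemma rot_cons (a b : A) (y : Point A C) : rot a (cons b y) = cons (b + a) y :=
  rfl

@[simp] lemma rot_zero : (rot 0 : Equiv.Perm (Point A C)) = 1 :=
  perm_ext_cons fun a y => by simp

lemma rot_mul_rot (a b : A) : (rot a * rot b : Equiv.Perm (Point A C)) = rot (b + a) :=
  perm_ext_cons fun c y => by simp [add_assoc]

lemma rot_inv (a : A) : (rot a : Equiv.Perm (Point A C))⁻¹ = rot (-a) := by
  rw [inv_eq_iff_mul_eq_one, rot_mul_rot, neg_add_cancel, rot_zero]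

lemma rot_mul_wreath (a : A) (g : A → Equiv.Perm (Point A C)) :
    rot a * wreath g = wreath (fun i => g (i - a)) * rot a :=
  perm_ext_cons fun b y => by simp

lemma rot_mul_wreath_mul_rot_inv (a : A) (g : A → Equiv.Perm (Point A C)) :
    rot a * wreath g * (rot a)⁻¹ = wreath fun i => g (i - a) := by
  rw [rot_mul_wreath, mul_inv_cancel_right]

end Rotation

section Spine

variable (o : A)

/-- The parametrisation of points by the ray `o^∞` and its label, or by the branch `o^n a` along
which the point leaves this ray and the rest of the point. -/
def spineMap : C ⊕ (Σ _ : ℕ × {a // a ≠ o}, Point A C) → Point A C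
  | .inl z => (Stream'.const o, z)
  | .inr ⟨(n, a), y⟩ => (cons o)^[n] (cons a y)

variable {o}

lemma cons_const (z : C) : cons o (Stream'.const o, z) = (Stream'.const o, z) :=
  Prod.ext (Stream'.const_eq o).symm rfl

lemma cons_spineMap_inr (n : ℕ) (a : {a // a ≠ o}) (y : Point A C) :
    cons o (spineMap o (.inr ⟨(n, a), y⟩)) = spineMap o (.inr ⟨(n + 1, a), y⟩) :=
  (Function.iterate_succ_apply' _ n _).symm

lemma exists_cons_eq_spineMap (y : C ⊕ (Σ _ : ℕ × {a // a ≠ o}, Point A C)) :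
    ∃ y', cons o (spineMap o y) = spineMap o y' := by
  rcases y with z | ⟨⟨n, a⟩, y⟩
  · exact ⟨.inl z, cons_const z⟩
  · exact ⟨_, cons_spineMap_inr n a y⟩

lemma spineMap_injective : Function.Injective (spineMap (C := C) o) := by
  have leave_ne_const (n : ℕ) (a : {a // a ≠ o}) (y : Point A C) (z : C) :
      (Stream'.const o, z) ≠ (cons o)^[n] (cons a y) := by
    intro h
    have hz : (Stream'.const o, z) = (cons o)^[n] (Stream'.const o, z) :=
      (Function.iterate_fixed (cons_const z) n).symm
    rw [hz, ← cons_const z] at h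
    exact a.2 (cons_injective2 ((cons_injective2.right o).iterate n h)).1.symm
  rintro (z | ⟨⟨n, a⟩, y⟩) (z' | ⟨⟨n', a'⟩, y'⟩) h
  · exact congrArg Sum.inl (congrArg Prod.snd h)
  · exact absurd h (leave_ne_const n' a' y' z)
  · exact absurd h.symm (leave_ne_const n a y z')
  · change (cons o)^[n] (cons a y) = (cons o)^[n'] (cons a' y') at h
    wlog hn : n ≤ n' generalizing n a y n' a' y'
    · exact (this _ _ _ _ _ _ h.symm (Nat.le_of_not_le hn)).symm
    obtain ⟨m, rfl⟩ := Nat.exists_eq_add_of_le hn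
    rw [Function.iterate_add_apply] at h
    have h' := (cons_injective2.right o).iterate n h
    cases m with
    | zero =>
      obtain ⟨ha, rfl⟩ := cons_injective2 h'
      rw [Subtype.ext ha, add_zero]
    | succ m =>
      rw [Function.iterate_succ_apply'] at h'
      exact absurd (cons_injective2 h').1 a.2

lemma spineMap_surjective : Function.Surjective (spineMap (C := C) o) := by
  rintro ⟨x, z⟩
  by_cases hx : ∃ n, x.get n ≠ o
  · obtain ⟨n, hn⟩ := hx
    induction n generalizing x with
    | zero => exact ⟨.inr ⟨(0, ⟨x.head, hn⟩), (x.tail, z)⟩, Prod.ext (Stream'.eta x) rfl⟩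
    | succ n ih =>
      by_cases h0 : x.head = o
      · obtain ⟨y, hy⟩ := ih x.tail hn
        obtain ⟨y', hy'⟩ := exists_cons_eq_spineMap y
        refine ⟨y', ?_⟩
        rw [← hy', hy, ← h0]
        exact Prod.ext (Stream'.eta x) rfl
      · exact ⟨.inr ⟨(0, ⟨x.head, h0⟩), (x.tail, z)⟩, Prod.ext (Stream'.eta x) rfl⟩
  · push Not at hx
    exact ⟨.inl z, Prod.ext (Stream'.ext fun n => (hx n).symm) rfl⟩

variable (o)

/-- The bijection given by `spineMap`. -/
noncomputable def spineEquiv : C ⊕ (Σ _ : ℕ × {a // a ≠ o}, Point A C) ≃ Point A C :=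
  .ofBijective (spineMap o) ⟨spineMap_injective, spineMap_surjective⟩

variable [Group C]

/-- The spinal permutation `spinal o (h, g)` multiplies the label of the ray `o^∞` by `h` and acts
by `g n a` on the subtree hanging from `o^n a` for `a ≠ o`; the permutations `g n o` are ignored. -/
noncomputable def spinal :
    C × (ℕ → A → Equiv.Perm (Point A C)) →* Equiv.Perm (Point A C) :=
  (spineEquiv o).permCongrHom.toMonoidHom.comp <|
    (Equiv.Perm.sumCongrHom C (Σ _ : ℕ × {a // a ≠ o}, Point A C)).comp <|
      (MulAction.toPermHom C C).prodMap <|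
        (Equiv.Perm.sigmaCongrRightHom fun _ : ℕ × {a // a ≠ o} => Point A C).comp
          { toFun := fun g i => g i.1 i.2
            map_one' := rfl
            map_mul' := fun _ _ => rfl }

variable {o}

lemma spinal_const (h : C) (g : ℕ → A → Equiv.Perm (Point A C)) (z : C) :
    spinal o (h, g) (Stream'.const o, z) = (Stream'.const o, h * z) := by
  have hz : (spineEquiv o).symm (Stream'.const o, z) = .inl z :=
    (spineEquiv o).symm_apply_apply (.inl z)
  change spineMap o (Equiv.sumCongr _ _ ((spineEquiv o).symm (Stream'.const o, z))) = _
  rw [hz]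
  rfl

lemma spinal_spineMap_inr (h : C) (g : ℕ → A → Equiv.Perm (Point A C)) (n : ℕ)
    (a : {a // a ≠ o}) (y : Point A C) :
    spinal o (h, g) (spineMap o (.inr ⟨(n, a), y⟩)) = spineMap o (.inr ⟨(n, a), g n a y⟩) := by
  have hy : (spineEquiv o).symm (spineMap o (.inr ⟨(n, a), y⟩)) = .inr ⟨(n, a), y⟩ :=
    (spineEquiv o).symm_apply_apply (.inr ⟨(n, a), y⟩)
  change spineMap o (Equiv.sumCongr _ _ ((spineEquiv o).symm (spineMap o (.inr ⟨(n, a), y⟩)))) = _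
  rw [hy]
  rfl

lemma spinal_eq_wreath [DecidableEq A] (h : C) (g : ℕ → A → Equiv.Perm (Point A C)) :
    spinal o (h, g) = wreath (Function.update (g 0) o (spinal o (h, fun n => g (n + 1)))) := by
  refine perm_ext_cons fun a y => ?_
  rw [wreath_cons]
  rcases eq_or_ne a o with rfl | ha
  · rw [Function.update_self]
    obtain ⟨z | ⟨⟨n, b⟩, y⟩, rfl⟩ := spineMap_surjective (o := a) y
    · change _ = cons a (spinal a (h, fun n => g (n + 1)) (Stream'.const a, z))
      rw [spinal_const, cons_const, ← spinal_const h g, ← cons_const z]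
      rfl
    · rw [spinal_spineMap_inr, cons_spineMap_inr, cons_spineMap_inr, spinal_spineMap_inr]
  · rw [Function.update_of_ne ha]
    exact spinal_spineMap_inr h g 0 ⟨a, ha⟩ y

end Spine

end Tree

section Directed

variable {C : Type*}

lemma forall_zmod_five {p : ZMod 5 → Prop} : (∀ a, p a) ↔ p 0 ∧ p 1 ∧ p 2 ∧ p 3 ∧ p 4 :=
  (Fin.forall_fin_succ (P := p)).trans <| by
    simp only [Fin.forall_fin_succ, IsEmpty.forall_iff, and_true]
    rfl

/-- The six linear forms on `𝔽₅²`, up to scalars, repeated periodically. -/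
def lineForm (k : ℕ) (v : ZMod 5 × ZMod 5) : ZMod 5 :=
  if k % 6 = 5 then v.2 else v.1 + ((k % 6 : ℕ) : ZMod 5) * v.2

lemma lineForm_add (k : ℕ) (v w : ZMod 5 × ZMod 5) :
    lineForm k (v + w) = lineForm k v + lineForm k w := by
  unfold lineForm
  split_ifs
  · rfl
  · simp only [Prod.fst_add, Prod.snd_add]
    ring

@[simp] lemma lineForm_zero (k : ℕ) : lineForm k 0 = 0 := by
  simp [lineForm]

lemma lineForm_mod_add (k t : ℕ) (v : ZMod 5 × ZMod 5) :
    lineForm (k % 6 + t) v = lineForm (k + t) v := by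
  rw [lineForm, lineForm, Nat.mod_add_mod]

variable [Group C]

/-- Left multiplication by `h` of the label of the ray `4^∞`. -/
noncomputable def del : C →* Equiv.Perm (Point (ZMod 5) C) :=
  (spinal 4).comp (MonoidHom.inl C _)

/-- The action of the directed permutation `dir c k v e h` on the subtrees hanging from the ray
`4^∞` at its initial vertex. -/
noncomputable def branch (c : ℕ → C × C) (k : ℕ) (v : ZMod 5 × ZMod 5) (e : ℤ) :
    ZMod 5 → Equiv.Perm (Point (ZMod 5) C) :=
  ![rot (lineForm k v), del ((c k).1 ^ e), del ((c k).2 ^ e), 1, 1]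

/-- The directed permutation of level `k`: it rotates by `lineForm (k + n) v` below the vertices
`4^n 0`, multiplies the labels of the rays `4^n 1 4^∞` and `4^n 2 4^∞` by the `e`-th powers of the
entries of `c (k + n)`, and the label of the ray `4^∞` by `h`. -/
noncomputable def dir (c : ℕ → C × C) (k : ℕ) (v : ZMod 5 × ZMod 5) (e : ℤ) (h : C) :
    Equiv.Perm (Point (ZMod 5) C) :=
  spinal 4 (h, fun n => branch c (k + n) v e)

/-- The components of `dir c k v e h` on the subtrees of the first level. -/
noncomputable def component (c : ℕ → C × C) (k : ℕ) (v : ZMod 5 × ZMod 5) (e : ℤ) (h : C) :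
    ZMod 5 → Equiv.Perm (Point (ZMod 5) C) :=
  ![rot (lineForm k v), del ((c k).1 ^ e), del ((c k).2 ^ e), 1, dir c (k + 1) v e h]

variable (c : ℕ → C × C) (k : ℕ)

lemma branch_mul (v w : ZMod 5 × ZMod 5) (e f : ℤ) :
    branch c k v e * branch c k w f = branch c k (v + w) (e + f) := by
  refine funext (forall_zmod_five.2 ⟨?_, ?_, ?_, mul_one 1, mul_one 1⟩)
  · exact (rot_mul_rot _ _).trans (by rw [add_comm, ← lineForm_add]; rfl)
  · exact (map_mul del _ _).symm.trans (by rw [← zpow_add]; rfl)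
  · exact (map_mul del _ _).symm.trans (by rw [← zpow_add]; rfl)

lemma branch_zero : branch c k 0 0 = 1 := by
  refine funext (forall_zmod_five.2 ⟨?_, ?_, ?_, rfl, rfl⟩) <;> simp [branch]

lemma dir_mul (v w : ZMod 5 × ZMod 5) (e f : ℤ) (h h' : C) :
    dir c k v e h * dir c k w f h' = dir c k (v + w) (e + f) (h * h') := by
  rw [dir, dir, ← map_mul, Prod.mk_mul_mk]
  congr 2
  exact funext fun n => branch_mul c (k + n) v w e f

lemma dir_zero (h : C) : dir c k 0 0 h = del h := by
  simp only [dir, branch_zero]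
  rfl

lemma dir_one : dir c k 0 0 1 = 1 := by
  rw [dir_zero, map_one]

lemma dir_inv (v : ZMod 5 × ZMod 5) (e : ℤ) (h : C) :
    (dir c k v e h)⁻¹ = dir c k (-v) (-e) h⁻¹ := by
  rw [inv_eq_iff_mul_eq_one, dir_mul, add_neg_cancel, add_neg_cancel, mul_inv_cancel, dir_one]

lemma dir_eq_wreath (v : ZMod 5 × ZMod 5) (e : ℤ) (h : C) :
    dir c k v e h = wreath (component c k v e h) := by
  rw [dir, spinal_eq_wreath]
  congr 1
  refine funext (forall_zmod_five.2 ⟨rfl, rfl, rfl, rfl, ?_⟩)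
  rw [Function.update_self]
  simp only [component, dir, ← add_assoc, add_right_comm k]
  rfl

lemma del_eq_wreath (h : C) : del h = wreath (Pi.mulSingle 4 (del h)) :=
  spinal_eq_wreath h 1

end Directed

section Weight

/-- The weight of `v` at level `k`, a function of the number of levels to wait until a linear
form kills `v`. The values are chosen so that `weight_succ_le` holds. -/
def weight (k : ℕ) (v : ZMod 5 × ZMod 5) : ℕ :=
  if v = 0 then 0
  else if lineForm k v = 0 then 50
  else if lineForm (k + 1) v = 0 then 56
  else if lineForm (k + 2) v = 0 then 62
  else if lineForm (k + 3) v = 0 then 68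
  else if lineForm (k + 4) v = 0 then 75
  else 82

@[simp] lemma weight_zero (k : ℕ) : weight k 0 = 0 :=
  if_pos rfl

lemma weight_le (k : ℕ) (v : ZMod 5 × ZMod 5) : weight k v ≤ 82 := by
  unfold weight
  split_ifs <;> norm_num

lemma le_weight (k : ℕ) {v : ZMod 5 × ZMod 5} (hv : v ≠ 0) : 50 ≤ weight k v := by
  rw [weight, if_neg hv]
  split_ifs <;> norm_num

lemma weight_add_le (k : ℕ) (v w : ZMod 5 × ZMod 5) :
    weight k (v + w) ≤ weight k v + weight k w := by
  rcases eq_or_ne v 0 with rfl | hv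
  · simp
  rcases eq_or_ne w 0 with rfl | hw
  · simp
  have := weight_le k (v + w)
  have := le_weight k hv
  have := le_weight k hw
  lia

lemma weight_mod_add (k t : ℕ) (v : ZMod 5 × ZMod 5) :
    weight (k % 6 + t) v = weight (k + t) v := by
  simp only [weight, add_assoc, lineForm_mod_add]

set_option maxRecDepth 100000 in
lemma weight_succ_le (k : ℕ) (v : ZMod 5 × ZMod 5) :
    20 * (weight (k + 1) v + if lineForm k v = 0 then 0 else 50) ≤ 19 * (50 + weight k v) := by
  have periodic : ∀ (j : Fin 6) (v : ZMod 5 × ZMod 5),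
      20 * (weight (j + 1) v + if lineForm (j + 0) v = 0 then 0 else 50) ≤
        19 * (50 + weight (j + 0) v) := by
    decide
  have := periodic ⟨k % 6, k.mod_lt (by norm_num)⟩ v
  simp only [weight_mod_add, lineForm_mod_add] at this
  exact this

end Weight

section Words

variable {C : Type*} [Group C]

/-- The entries of `c 0, …, c (k - 1)` and their inverses. -/
def gens (c : ℕ → C × C) (k : ℕ) : Set C :=
  {x | ∃ i < k, x = (c i).1 ∨ x = (c i).1⁻¹ ∨ x = (c i).2 ∨ x = (c i).2⁻¹}

lemma gens_mono (c : ℕ → C × C) : Monotone (gens c) := by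
  rintro k m hkm x ⟨i, hi, hx⟩
  exact ⟨i, hi.trans_le hkm, hx⟩

open Classical in
/-- The indicator function of the levels at which `c` is nontrivial. -/
noncomputable def activity (c : ℕ → C × C) (k : ℕ) : ℝ :=
  if c k = 1 then 0 else 1

lemma activity_nonneg (c : ℕ → C × C) (k : ℕ) : 0 ≤ activity c k := by
  unfold activity
  split_ifs <;> norm_num

/-- A rotation followed by a directed permutation, together with a bound `radius` for the word
length of the label `label` of the latter. -/
@[ext] structure Syllable (C : Type*) where
  letter : ZMod 5
  vec : ZMod 5 × ZMod 5
  exponent : ℤ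
  label : C
  radius : ℕ

namespace Syllable

/-- At level `k`, labels are measured in the word metric of `gens c k`. -/
def Valid (c : ℕ → C × C) (k : ℕ) (s : Syllable C) : Prop :=
  s.label ∈ wordBall (gens c k) s.radius

/-- The permutation represented by a syllable. -/
noncomputable def perm (c : ℕ → C × C) (k : ℕ) (s : Syllable C) :
    Equiv.Perm (Point (ZMod 5) C) :=
  dir c k s.vec s.exponent s.label * rot s.letter

/-- The cost of a syllable; the constant `50` accounts for the rotation. -/
def cost (k : ℕ) (lam mu nu : ℝ) (s : Syllable C) : ℝ :=
  lam * (50 + weight k s.vec) + mu * |(s.exponent : ℝ)| + nu * s.radius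

/-- The costs of the components of a syllable; `del` components only cost something at active
levels. -/
noncomputable def componentCost (c : ℕ → C × C) (k : ℕ) (lam mu nu : ℝ) (s : Syllable C) :
    ZMod 5 → ℝ :=
  ![if lineForm k s.vec = 0 then 0 else 50 * lam,
    nu * activity c k * |(s.exponent : ℝ)|,
    nu * activity c k * |(s.exponent : ℝ)|,
    0,
    lam * weight (k + 1) s.vec + mu * |(s.exponent : ℝ)| + nu * s.radius]

lemma sum_componentCost_le (s : Syllable C) (hlam : 0 ≤ lam) :
    ∑ i, s.componentCost c k lam mu nu i ≤
      s.cost k (19 / 20 * lam) (mu + 2 * nu * activity c k) nu := by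
  have hweight : lam * weight (k + 1) s.vec + (if lineForm k s.vec = 0 then 0 else 50 * lam) ≤
      19 / 20 * lam * (50 + weight k s.vec) := by
    have hnat : (20 : ℝ) * (weight (k + 1) s.vec + if lineForm k s.vec = 0 then 0 else 50) ≤
        19 * (50 + weight k s.vec) := mod_cast weight_succ_le k s.vec
    have := mul_le_mul_of_nonneg_left hnat hlam
    split_ifs at this ⊢ <;> linarith
  refine (Fin.sum_univ_five (s.componentCost c k lam mu nu)).trans_le ?_
  simp only [componentCost, Syllable.cost, Matrix.cons_val]
  linarith

end Syllable

/-- The permutation `g` is the value of a nonempty word of valid syllables of cost at most `t`. -/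
def CostLE (c : ℕ → C × C) (k : ℕ) (lam mu nu : ℝ) (g : Equiv.Perm (Point (ZMod 5) C))
    (t : ℝ) : Prop :=
  ∃ l : List (Syllable C), l ≠ [] ∧ (∀ s ∈ l, s.Valid c k) ∧ (l.map (Syllable.perm c k)).prod = g ∧
    (l.map (Syllable.cost k lam mu nu)).sum ≤ t

namespace CostLE

variable {c : ℕ → C × C} {k : ℕ} {lam mu nu t : ℝ} {g : Equiv.Perm (Point (ZMod 5) C)}

lemma mono {t' : ℝ} (h : CostLE c k lam mu nu g t) (ht : t ≤ t') : CostLE c k lam mu nu g t' := by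
  obtain ⟨l, hne, hvalid, hprod, hcost⟩ := h
  exact ⟨l, hne, hvalid, hprod, hcost.trans ht⟩

lemma rot (a : ZMod 5) : CostLE c k lam mu nu (rot a) (50 * lam) :=
  ⟨[⟨a, 0, 0, 1, 0⟩], by simp, by simp [Syllable.Valid, one_mem_wordBall],
    by simp [Syllable.perm, dir_one], by simp [Syllable.cost, mul_comm lam]⟩

lemma one : CostLE c k lam mu nu 1 (50 * lam) := by
  simpa using rot (c := c) (k := k) (lam := lam) (mu := mu) (nu := nu) 0

lemma mul {g' : Equiv.Perm (Point (ZMod 5) C)} {t' : ℝ} (h : CostLE c k lam mu nu g t)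
    (h' : CostLE c k lam mu nu g' t') : CostLE c k lam mu nu (g * g') (t + t') := by
  obtain ⟨l, hne, hvalid, rfl, hcost⟩ := h
  obtain ⟨l', -, hvalid', rfl, hcost'⟩ := h'
  exact ⟨l ++ l', by simp [hne], by simpa [or_imp, forall_and] using ⟨hvalid, hvalid'⟩,
    by simp, by simpa using add_le_add hcost hcost'⟩

lemma dir_mul (hlam : 0 ≤ lam) (hmu : 0 ≤ mu) (h : CostLE c k lam mu nu g t)
    (v : ZMod 5 × ZMod 5) (e : ℤ) {x : C} {r : ℕ} (hx : x ∈ wordBall (gens c k) r) :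
    CostLE c k lam mu nu (dir c k v e x * g) (lam * weight k v + mu * |(e : ℝ)| + nu * r + t) := by
  obtain ⟨l, hne, hvalid, rfl, hcost⟩ := h
  obtain ⟨s, l, rfl⟩ := List.exists_cons_of_ne_nil hne
  rw [List.forall_mem_cons] at hvalid
  refine ⟨⟨s.letter, v + s.vec, e + s.exponent, x * s.label, r + s.radius⟩ :: l, by simp,
    List.forall_mem_cons.2 ⟨mul_mem_wordBall hx hvalid.1, hvalid.2⟩, ?_, ?_⟩
  · simp only [List.map_cons, List.prod_cons, Syllable.perm, ← SubexpEmbedding.dir_mul, mul_assoc]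
  · have hweight : (weight k (v + s.vec) : ℝ) ≤ weight k v + weight k s.vec :=
      mod_cast weight_add_le k v s.vec
    have hvec := mul_le_mul_of_nonneg_left hweight hlam
    have hexp := mul_le_mul_of_nonneg_left (abs_add_le (e : ℝ) s.exponent) hmu
    simp only [List.map_cons, List.sum_cons, Syllable.cost] at hcost ⊢
    push_cast
    linarith

lemma del_zpow_mul (hlam : 0 ≤ lam) (hmu : 0 ≤ mu) (h : CostLE c (k + 1) lam mu nu g t) {x : C}
    (hx : x = (c k).1 ∨ x = (c k).2) (e : ℤ) :
    CostLE c (k + 1) lam mu nu (del (x ^ e) * g) (nu * activity c k * |(e : ℝ)| + t) := by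
  unfold activity
  split_ifs with hc
  · have hx1 : x = 1 := by rcases hx with rfl | rfl <;> simp [hc]
    simpa [hx1] using h
  · have hball : x ^ e ∈ wordBall (gens c (k + 1)) e.natAbs := by
      apply zpow_mem_wordBall <;> exact ⟨k, k.lt_succ_self, by rcases hx with rfl | rfl <;> simp⟩
    have hdir := h.dir_mul hlam hmu 0 0 hball
    rw [dir_zero] at hdir
    exact hdir.mono (by simp)

lemma component_mul (hlam : 0 ≤ lam) (hmu : 0 ≤ mu) (h : CostLE c (k + 1) lam mu nu g t)
    {s : Syllable C} (hs : s.Valid c k) (i : ZMod 5) :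
    CostLE c (k + 1) lam mu nu (component c k s.vec s.exponent s.label i * g)
      (s.componentCost c k lam mu nu i + t) := by
  revert i
  refine forall_zmod_five.2 ⟨?_, h.del_zpow_mul hlam hmu (.inl rfl) _,
    h.del_zpow_mul hlam hmu (.inr rfl) _, ?_, ?_⟩
  · change CostLE c (k + 1) lam mu nu (SubexpEmbedding.rot (lineForm k s.vec) * g)
      ((if lineForm k s.vec = 0 then 0 else 50 * lam) + t)
    split_ifs with hv
    · simpa [hv] using h
    · exact (rot _).mul h
  · exact (congrArg₂ (CostLE c (k + 1) lam mu nu) (one_mul g) (zero_add t)).mpr h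
  · exact h.dir_mul hlam hmu _ _ (wordBall_mono (gens_mono c k.le_succ) le_rfl hs)

end CostLE

open CostLE in
lemma exists_wreath_mul_rot_eq_prod {c : ℕ → C × C} {k : ℕ} {lam mu nu : ℝ} (hlam : 0 ≤ lam)
    (hmu : 0 ≤ mu) {l : List (Syllable C)} (hl : ∀ s ∈ l, s.Valid c k) :
    ∃ (g : ZMod 5 → Equiv.Perm (Point (ZMod 5) C)) (a : ZMod 5) (t : ZMod 5 → ℝ),
      wreath g * rot a = (l.map (Syllable.perm c k)).prod ∧
      (∀ i, CostLE c (k + 1) lam mu nu (g i) (t i)) ∧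
      ∑ i, t i ≤
        (l.map (Syllable.cost k (19 / 20 * lam) (mu + 2 * nu * activity c k) nu)).sum +
          250 * lam := by
  induction l with
  | nil =>
    refine ⟨1, 0, fun _ => 50 * lam, by simp, fun _ => one, ?_⟩
    rw [Finset.sum_const, Finset.card_univ, ZMod.card, List.map_nil, List.sum_nil, nsmul_eq_mul]
    push_cast
    linarith
  | cons s l ih =>
    rw [List.forall_mem_cons] at hl
    obtain ⟨g, a, t, hg, hcost, hsum⟩ := ih hl.2
    refine ⟨fun i => component c k s.vec s.exponent s.label i * g (i - s.letter), a + s.letter,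
      fun i => s.componentCost c k lam mu nu i + t (i - s.letter), ?_,
      fun i => (hcost _).component_mul hlam hmu hl.1 i, ?_⟩
    · rw [List.map_cons, List.prod_cons, ← hg, Syllable.perm, dir_eq_wreath, mul_assoc,
        ← mul_assoc (rot _), rot_mul_wreath, mul_assoc, rot_mul_rot, ← mul_assoc, ← map_mul]
      rfl
    · have hshift : ∑ i, t (i - s.letter) = ∑ i, t i :=
        (Equiv.subRight s.letter).sum_comp t
      rw [Finset.sum_add_distrib, hshift, List.map_cons, List.sum_cons]
      linarith [s.sum_componentCost_le (c := c) (k := k) (mu := mu) (nu := nu) hlam]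

end Words

section ExpNeg

open scoped ENNReal

/-- The weight `e^(-t)` of an object of cost `t`. Taking it in `ℝ≥0∞` makes all sums of weights
meaningful. -/
noncomputable def expNeg (t : ℝ) : ℝ≥0∞ :=
  ENNReal.ofReal (Real.exp (-t))

lemma expNeg_ne_top (t : ℝ) : expNeg t ≠ ∞ :=
  ENNReal.ofReal_ne_top

lemma expNeg_zero : expNeg 0 = 1 := by
  simp [expNeg]

lemma expNeg_add (s t : ℝ) : expNeg (s + t) = expNeg s * expNeg t := by
  rw [expNeg, neg_add, Real.exp_add, ENNReal.ofReal_mul (Real.exp_pos _).le, expNeg, expNeg]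

lemma expNeg_antitone : Antitone expNeg := fun _ _ h =>
  ENNReal.ofReal_le_ofReal (Real.exp_le_exp.2 (neg_le_neg h))

lemma expNeg_sum {ι : Type*} (s : Finset ι) (t : ι → ℝ) :
    expNeg (∑ i ∈ s, t i) = ∏ i ∈ s, expNeg (t i) := by
  classical
  induction s using Finset.induction_on with
  | empty => exact expNeg_zero
  | insert i s hi ih => rw [Finset.sum_insert hi, Finset.prod_insert hi, expNeg_add, ih]

lemma expNeg_list_sum (l : List ℝ) : expNeg l.sum = (l.map expNeg).prod := by
  induction l with
  | nil => exact expNeg_zero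
  | cons t l ih => rw [List.sum_cons, expNeg_add, ih, List.map_cons, List.prod_cons]

lemma summable_exp_neg_mul {t : ℝ} (ht : 0 < t) : Summable fun n : ℕ => Real.exp (-(t * n)) :=
  (Real.summable_exp_nat_mul_iff.2 (neg_lt_zero.2 ht)).congr fun n => by congr 1; ring

lemma tsum_expNeg_mul_natCast_ne_top {t : ℝ} (ht : 0 < t) : ∑' n : ℕ, expNeg (t * n) ≠ ∞ :=
  (summable_exp_neg_mul ht).tsum_ofReal_ne_top

lemma tsum_expNeg_mul_abs_ne_top {t : ℝ} (ht : 0 < t) : ∑' n : ℤ, expNeg (t * |(n : ℝ)|) ≠ ∞ :=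
  Summable.tsum_ofReal_ne_top <|
    .of_nat_of_neg (by simpa using summable_exp_neg_mul ht) (by simpa using summable_exp_neg_mul ht)

lemma tsum_fin_prod {α : Type*} (f : α → ℝ≥0∞) (n : ℕ) :
    ∑' a : Fin n → α, ∏ i, f (a i) = (∑' a, f a) ^ n := by
  induction n with
  | zero => simp
  | succ n ih =>
    rw [← (Fin.consEquiv fun _ : Fin (n + 1) => α).tsum_eq, ENNReal.tsum_prod']
    simp only [Fin.consEquiv_apply, Fin.prod_univ_succ, Fin.cons_zero, Fin.cons_succ,
      ENNReal.tsum_mul_left, ENNReal.tsum_mul_right, ih, pow_succ']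

lemma tsum_list_prod {α : Type*} (f : α → ℝ≥0∞) :
    ∑' l : List α, (l.map f).prod = (1 - ∑' a, f a)⁻¹ := by
  rw [← ENNReal.tsum_geometric, ← List.equivSigmaTuple.symm.tsum_eq, ENNReal.tsum_sigma']
  refine tsum_congr fun n => ?_
  rw [← tsum_fin_prod]
  refine tsum_congr fun a => ?_
  simp [List.equivSigmaTuple, List.map_ofFn, List.prod_ofFn]

/-- The weight of the least cost of `g`, where `R g t` means that `g` can be obtained at
cost `t`. -/
noncomputable def maxWeight {β : Type*} (R : β → ℝ → Prop) (g : β) : ℝ≥0∞ :=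
  ⨆ (t : ℝ) (_ : R g t), expNeg t

lemma expNeg_le_maxWeight {β : Type*} {R : β → ℝ → Prop} {g : β} {t : ℝ} (h : R g t) :
    expNeg t ≤ maxWeight R g :=
  le_iSup₂_of_le t h le_rfl

lemma tsum_maxWeight_le_tsum {α β : Type*} {R : β → ℝ → Prop} (φ : α → β) (f : α → ℝ≥0∞)
    (h : ∀ g t, R g t → ∃ a, φ a = g ∧ expNeg t ≤ f a) : ∑' g, maxWeight R g ≤ ∑' a, f a := by
  rw [← ENNReal.tsum_fiberwise f φ]
  refine ENNReal.tsum_le_tsum fun g => iSup₂_le fun t ht => ?_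
  obtain ⟨a, ha, hle⟩ := h g t ht
  exact hle.trans (ENNReal.le_tsum (f := fun a : φ ⁻¹' {g} => f a) ⟨a, ha⟩)

end ExpNeg

section Counting

open scoped ENNReal

variable {C : Type*} [Group C]

/-- The partition function of the permutations generated at level `k`. -/
noncomputable def permSum (c : ℕ → C × C) (k : ℕ) (lam mu nu : ℝ) : ℝ≥0∞ :=
  ∑' g, maxWeight (CostLE c k lam mu nu) g

/-- The partition function of the syllables with label of bounded length over `T`, not counting
the cost of `letter` and `vec`. -/
noncomputable def syllableSum (T : Set C) (mu nu : ℝ) : ℝ≥0∞ :=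
  ∑' s : {s : Syllable C // s.label ∈ wordBall T s.radius},
    expNeg (mu * |(s.1.exponent : ℝ)| + nu * s.1.radius)

lemma syllableSum_mono {S T : Set C} (h : S ⊆ T) (mu nu : ℝ) :
    syllableSum S mu nu ≤ syllableSum T mu nu :=
  ENNReal.tsum_mono_subtype (fun s : Syllable C => expNeg (mu * |(s.exponent : ℝ)| + nu * s.radius))
    fun _ hs => wordBall_mono h le_rfl hs

lemma tsum_encard_wordBall_mul_expNeg_ne_top {T : Set C} (hT : T.Finite) (hsub : SubexpBalls T)
    {nu : ℝ} (hnu : 0 < nu) : ∑' r : ℕ, (wordBall T r).encard * expNeg (nu * r) ≠ ∞ := by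
  obtain ⟨K, hK⟩ := hsub (nu / 2) (half_pos hnu)
  have hterm (r : ℕ) : (wordBall T r).encard * expNeg (nu * r) ≤
      ENNReal.ofReal K * expNeg (nu / 2 * r) := by
    have hcard : ((wordBall T r).encard : ℝ≥0∞) = ENNReal.ofReal (wordBall T r).ncard := by
      rw [← (wordBall_finite hT r).cast_ncard_eq, ENNReal.ofReal_natCast]
      rfl
    rw [hcard, expNeg, expNeg, ← ENNReal.ofReal_mul (Nat.cast_nonneg _),
      ← ENNReal.ofReal_mul' (Real.exp_pos _).le]
    refine ENNReal.ofReal_le_ofReal ((mul_le_mul_of_nonneg_right (hK r) (Real.exp_pos _).le).trans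
      (le_of_eq ?_))
    rw [mul_assoc, ← Real.exp_add]
    ring_nf
  refine ne_top_of_le_ne_top ?_ (ENNReal.tsum_le_tsum hterm)
  rw [ENNReal.tsum_mul_left]
  exact ENNReal.mul_ne_top ENNReal.ofReal_ne_top (tsum_expNeg_mul_natCast_ne_top (half_pos hnu))

lemma syllableSum_ne_top {T : Set C} (hT : T.Finite) (hsub : SubexpBalls T) {mu nu : ℝ}
    (hmu : 0 < mu) (hnu : 0 < nu) : syllableSum T mu nu ≠ ∞ := by
  let code (s : {s : Syllable C // s.label ∈ wordBall T s.radius}) :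
      (ZMod 5 × ZMod 5 × ZMod 5) × ℤ × Σ r : ℕ, wordBall T r :=
    ((s.1.letter, s.1.vec), s.1.exponent, ⟨s.1.radius, s.1.label, s.2⟩)
  have code_injective : Function.Injective code := by
    rintro ⟨⟨a, v, e, x, r⟩, hs⟩ ⟨⟨a', v', e', x', r'⟩, hs'⟩ h
    obtain ⟨⟨rfl, rfl⟩, rfl, hrx⟩ : (a = a' ∧ v = v') ∧ e = e' ∧
        (⟨r, x, hs⟩ : Σ r : ℕ, wordBall T r) = ⟨r', x', hs'⟩ := by simpa [code] using h
    cases hrx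
    rfl
  have hle : syllableSum T mu nu ≤
      ∑' p : (ZMod 5 × ZMod 5 × ZMod 5) × ℤ × Σ r : ℕ, wordBall T r,
        expNeg (mu * |(p.2.1 : ℝ)|) * expNeg (nu * p.2.2.1) := by
    simp only [syllableSum, expNeg_add]
    exact ENNReal.tsum_comp_le_tsum_of_injective code_injective
      fun p => expNeg (mu * |(p.2.1 : ℝ)|) * expNeg (nu * p.2.2.1)
  refine ne_top_of_le_ne_top ?_ hle
  simp only [ENNReal.tsum_prod', ENNReal.tsum_sigma', ENNReal.tsum_mul_left,
    ENNReal.tsum_mul_right, ENNReal.tsum_set_const, tsum_fintype, Finset.sum_const, nsmul_eq_mul]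
  finiteness [tsum_expNeg_mul_abs_ne_top hmu, tsum_encard_wordBall_mul_expNeg_ne_top hT hsub hnu]

variable {c : ℕ → C × C} {k : ℕ} {lam mu nu : ℝ}

lemma permSum_le_inv (hlam : 0 ≤ lam) :
    permSum c k lam mu nu ≤ (1 - expNeg (50 * lam) * syllableSum (gens c k) mu nu)⁻¹ := by
  rw [syllableSum, ← ENNReal.tsum_mul_left, ← tsum_list_prod]
  refine tsum_maxWeight_le_tsum (fun l => (l.map fun s => s.1.perm c k).prod) _ ?_
  rintro g t ⟨l, -, hvalid, rfl, hcost⟩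
  lift l to List {s : Syllable C // s.label ∈ wordBall (gens c k) s.radius} using hvalid
  refine ⟨l, by rw [List.map_map]; rfl, (expNeg_antitone hcost).trans ?_⟩
  rw [expNeg_list_sum, List.map_map, List.map_map]
  refine List.prod_le_prod' fun s _ => ?_
  rw [← expNeg_add]
  refine expNeg_antitone ?_
  have : 0 ≤ lam * weight k s.1.vec := by positivity
  simp only [Syllable.cost]
  linarith

lemma permSum_le_pow (hlam : 0 ≤ lam) (hmu : 0 ≤ mu) :
    permSum c k (19 / 20 * lam) (mu + 2 * nu * activity c k) nu ≤
      5 * expNeg (-(250 * lam)) * permSum c (k + 1) lam mu nu ^ 5 := by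
  have hsum : ∑' p : ZMod 5 × (ZMod 5 → Equiv.Perm (Point (ZMod 5) C)),
      expNeg (-(250 * lam)) * ∏ i, maxWeight (CostLE c (k + 1) lam mu nu) (p.2 i) =
        5 * expNeg (-(250 * lam)) * permSum c (k + 1) lam mu nu ^ 5 := by
    simp only [ENNReal.tsum_prod', ENNReal.tsum_mul_left, tsum_fintype, Finset.sum_const,
      Finset.card_univ, ZMod.card, nsmul_eq_mul]
    rw [permSum, ← tsum_fin_prod, mul_left_comm, mul_assoc]
    rfl
  rw [← hsum]
  refine tsum_maxWeight_le_tsum (fun p => wreath p.2 * rot p.1) _ ?_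
  rintro g t ⟨l, -, hvalid, rfl, hcost⟩
  obtain ⟨g, a, t', hg, hcost', hle⟩ := exists_wreath_mul_rot_eq_prod (nu := nu) hlam hmu hvalid
  refine ⟨(a, g), hg, ?_⟩
  calc expNeg t ≤ expNeg (-(250 * lam) + ∑ i, t' i) := expNeg_antitone (by linarith)
    _ = expNeg (-(250 * lam)) * ∏ i, expNeg (t' i) := by rw [expNeg_add, expNeg_sum]
    _ ≤ _ := by gcongr with i; exact expNeg_le_maxWeight (hcost' i)

lemma permSum_zero_ne_top (hlam : 0 ≤ lam) (hmu : 0 ≤ mu) (hnu : 0 ≤ nu)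
    (h : permSum c k lam mu nu ≠ ∞) :
    permSum c 0 ((19 / 20) ^ k * lam) (mu + 2 * nu * ∑ i ∈ Finset.range k, activity c i) nu ≠
      ∞ := by
  induction k generalizing lam mu with
  | zero => simpa using h
  | succ k ih =>
    have hstep : permSum c k (19 / 20 * lam) (mu + 2 * nu * activity c k) nu ≠ ∞ :=
      ne_top_of_le_ne_top (by finiteness [expNeg_ne_top (-(250 * lam))]) (permSum_le_pow hlam hmu)
    have := activity_nonneg c k
    convert ih (by positivity) (by positivity) hstep using 2
    · ring
    · rw [Finset.sum_range_succ]
      ring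

/-- The generators of the group at level `0`. -/
def generators (c : ℕ → C × C) : Set (Equiv.Perm (Point (ZMod 5) C)) :=
  Set.range rot ∪ Set.range (fun v => dir c 0 v 0 1) ∪ {dir c 0 0 1 1, dir c 0 0 (-1) 1}

lemma generators_finite (c : ℕ → C × C) : (generators c).Finite :=
  ((Set.finite_range _).union (Set.finite_range _)).union (Set.toFinite _)

lemma generators_inv (c : ℕ → C × C) : (generators c)⁻¹ = generators c := by
  have inv_mem : ∀ g ∈ generators c, g⁻¹ ∈ generators c := by
    rintro g ((⟨a, rfl⟩ | ⟨v, rfl⟩) | (rfl | rfl))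
    · exact .inl (.inl ⟨-a, (rot_inv a).symm⟩)
    · exact .inl (.inr ⟨-v, by simp [dir_inv]⟩)
    · exact .inr (.inr (by simp [dir_inv]))
    · exact .inr (.inl (by simp [dir_inv]))
  exact Set.Subset.antisymm (fun g hg => by simpa using inv_mem _ hg) inv_mem

lemma costLE_mul_of_mem_generators (hlam : 0 ≤ lam) (hmu : 0 ≤ mu)
    {s g : Equiv.Perm (Point (ZMod 5) C)} {t : ℝ} (hs : s ∈ generators c)
    (hg : CostLE c 0 lam mu nu g t) : CostLE c 0 lam mu nu (s * g) (82 * lam + mu + t) := by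
  have hdir (v : ZMod 5 × ZMod 5) (e : ℤ) (he : |(e : ℝ)| ≤ 1) :
      CostLE c 0 lam mu nu (dir c 0 v e 1 * g) (82 * lam + mu + t) := by
    refine (hg.dir_mul hlam hmu v e (one_mem_wordBall _ 0)).mono ?_
    have hweight : (weight 0 v : ℝ) ≤ 82 := mod_cast weight_le 0 v
    have := mul_le_mul_of_nonneg_left hweight hlam
    have := mul_le_mul_of_nonneg_left he hmu
    push_cast
    linarith
  rcases hs with (⟨a, rfl⟩ | ⟨v, rfl⟩) | (rfl | rfl)
  · exact ((CostLE.rot a).mul hg).mono (by linarith)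
  · exact hdir v 0 (by simp)
  · exact hdir 0 1 (by simp)
  · exact hdir 0 (-1) (by simp)

lemma costLE_of_mem_wordBall (hlam : 0 ≤ lam) (hmu : 0 ≤ mu) {n : ℕ}
    {g : Equiv.Perm (Point (ZMod 5) C)} (hg : g ∈ wordBall (generators c) n) :
    CostLE c 0 lam mu nu g (50 * lam + (82 * lam + mu) * n) := by
  induction n generalizing g with
  | zero =>
    rw [wordBall_zero, Set.mem_singleton_iff] at hg
    simpa [hg] using CostLE.one
  | succ n ih =>
    rw [add_comm, wordBall_add, wordBall_one] at hg
    obtain ⟨s, rfl | hs, g, hg', rfl⟩ := Set.mem_mul.1 hg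
    · simp only [one_mul, Nat.cast_succ]
      exact (ih hg').mono (by linarith)
    · exact (costLE_mul_of_mem_generators hlam hmu hs (ih hg')).mono (by push_cast; linarith)

lemma ncard_wordBall_generators_le (hlam : 0 ≤ lam) (hmu : 0 ≤ mu)
    (h : permSum c 0 lam mu nu ≠ ∞) (n : ℕ) :
    ((wordBall (generators c) n).ncard : ℝ) ≤
      (permSum c 0 lam mu nu).toReal * Real.exp (50 * lam) * Real.exp ((82 * lam + mu) * n) := by
  have hfin := wordBall_finite (generators_finite c) n
  have hsum : (wordBall (generators c) n).ncard * expNeg (50 * lam + (82 * lam + mu) * n) ≤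
      permSum c 0 lam mu nu := by
    rw [Set.ncard_eq_toFinset_card _ hfin, ← nsmul_eq_mul, ← Finset.sum_const]
    refine (Finset.sum_le_sum fun g hg => ?_).trans (ENNReal.sum_le_tsum hfin.toFinset)
    exact expNeg_le_maxWeight (costLE_of_mem_wordBall hlam hmu (hfin.mem_toFinset.1 hg))
  have hreal := ENNReal.toReal_mono h hsum
  rw [ENNReal.toReal_mul, ENNReal.toReal_natCast, expNeg,
    ENNReal.toReal_ofReal (Real.exp_pos _).le, Real.exp_neg, ← div_eq_mul_inv,
    div_le_iff₀ (Real.exp_pos _), Real.exp_add, ← mul_assoc] at hreal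
  exact hreal

lemma subexpBalls_generators (h : ∀ ε > 0, ∃ (k : ℕ) (lam mu nu : ℝ), 0 ≤ lam ∧ 0 ≤ mu ∧ 0 ≤ nu ∧
      82 * ((19 / 20) ^ k * lam) + (mu + 2 * nu * ∑ i ∈ Finset.range k, activity c i) ≤ ε ∧
      expNeg (50 * lam) * syllableSum (gens c k) mu nu < 1) :
    SubexpBalls (generators c) := by
  intro ε hε
  obtain ⟨k, lam, mu, nu, hlam, hmu, hnu, hle, hlt⟩ := h ε hε
  have hk : permSum c k lam mu nu ≠ ∞ :=
    ne_top_of_le_ne_top (ENNReal.inv_ne_top.2 (tsub_pos_of_lt hlt).ne') (permSum_le_inv hlam)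
  have hactivity := Finset.sum_nonneg fun i (_ : i ∈ Finset.range k) => activity_nonneg c i
  have hball := ncard_wordBall_generators_le (by positivity) (by positivity)
    (permSum_zero_ne_top hlam hmu hnu hk)
  exact ⟨_, fun n => (hball n).trans <| mul_le_mul_of_nonneg_left
    (Real.exp_le_exp.2 (mul_le_mul_of_nonneg_right hle n.cast_nonneg)) (by positivity)⟩

end Counting

section Schedule

open Filter
open scoped ENNReal

lemma exists_expNeg_mul_lt_one {Z : ℝ≥0∞} (hZ : Z ≠ ∞) :
    ∃ lam : ℝ, 0 ≤ lam ∧ expNeg (50 * lam) * Z < 1 := by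
  have hlim : Tendsto (fun t => expNeg t * Z) atTop (nhds 0) := by
    have := ENNReal.Tendsto.mul_const (ENNReal.tendsto_ofReal Real.tendsto_exp_neg_atTop_nhds_zero)
      (.inr hZ)
    simpa [expNeg] using this
  obtain ⟨t, hlt, ht⟩ :=
    ((hlim.eventually (gt_mem_nhds one_pos)).and (eventually_ge_atTop 0)).exists
  exact ⟨t / 50, by positivity, by rwa [mul_div_cancel₀ t (by norm_num)]⟩

variable {C : Type*} [Group C]

lemma gens_finite (c : ℕ → C × C) (k : ℕ) : (gens c k).Finite := by
  have hsub : gens c k ⊆ ⋃ i ∈ Set.Iio k, {(c i).1, (c i).1⁻¹, (c i).2, (c i).2⁻¹} := by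
    rintro x ⟨i, hi, hx⟩
    exact Set.mem_biUnion hi hx
  exact ((Set.finite_Iio k).biUnion fun i _ => Set.toFinite _).subset hsub

variable {K : ℕ → ℕ}

lemma gens_extend_subset (hK : StrictMono K) (p : ℕ → C × C) (j : ℕ) :
    gens (Function.extend K p 1) (K j) ⊆ insert 1 (gens p j) := by
  rintro x ⟨i, hi, hx⟩
  by_cases h : ∃ m, K m = i
  · obtain ⟨m, rfl⟩ := h
    rw [hK.injective.extend_apply] at hx
    exact .inr ⟨m, hK.lt_iff_lt.1 hi, hx⟩
  · rw [Function.extend_apply' _ _ _ h] at hx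
    exact .inl (by simpa using hx)

lemma sum_activity_extend_le (hK : StrictMono K) (p : ℕ → C × C) (j : ℕ) :
    ∑ i ∈ Finset.range (K j), activity (Function.extend K p 1) i ≤ j := by
  have hsub : (Finset.range j).image K ⊆ Finset.range (K j) := by
    simpa [Finset.image_subset_iff] using fun m (hm : m < j) => hK hm
  rw [← Finset.sum_subset hsub, Finset.sum_image hK.injective.injOn]
  · have hle (i : ℕ) : activity (Function.extend K p 1) i ≤ 1 := by
      unfold activity
      split_ifs <;> norm_num
    simpa using Finset.sum_le_card_nsmul (Finset.range j) _ 1 fun i _ => hle (K i)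
  · intro i hi himage
    have h : ¬∃ m, K m = i := by
      rintro ⟨m, rfl⟩
      exact himage (Finset.mem_image_of_mem K (by simpa [hK.lt_iff_lt] using hi))
    exact if_pos (Function.extend_apply' _ _ _ h)

lemma exists_subexpBalls_generators (p : ℕ → C × C) (hC : LocallySubexp C) :
    ∃ c : ℕ → C × C, SubexpBalls (generators c) ∧ Set.range p ⊆ Set.range c := by
  let d (j : ℕ) : ℝ := 1 / ((j + 1) * (1 + 2 * j))
  have d_pos (j : ℕ) : 0 < d j := by positivity
  have d_mul (j : ℕ) : d j * (1 + 2 * j) = 1 / (j + 1) := by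
    simp only [d]
    field_simp
  have hT (j : ℕ) : (insert 1 (gens p j)).Finite := (gens_finite p j).insert 1
  choose lam hlam hlt using fun j =>
    exists_expNeg_mul_lt_one (syllableSum_ne_top (hT j) (hC _ (hT j)) (d_pos j) (d_pos j))
  have hsmall (j : ℕ) : ∀ᶠ n in atTop, (19 / 20 : ℝ) ^ n * lam j ≤ 1 / (j + 1) := by
    have hlim := (tendsto_pow_atTop_nhds_zero_of_lt_one (r := (19 / 20 : ℝ)) (by norm_num)
      (by norm_num)).mul_const (lam j)
    rw [zero_mul] at hlim
    exact hlim.eventually (ge_mem_nhds (by positivity))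
  obtain ⟨K, hK, hKsmall⟩ := extraction_forall_of_eventually hsmall
  refine ⟨Function.extend K p 1, subexpBalls_generators fun ε hε => ?_,
    Set.range_subset_iff.2 fun j => ⟨K j, hK.injective.extend_apply p 1 j⟩⟩
  obtain ⟨j, hj⟩ := exists_nat_gt (83 / ε)
  refine ⟨K j, lam j, d j, d j, hlam j, (d_pos j).le, (d_pos j).le, ?_, ?_⟩
  · have hactivity := mul_le_mul_of_nonneg_left (sum_activity_extend_le hK p j) (d_pos j).le
    have hε : 83 * (1 / ((j : ℝ) + 1)) ≤ ε := by
      rw [div_lt_iff₀ hε] at hj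
      rw [mul_one_div, div_le_iff₀ (by positivity)]
      linarith
    linarith [hKsmall j, d_mul j]
  · exact (mul_le_mul_right (syllableSum_mono (gens_extend_subset hK p j) _ _) _).trans_lt (hlt j)

end Schedule

section LabelMul

variable {A C : Type*} [Group C]

/-- Left multiplication by `a` of all labels. -/
def labelMul (a : C) : Equiv.Perm (Point A C) :=
  .prodCongr (.refl _) (.mulLeft a)

lemma commute_spinal_labelMul {o : A} {h a : C} {g : ℕ → A → Equiv.Perm (Point A C)}
    (hh : Commute h a) (hg : ∀ n b, Commute (g n b) (labelMul a)) :
    Commute (spinal o (h, g)) (labelMul a) := by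
  have labelMul_leave (n : ℕ) (b : {b // b ≠ o}) (y : Point A C) :
      labelMul a (spineMap o (.inr ⟨(n, b), y⟩)) = spineMap o (.inr ⟨(n, b), labelMul a y⟩) :=
    Function.Commute.iterate_right (f := labelMul a) (g := cons o) (fun _ => rfl) n (cons b y)
  ext1 y
  obtain ⟨z | ⟨⟨n, b⟩, y⟩, rfl⟩ := spineMap_surjective (o := o) y
  · change spinal o (h, g) (Stream'.const o, a * z) =
      labelMul a (spinal o (h, g) (Stream'.const o, z))
    rw [spinal_const, spinal_const, ← mul_assoc, hh.eq, mul_assoc]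
    rfl
  · simp only [Equiv.Perm.mul_apply, labelMul_leave, spinal_spineMap_inr]
    rw [← Equiv.Perm.mul_apply, (hg n b).eq, Equiv.Perm.mul_apply]

lemma commute_rot_labelMul [AddGroup A] (b : A) (a : C) :
    Commute (rot b : Equiv.Perm (Point A C)) (labelMul a) :=
  rfl

lemma commute_of_forall_eq_or_eq {α : Type*} {f g t : Equiv.Perm α} (hf : Commute f t)
    (hg : Commute g t) (hft : ∀ y, f y = t y ∨ f y = y) (hgt : ∀ y, g y = t y ∨ g y = y) :
    Commute f g := by
  ext1 y
  have hf' : f (t y) = t (f y) := DFunLike.congr_fun hf.eq y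
  have hg' : g (t y) = t (g y) := DFunLike.congr_fun hg.eq y
  rcases hft y with h | h <;> rcases hgt y with h' | h' <;>
    simp only [Equiv.Perm.mul_apply, h, h', hf', hg']

lemma del_apply_eq_or_eq (a : C) (y : Point (ZMod 5) C) : del a y = labelMul a y ∨ del a y = y := by
  obtain ⟨z | ⟨⟨n, b⟩, y⟩, rfl⟩ := spineMap_surjective (o := 4) y
  · exact .inl (spinal_const a 1 z)
  · exact .inr (spinal_spineMap_inr a 1 n b y)

lemma commute_del_conj {g : Equiv.Perm (Point (ZMod 5) C)} {a : C} (hg : Commute g (labelMul a)) :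
    Commute (del a) (g * del a * g⁻¹) := by
  have hdel : Commute (del a) (labelMul a) :=
    commute_spinal_labelMul (.refl a) fun _ _ => .one_left _
  refine commute_of_forall_eq_or_eq hdel ((hg.mul_left hdel).mul_left hg.inv_left)
    (del_apply_eq_or_eq a) fun y => (del_apply_eq_or_eq a (g⁻¹ y)).imp (fun h => ?_) fun h => ?_
  · rw [Equiv.Perm.mul_apply, Equiv.Perm.mul_apply, h, ← Equiv.Perm.mul_apply,
      ← Equiv.Perm.mul_apply, hg.eq, mul_inv_cancel_right]
  · rw [Equiv.Perm.mul_apply, Equiv.Perm.mul_apply, h]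
    exact g.apply_symm_apply y

lemma del_injective : Function.Injective (del (C := C)) := by
  intro a b h
  have hconst : spinal (4 : ZMod 5) (a, 1) (Stream'.const 4, 1) =
      spinal 4 (b, 1) (Stream'.const 4, 1) :=
    DFunLike.congr_fun h _
  rw [spinal_const, spinal_const, mul_one, mul_one] at hconst
  exact congrArg Prod.snd hconst

end LabelMul

section Extraction

open scoped commutatorElement

variable {C : Type*} [Group C]

/-- The group generated at level `k` by the generators that do not involve `C`. -/
def levelGroup (c : ℕ → C × C) (k : ℕ) : Subgroup (Equiv.Perm (Point (ZMod 5) C)) :=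
  Subgroup.closure (Set.range rot ∪ Set.range fun v => dir c k v 0 1)

variable {c : ℕ → C × C} {k : ℕ} {g : Equiv.Perm (Point (ZMod 5) C)}

lemma rot_mem_levelGroup (c : ℕ → C × C) (k : ℕ) (a : ZMod 5) : rot a ∈ levelGroup c k :=
  Subgroup.subset_closure (.inl ⟨a, rfl⟩)

lemma dir_mem_levelGroup (c : ℕ → C × C) (k : ℕ) (v : ZMod 5 × ZMod 5) :
    dir c k v 0 1 ∈ levelGroup c k :=
  Subgroup.subset_closure (.inr ⟨v, rfl⟩)

lemma commute_labelMul_of_mem_levelGroup (hg : g ∈ levelGroup c k) (a : C) :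
    Commute g (labelMul a) := by
  suffices h : levelGroup c k ≤ Subgroup.centralizer {labelMul a} from
    Subgroup.mem_centralizer_singleton_iff.1 (h hg)
  rw [levelGroup, Subgroup.closure_le]
  rintro _ (⟨b, rfl⟩ | ⟨v, rfl⟩)
  · exact Subgroup.mem_centralizer_singleton_iff.2 (commute_rot_labelMul b a)
  · refine Subgroup.mem_centralizer_singleton_iff.2
      (commute_spinal_labelMul (.one_left a) fun n => forall_zmod_five.2 ?_)
    simp only [branch, zpow_zero, map_one]
    exact ⟨commute_rot_labelMul _ a, .one_left _, .one_left _, .one_left _, .one_left _⟩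

lemma exists_lineForm_eq (k : ℕ) (a : ZMod 5) : ∃ v, lineForm k v = a := by
  by_cases h : k % 6 = 5
  · exact ⟨(0, a), by simp [lineForm, h]⟩
  · exact ⟨(a, 0), by simp [lineForm, h]⟩

lemma component_mem_levelGroup (c : ℕ → C × C) (k : ℕ) (v : ZMod 5 × ZMod 5) (i : ZMod 5) :
    component c k v 0 1 i ∈ levelGroup c (k + 1) := by
  revert i
  simp only [component, zpow_zero, map_one]
  exact forall_zmod_five.2 ⟨rot_mem_levelGroup _ _ _, one_mem _, one_mem _, one_mem _,
    dir_mem_levelGroup _ _ _⟩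

lemma exists_wreath_mem_levelGroup (hg : g ∈ levelGroup c (k + 1)) :
    ∃ f : ZMod 5 → Equiv.Perm (Point (ZMod 5) C), wreath f ∈ levelGroup c k ∧ f 4 = g ∧
      ∀ i, f i ∈ levelGroup c (k + 1) := by
  induction hg using Subgroup.closure_induction with
  | mem x hx =>
    rcases hx with ⟨a, rfl⟩ | ⟨v, rfl⟩
    · obtain ⟨v, rfl⟩ := exists_lineForm_eq k a
      refine ⟨fun i => component c k v 0 1 (i - 4), ?_, rfl,
        fun i => component_mem_levelGroup c k v (i - 4)⟩
      rw [← rot_mul_wreath_mul_rot_inv, ← dir_eq_wreath]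
      exact mul_mem (mul_mem (rot_mem_levelGroup _ _ _) (dir_mem_levelGroup _ _ _))
        (inv_mem (rot_mem_levelGroup _ _ _))
    · refine ⟨component c k v 0 1, ?_, rfl, component_mem_levelGroup c k v⟩
      rw [← dir_eq_wreath]
      exact dir_mem_levelGroup c k v
  | one => exact ⟨1, by simp, rfl, fun _ => one_mem _⟩
  | mul x y _ _ ihx ihy =>
    obtain ⟨f, hf, rfl, hf'⟩ := ihx
    obtain ⟨g, hg, rfl, hg'⟩ := ihy
    exact ⟨f * g, by rw [map_mul]; exact mul_mem hf hg, rfl, fun i => mul_mem (hf' i) (hg' i)⟩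
  | inv x _ ih =>
    obtain ⟨f, hf, rfl, hf'⟩ := ih
    exact ⟨f⁻¹, by rw [map_inv]; exact inv_mem hf, rfl, fun i => inv_mem (hf' i)⟩

lemma component_zero_one_one (c : ℕ → C × C) (k : ℕ) :
    component c k 0 1 1 0 = 1 ∧ component c k 0 1 1 1 = del (c k).1 ∧
      component c k 0 1 1 2 = del (c k).2 ∧ component c k 0 1 1 3 = 1 ∧
      component c k 0 1 1 4 = dir c (k + 1) 0 1 1 := by
  simp only [component, lineForm_zero, rot_zero, zpow_one]
  exact ⟨rfl, rfl, rfl, rfl, rfl⟩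

lemma conj_commutator_dir_eq_del (c : ℕ → C × C) (k : ℕ) :
    rot 3 * ⁅dir c k 0 1 1, rot 4 * dir c k 0 1 1 * (rot 4)⁻¹⁆ * (rot 3)⁻¹ =
      del ⁅(c k).1, (c k).2⁆ := by
  obtain ⟨h0, h1, h2, h3, -⟩ := component_zero_one_one c k
  rw [dir_eq_wreath, rot_mul_wreath_mul_rot_inv, ← map_commutatorElement,
    rot_mul_wreath_mul_rot_inv, del_eq_wreath]
  congr 1
  refine funext (forall_zmod_five.2 ⟨?_, ?_, ?_, ?_, ?_⟩)
  · change ⁅component c k 0 1 1 2, component c k 0 1 1 3⁆ = 1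
    rw [h3, commutatorElement_one_right]
  · change ⁅component c k 0 1 1 3, component c k 0 1 1 4⁆ = 1
    rw [h3, commutatorElement_one_left]
  · change ⁅component c k 0 1 1 4, component c k 0 1 1 0⁆ = 1
    rw [h0, commutatorElement_one_right]
  · change ⁅component c k 0 1 1 0, component c k 0 1 1 1⁆ = 1
    rw [h0, commutatorElement_one_left]
  · change ⁅component c k 0 1 1 1, component c k 0 1 1 2⁆ = del ⁅(c k).1, (c k).2⁆
    rw [h1, h2, map_commutatorElement]

lemma exists_conj_commutator_eq_del (c : ℕ → C × C) (k n : ℕ) :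
    ∃ g ∈ levelGroup c k, ∃ h ∈ levelGroup c k,
      h * ⁅dir c k 0 1 1, g * dir c k 0 1 1 * g⁻¹⁆ * h⁻¹ = del ⁅(c (k + n)).1, (c (k + n)).2⁆ := by
  induction n generalizing k with
  | zero =>
    exact ⟨_, rot_mem_levelGroup c k 4, _, rot_mem_levelGroup c k 3,
      conj_commutator_dir_eq_del c k⟩
  | succ n ih =>
    obtain ⟨g, hg, h, hh, heq⟩ := ih (k + 1)
    obtain ⟨g, hgk, rfl, hgk'⟩ := exists_wreath_mem_levelGroup hg
    obtain ⟨h, hhk, rfl, -⟩ := exists_wreath_mem_levelGroup hh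
    refine ⟨wreath g, hgk, wreath h, hhk, ?_⟩
    have hcomm (i : ZMod 5) {a : C} (ha : component c k 0 1 1 i = del a) :
        h i * ⁅component c k 0 1 1 i, g i * component c k 0 1 1 i * (g i)⁻¹⁆ * (h i)⁻¹ = 1 := by
      rw [ha, commutatorElement_eq_one_iff_commute.2
        (commute_del_conj (commute_labelMul_of_mem_levelGroup (hgk' i) a)), mul_one,
        mul_inv_cancel]
    obtain ⟨h0, h1, h2, h3, h4⟩ := component_zero_one_one c k
    rw [← h4, add_right_comm, add_assoc] at heq
    rw [dir_eq_wreath, ← map_inv, ← map_inv, ← map_mul, ← map_mul, ← map_commutatorElement,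
      ← map_mul, ← map_mul, del_eq_wreath]
    congr 1
    exact funext (forall_zmod_five.2 ⟨hcomm 0 (h0.trans (map_one del).symm), hcomm 1 h1,
      hcomm 2 h2, hcomm 3 (h3.trans (map_one del).symm), heq⟩)

lemma del_commutator_mem_closure_generators (c : ℕ → C × C) (k : ℕ) :
    del ⁅(c k).1, (c k).2⁆ ∈ Subgroup.closure (generators c) := by
  obtain ⟨g, hg, h, hh, heq⟩ := exists_conj_commutator_eq_del c 0 k
  have hle : levelGroup c 0 ≤ Subgroup.closure (generators c) :=
    Subgroup.closure_mono Set.subset_union_left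
  have hdir : dir c 0 0 1 1 ∈ Subgroup.closure (generators c) :=
    Subgroup.subset_closure (.inr (.inl rfl))
  have hconj := mul_mem (mul_mem (hle hg) hdir) (inv_mem (hle hg))
  rw [← zero_add k, ← heq, commutatorElement_def]
  exact mul_mem (mul_mem (hle hh) (mul_mem (mul_mem (mul_mem hdir hconj) (inv_mem hdir))
    (inv_mem hconj))) (inv_mem (hle hh))

end Extraction

section Cellular

variable {B : Type*} [Group B]

/-- A permutation of `ℚ × B` is cellular of scale `N` if it translates each of the cells
`[i / N, (i + 1) / N)` by a multiple of `1 / N`, multiplying the labels from the left by an element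
which only depends on the cell, and if it fixes the points outside `(-N, N)`. -/
structure IsCellular (N : ℕ) (g : Equiv.Perm (ℚ × B)) : Prop where
  pos : 0 < N
  exists_apply_eq : ∃ (τ : ℤ → ℤ) (l : ℤ → B),
    ∀ x b, g (x, b) = (x + τ ⌊(N : ℚ) * x⌋ / N, l ⌊(N : ℚ) * x⌋ * b)
  apply_of_le_abs : ∀ x b, (N : ℚ) ≤ |x| → g (x, b) = (x, b)

lemma floor_natCast_mul_ediv {N : ℕ} (hN : 0 < N) (x : ℚ) : ⌊(N : ℚ) * x⌋ / (N : ℤ) = ⌊x⌋ := by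
  rw [← Int.floor_div_natCast, mul_div_cancel_left₀ x (Nat.cast_ne_zero.2 hN.ne')]

namespace IsCellular

variable {N M : ℕ} {g h : Equiv.Perm (ℚ × B)}

lemma one (hN : 0 < N) : IsCellular N (1 : Equiv.Perm (ℚ × B)) :=
  ⟨hN, ⟨fun _ => 0, fun _ => 1, by simp⟩, by simp⟩

lemma apply_eq (hg : IsCellular N g) (x : ℚ) (b : B) :
    g (x, b) = ((g (x, 1)).1, (g (x, 1)).2 * b) := by
  obtain ⟨-, ⟨τ, l, hg⟩, -⟩ := hg
  simp [hg]

lemma mul (hg : IsCellular N g) (hh : IsCellular N h) : IsCellular N (g * h) := by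
  obtain ⟨hN, ⟨τ, l, hτ⟩, hgfix⟩ := hg
  obtain ⟨-, ⟨τ', l', hτ'⟩, hhfix⟩ := hh
  have hN' : (N : ℚ) ≠ 0 := Nat.cast_ne_zero.2 hN.ne'
  refine ⟨hN, ⟨fun i => τ' i + τ (i + τ' i), fun i => l (i + τ' i) * l' i, fun x b => ?_⟩,
    fun x b hx => ?_⟩
  · have hfloor : ⌊(N : ℚ) * (x + τ' ⌊(N : ℚ) * x⌋ / N)⌋ = ⌊(N : ℚ) * x⌋ + τ' ⌊(N : ℚ) * x⌋ := by
      rw [mul_add, mul_div_cancel₀ _ hN', Int.floor_add_intCast]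
    rw [Equiv.Perm.mul_apply, hτ', hτ, hfloor, Int.cast_add, add_div, add_assoc, mul_assoc]
  · rw [Equiv.Perm.mul_apply, hhfix x b hx, hgfix x b hx]

lemma mul_scale (hg : IsCellular N g) (hM : 0 < M) : IsCellular (N * M) g := by
  obtain ⟨hN, ⟨τ, l, hτ⟩, hfix⟩ := hg
  have hM' : (M : ℚ) ≠ 0 := Nat.cast_ne_zero.2 hM.ne'
  refine ⟨Nat.mul_pos hN hM, ⟨fun i => M * τ (i / M), fun i => l (i / M), fun x b => ?_⟩,
    fun x b hx => hfix x b (le_trans ?_ hx)⟩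
  · simp only [Nat.cast_mul, mul_comm (N : ℚ), mul_assoc, floor_natCast_mul_ediv hM, hτ,
      Int.cast_mul, Int.cast_natCast, mul_div_mul_left _ _ hM']
  · exact_mod_cast Nat.le_mul_of_pos_right N hM

end IsCellular

variable (B) in
/-- The group of all permutations of `ℚ × B` which are cellular of some scale. -/
def cellularGroup : Subgroup (Equiv.Perm (ℚ × B)) where
  carrier := {g | ∃ N, IsCellular N g ∧ IsCellular N g⁻¹}
  one_mem' := ⟨1, .one one_pos, inv_one (G := Equiv.Perm (ℚ × B)) ▸ .one one_pos⟩
  mul_mem' := by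
    rintro g h ⟨N, hg, hg'⟩ ⟨M, hh, hh'⟩
    have hh := mul_comm N M ▸ hh.mul_scale hg.pos
    have hh' := mul_comm N M ▸ hh'.mul_scale hg.pos
    have hM := pos_of_mul_pos_right hh.pos N.zero_le
    exact ⟨N * M, (hg.mul_scale hM).mul hh, mul_inv_rev g h ▸ hh'.mul (hg'.mul_scale hM)⟩
  inv_mem' := fun ⟨N, hg, hg'⟩ => ⟨N, hg', by rwa [inv_inv]⟩

lemma exists_isCellular {T : Set (Equiv.Perm (ℚ × B))} (hT : T.Finite)
    (hTB : T ⊆ cellularGroup B) : ∃ N, 0 < N ∧ ∀ g ∈ T, IsCellular N g := by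
  induction T, hT using Set.Finite.induction_on with
  | empty => exact ⟨1, one_pos, by simp⟩
  | @insert g T _ _ ih =>
    obtain ⟨N, hN, hT⟩ := ih ((Set.subset_insert g T).trans hTB)
    obtain ⟨M, hg, -⟩ := hTB (Set.mem_insert g T)
    refine ⟨N * M, Nat.mul_pos hN hg.pos, ?_⟩
    rintro h (rfl | hh)
    · exact mul_comm N M ▸ hg.mul_scale hN
    · exact (hT h hh).mul_scale hg.pos

end Cellular

section CellularGrowth

variable {B : Type*} [Group B] {N : ℕ} {g h : Equiv.Perm (ℚ × B)}

/-- The multiples of `1 / N` in `[-N, N]`. -/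
noncomputable def grid (N : ℕ) : Finset ℚ :=
  (Finset.Icc (-(N : ℤ) ^ 2) ((N : ℤ) ^ 2)).image fun i : ℤ => (i : ℚ) / N

lemma intCast_div_mem_grid (hN : 0 < N) {i : ℤ} (hi : |(i : ℚ) / N| ≤ N) :
    (i : ℚ) / N ∈ grid N := by
  have hN' : (0 : ℚ) < N := Nat.cast_pos.2 hN
  rw [abs_div, abs_of_pos hN', div_le_iff₀ hN', ← sq] at hi
  exact Finset.mem_image_of_mem _ (Finset.mem_Icc.2 (abs_le.1 (by exact_mod_cast hi)))

lemma abs_le_of_mem_grid (hN : 0 < N) {x : ℚ} (hx : x ∈ grid N) : |x| ≤ N := by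
  have hN' : (0 : ℚ) < N := Nat.cast_pos.2 hN
  obtain ⟨i, hi, rfl⟩ := Finset.mem_image.1 hx
  rw [abs_div, abs_of_pos hN', div_le_iff₀ hN', ← sq]
  exact_mod_cast abs_le.2 (Finset.mem_Icc.1 hi)

namespace IsCellular

lemma abs_apply_le (hg : IsCellular N g) {x : ℚ} (hx : |x| ≤ N) (b : B) : |(g (x, b)).1| ≤ N := by
  by_contra! hlt
  have hfix : g (x, b) = (x, b) := g.injective (hg.apply_of_le_abs _ _ hlt.le)
  rw [hfix] at hlt
  exact hlt.not_ge hx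

lemma apply_mem_grid (hg : IsCellular N g) {x : ℚ} (hx : x ∈ grid N) (b : B) :
    (g (x, b)).1 ∈ grid N := by
  have hle := hg.abs_apply_le (abs_le_of_mem_grid hg.pos hx) b
  obtain ⟨i, -, rfl⟩ := Finset.mem_image.1 hx
  obtain ⟨hN, ⟨τ, l, hτ⟩, -⟩ := hg
  simp only [hτ, ← add_div, ← Int.cast_add] at hle ⊢
  exact intCast_div_mem_grid hN hle

lemma ext_of_eqOn_grid (hg : IsCellular N g) (hh : IsCellular N h)
    (hgh : ∀ x ∈ grid N, g (x, 1) = h (x, 1)) : g = h := by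
  obtain ⟨hN, ⟨τ, l, hτ⟩, hgfix⟩ := hg
  obtain ⟨-, ⟨τ', l', hτ'⟩, hhfix⟩ := hh
  have hN' : (0 : ℚ) < N := Nat.cast_pos.2 hN
  ext1 ⟨x, b⟩
  obtain hx | hx := le_or_gt (N : ℚ) |x|
  · rw [hgfix x b hx, hhfix x b hx]
  · have hgrid : (⌊(N : ℚ) * x⌋ : ℚ) / N ∈ grid N := by
      obtain ⟨hneg, hlt⟩ := abs_lt.1 hx
      refine Finset.mem_image_of_mem _ (Finset.mem_Icc.2 ⟨Int.le_floor.2 ?_, Int.floor_le_iff.2 ?_⟩)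
        <;> push_cast <;> nlinarith
    have heq := hgh _ hgrid
    rw [hτ, hτ', mul_div_cancel₀ _ hN'.ne', Int.floor_intCast, Prod.mk.injEq, mul_one, mul_one,
      add_right_inj] at heq
    rw [hτ, hτ', heq.1, heq.2]

end IsCellular

/-- The labels by which the elements of `T` multiply the cells of scale `N`. -/
def labels (N : ℕ) (T : Set (Equiv.Perm (ℚ × B))) : Set B :=
  (fun p : Equiv.Perm (ℚ × B) × ℚ => (p.1 (p.2, 1)).2) '' (T ×ˢ (grid N : Set ℚ))

lemma labels_finite {T : Set (Equiv.Perm (ℚ × B))} (hT : T.Finite) : (labels N T).Finite :=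
  (hT.prod (grid N).finite_toSet).image _

lemma isCellular_and_snd_mem_of_mem_wordBall (hN : 0 < N) {T : Set (Equiv.Perm (ℚ × B))}
    (hT : ∀ g ∈ T, IsCellular N g) {r : ℕ} (hg : g ∈ wordBall T r) :
    IsCellular N g ∧ ∀ x ∈ grid N, (g (x, 1)).2 ∈ wordBall (labels N T) r := by
  induction r generalizing g with
  | zero =>
    rw [wordBall_zero, Set.mem_singleton_iff] at hg
    subst hg
    exact ⟨.one hN, fun x _ => one_mem_wordBall _ _⟩
  | succ r ih =>
    rw [add_comm, wordBall_add, wordBall_one] at hg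
    obtain ⟨s, rfl | hs, g, hg, rfl⟩ := hg
    · simp only [one_mul]
      exact ⟨(ih hg).1, fun x hx => wordBall_mono subset_rfl r.le_succ ((ih hg).2 x hx)⟩
    · obtain ⟨hgcell, hlabel⟩ := ih hg
      refine ⟨(hT s hs).mul hgcell, fun x hx => ?_⟩
      rw [Equiv.Perm.mul_apply, ← Prod.mk.eta (p := g (x, 1)), (hT s hs).apply_eq]
      exact mul_mem_wordBall_succ
        ⟨(s, (g (x, 1)).1), ⟨hs, hgcell.apply_mem_grid hx 1⟩, rfl⟩ (hlabel x hx)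

lemma ncard_wordBall_le_of_isCellular (hN : 0 < N) {T : Set (Equiv.Perm (ℚ × B))} (hfin : T.Finite)
    (hT : ∀ g ∈ T, IsCellular N g) (r : ℕ) :
    (wordBall T r).ncard ≤ ((grid N).card * (wordBall (labels N T) r).ncard) ^ (grid N).card := by
  classical
  have hball := wordBall_finite (labels_finite (N := N) hfin) r
  let images : Finset (grid N → ℚ × B) := Fintype.piFinset fun _ => grid N ×ˢ hball.toFinset
  have hcard : images.card =
      ((grid N).card * (wordBall (labels N T) r).ncard) ^ (grid N).card := by
    simp [images, Set.ncard_eq_toFinset_card _ hball]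
  rw [← hcard, ← Set.ncard_coe_finset]
  refine Set.ncard_le_ncard_of_injOn (fun g x => g (x, 1)) (fun g hg => ?_)
    (fun g hg h hh heq => ?_) images.finite_toSet
  · obtain ⟨hgcell, hlabel⟩ := isCellular_and_snd_mem_of_mem_wordBall hN hT hg
    simp only [images, Finset.mem_coe, Fintype.mem_piFinset, Finset.mem_product,
      Set.Finite.mem_toFinset]
    exact fun x => ⟨hgcell.apply_mem_grid x.2 1, hlabel x x.2⟩
  · exact (isCellular_and_snd_mem_of_mem_wordBall hN hT hg).1.ext_of_eqOn_grid
      (isCellular_and_snd_mem_of_mem_wordBall hN hT hh).1 fun x hx => congrFun heq ⟨x, hx⟩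

lemma LocallySubexp.cellularGroup (hB : LocallySubexp B) : LocallySubexp (cellularGroup B) := by
  intro T hT
  rw [← subexpBalls_image_iff (SubexpEmbedding.cellularGroup B).subtype_injective]
  have hfin := hT.image (SubexpEmbedding.cellularGroup B).subtype
  obtain ⟨N, hN, hcell⟩ := exists_isCellular hfin (Set.image_subset_iff.2 fun g _ => g.2)
  exact .of_ncard_le_pow (hB _ (labels_finite hfin)) _ _
    (ncard_wordBall_le_of_isCellular hN hfin hcell)

end CellularGrowth

section Twist

variable {B : Type*}

lemma natCast_le_abs_floor {N : ℕ} {x : ℚ} (hx : (N : ℚ) ≤ |x|) : (N : ℤ) ≤ |⌊x⌋| := by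
  rcases le_abs'.1 hx with h | h
  · have hfloor : (⌊x⌋ : ℚ) ≤ -N := (Int.floor_le x).trans h
    exact le_abs'.2 (.inl (by exact_mod_cast hfloor))
  · exact le_abs'.2 (.inr (Int.le_floor.2 (by exact_mod_cast h)))

variable [Group B]

/-- The rotation by `q m` of the cells `[m, m + 1) × B`, where `(m + 1, b)` is identified with
`(m, t m * b)`. -/
def twistFun (t : ℤ → B) (q : ℤ → ℚ) (p : ℚ × B) : ℚ × B :=
  (⌊p.1⌋ + Int.fract (Int.fract p.1 + q ⌊p.1⌋), t ⌊p.1⌋ ^ ⌊Int.fract p.1 + q ⌊p.1⌋⌋ * p.2)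

variable (t : ℤ → B) (q q' : ℤ → ℚ) (p : ℚ × B)

@[simp] lemma floor_twistFun_fst : ⌊(twistFun t q p).1⌋ = ⌊p.1⌋ := by
  simp [twistFun]

lemma twistFun_twistFun : twistFun t q (twistFun t q' p) = twistFun t (q + q') p := by
  rw [twistFun, floor_twistFun_fst]
  have hfract : Int.fract (twistFun t q' p).1 =
      Int.fract p.1 + q' ⌊p.1⌋ - (⌊Int.fract p.1 + q' ⌊p.1⌋⌋ : ℤ) := by
    rw [twistFun, Int.fract_intCast_add, Int.fract_fract]
    rfl
  have hadd : Int.fract (twistFun t q' p).1 + q ⌊p.1⌋ =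
      Int.fract p.1 + (q + q') ⌊p.1⌋ - (⌊Int.fract p.1 + q' ⌊p.1⌋⌋ : ℤ) := by
    rw [hfract, Pi.add_apply]
    ring
  rw [hadd, Int.fract_sub_intCast, Int.floor_sub_intCast]
  simp only [twistFun]
  rw [← mul_assoc, ← zpow_add, sub_add_cancel]

variable {q p}

lemma twistFun_of_eq_intCast {k : ℤ} (hq : q ⌊p.1⌋ = k) :
    twistFun t q p = (p.1, t ⌊p.1⌋ ^ k * p.2) := by
  simp [twistFun, hq]

lemma twistFun_of_eq_zero (hq : q ⌊p.1⌋ = 0) : twistFun t q p = p := by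
  rw [twistFun_of_eq_intCast t (k := 0) (by rw [hq, Int.cast_zero]), zpow_zero, one_mul]

/-- The twisted rotations `twistFun t q` as a group of permutations. -/
def twist : Multiplicative (ℤ → ℚ) →* Equiv.Perm (ℚ × B) :=
  MonoidHom.toHomPerm
    { toFun q := twistFun t q.toAdd
      map_one' := funext fun _ => twistFun_of_eq_zero t rfl
      map_mul' q q' := funext fun p => (twistFun_twistFun t q.toAdd q'.toAdd p).symm }

lemma twist_apply (q : Multiplicative (ℤ → ℚ)) (p : ℚ × B) : twist t q p = twistFun t q.toAdd p :=
  rfl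

variable {t q'}

lemma twist_mul_twist_neg_mul_twist {t' : ℤ → B} (h0 : 0 ≤ q) (h1 : q ≤ 1) :
    twist t (.ofAdd q) * twist 1 (.ofAdd (-q)) * twist t' (.ofAdd q) =
      twist (t * t') (.ofAdd q) := by
  ext1 p
  set k := ⌊Int.fract p.1 + q ⌊p.1⌋⌋ with hk
  have hmiddle : twistFun 1 (-q) (twistFun t' q p) = (p.1, t' ⌊p.1⌋ ^ k * p.2) := by
    have hfract : Int.fract (twistFun t' q p).1 + -q ⌊p.1⌋ = Int.fract p.1 - (k : ℤ) := by
      rw [twistFun, Int.fract_intCast_add, Int.fract_fract, Int.fract, ← hk]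
      ring
    rw [twistFun, floor_twistFun_fst, Pi.neg_apply, hfract, Int.fract_sub_intCast,
      Int.fract_fract, Int.floor_add_fract, Pi.one_apply, one_zpow, one_mul]
    rfl
  have hk01 : k = 0 ∨ k = 1 := by
    have hnonneg : 0 ≤ k := Int.floor_nonneg.2 (add_nonneg (Int.fract_nonneg _) (h0 _))
    have hlt : k < 2 := Int.floor_lt.2 (by
      have := h1 ⌊p.1⌋
      have := Int.fract_lt_one p.1
      simp only [Pi.one_apply] at *
      push_cast
      linarith)
    omega
  change twistFun t q (twistFun 1 (-q) (twistFun t' q p)) = twistFun (t * t') q p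
  rw [hmiddle]
  simp only [twistFun, Pi.mul_apply, ← hk, ← mul_assoc]
  rcases hk01 with h | h <;> simp [h]

lemma twist_disjoint {t' : ℤ → B} (h : ∀ m, q m = 0 ∨ q' m = 0) :
    (twist t (.ofAdd q)).Disjoint (twist t' (.ofAdd q')) :=
  fun p => (h ⌊p.1⌋).imp (twistFun_of_eq_zero t) (twistFun_of_eq_zero t')

lemma isCellular_twist {N : ℕ} (hN : 0 < N) {r : ℤ → ℤ} (hr : ∀ m, q m = r m / N)
    (hq : ∀ m, q m ≠ 0 → |m| < N) : IsCellular N (twist t (.ofAdd q)) := by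
  have hN' : (N : ℚ) ≠ 0 := Nat.cast_ne_zero.2 hN.ne'
  refine ⟨hN, ⟨fun i => r (i / N) - N * ((i - N * (i / N) + r (i / N)) / N),
    fun i => t (i / N) ^ ((i - N * (i / N) + r (i / N)) / N), fun x b => ?_⟩, fun x b hx => ?_⟩
  · have hfloor : (⌊(N : ℚ) * x⌋ - N * ⌊x⌋ + r ⌊x⌋) / N = ⌊Int.fract x + q ⌊x⌋⌋ := by
      rw [← floor_natCast_mul_ediv hN (Int.fract x + q ⌊x⌋)]
      have hmul : (N : ℚ) * (Int.fract x + q ⌊x⌋) = N * x + ((r ⌊x⌋ - N * ⌊x⌋ : ℤ) : ℚ) := by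
        rw [hr, mul_add, mul_div_cancel₀ _ hN', Int.fract]
        push_cast
        ring
      rw [hmul, Int.floor_add_intCast, sub_add_eq_add_sub, add_sub_assoc]
    simp only [floor_natCast_mul_ediv hN, hfloor, twist_apply, toAdd_ofAdd, twistFun]
    refine Prod.ext ?_ rfl
    simp only [Int.cast_sub, Int.cast_mul, Int.cast_natCast, sub_div, ← hr,
      mul_div_cancel_left₀ _ hN', Int.fract]
    ring
  · refine twistFun_of_eq_zero t ?_
    by_contra h
    exact (hq _ h).not_ge (natCast_le_abs_floor hx)

lemma exists_nat_forall_eq_intCast_div (q : ℤ →₀ ℚ) :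
    ∃ N : ℕ, 0 < N ∧ (∃ r : ℤ → ℤ, ∀ m, q m = r m / N) ∧ ∀ m, q m ≠ 0 → |m| < N := by
  have hdvd (m : ℤ) : (q m).den ∣ ∏ i ∈ q.support, (q i).den := by
    by_cases hm : m ∈ q.support
    · exact Finset.dvd_prod_of_mem (fun i => (q i).den) hm
    · simp [Finsupp.notMem_support_iff.1 hm]
  have hpos : 0 < ∏ i ∈ q.support, (q i).den := Finset.prod_pos fun m _ => (q m).pos
  choose d hd using hdvd
  generalize ∏ i ∈ q.support, (q i).den = D at hd hpos
  set E := ∑ i ∈ q.support, i.natAbs + 1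
  refine ⟨D * E, by positivity, ⟨fun m => (q m).num * (d m * E), fun m => ?_⟩, fun m hm => ?_⟩
  · have hD : (D : ℚ) = (q m).den * d m := by exact_mod_cast hd m
    rw [eq_div_iff (by positivity)]
    push_cast
    rw [← Rat.mul_den_eq_num (q m), hD]
    ring
  · have hle : m.natAbs ≤ ∑ i ∈ q.support, i.natAbs :=
      Finset.single_le_sum (f := Int.natAbs) (fun _ _ => Nat.zero_le _)
        (Finsupp.mem_support_iff.2 hm)
    rw [Int.abs_eq_natAbs]
    exact_mod_cast (Nat.lt_succ_of_le hle).trans_le (Nat.le_mul_of_pos_left E hpos)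

variable (t)

lemma twist_mem_cellularGroup (q : ℤ →₀ ℚ) : twist t (.ofAdd q) ∈ cellularGroup B := by
  obtain ⟨N, hN, ⟨r, hr⟩, hq⟩ := exists_nat_forall_eq_intCast_div q
  refine ⟨N, isCellular_twist hN hr hq, ?_⟩
  rw [← map_inv, ← ofAdd_neg]
  exact isCellular_twist hN (r := -r) (fun m => by simp [hr, neg_div])
    fun m hm => hq m (by simpa using hm)

/-- The twisted rotations of finitely many cells, as elements of the cellular group. -/
noncomputable def twistHom : Multiplicative (ℤ →₀ ℚ) →* cellularGroup B :=
  ((twist t).comp (AddMonoidHom.toMultiplicative Finsupp.coeFnAddHom)).codRestrict _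
    fun q => twist_mem_cellularGroup t q.toAdd

lemma twistHom_congr {t' : ℤ → B} {q : ℤ →₀ ℚ} (h : ∀ m, q m ≠ 0 → t m = t' m) :
    twistHom t (.ofAdd q) = twistHom t' (.ofAdd q) := by
  ext1
  ext1 p
  change twistFun t q p = twistFun t' q p
  by_cases h0 : q ⌊p.1⌋ = 0
  · rw [twistFun_of_eq_zero _ h0, twistFun_of_eq_zero _ h0]
  · simp only [twistFun, h _ h0]

end Twist

section CellPerm

variable {B : Type*}

/-- The permutation of the cells `[m, m + 1) × B` by translations. -/
def cellPerm : Equiv.Perm ℤ →* Equiv.Perm (ℚ × B) :=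
  MonoidHom.toHomPerm
    { toFun σ p := (σ ⌊p.1⌋ + Int.fract p.1, p.2)
      map_one' := funext fun p => Prod.ext (Int.floor_add_fract p.1) rfl
      map_mul' σ σ' := funext fun p => by
        change _ = ((σ ⌊(σ' ⌊p.1⌋ + Int.fract p.1 : ℚ)⌋ : ℚ) +
          Int.fract (σ' ⌊p.1⌋ + Int.fract p.1 : ℚ), p.2)
        simp }

lemma cellPerm_apply (σ : Equiv.Perm ℤ) (p : ℚ × B) :
    cellPerm σ p = (σ ⌊p.1⌋ + Int.fract p.1, p.2) :=
  rfl

variable [Group B]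

lemma cellPerm_mul_twist (σ : Equiv.Perm ℤ) (t : ℤ → B) (q : ℤ → ℚ) :
    cellPerm σ * twist (t ∘ σ) (.ofAdd (q ∘ σ)) = twist t (.ofAdd q) * cellPerm σ := by
  ext1 p
  simp [cellPerm_apply, twist_apply, twistFun]

lemma isCellular_cellPerm {N : ℕ} (hN : 0 < N) {σ : Equiv.Perm ℤ} (hσ : ∀ m, σ m ≠ m → |m| < N) :
    IsCellular N (cellPerm σ : Equiv.Perm (ℚ × B)) := by
  have hN' : (N : ℚ) ≠ 0 := Nat.cast_ne_zero.2 hN.ne'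
  refine ⟨hN, ⟨fun i => N * (σ (i / N) - i / N), fun _ => 1, fun x b => ?_⟩, fun x b hx => ?_⟩
  · simp only [floor_natCast_mul_ediv hN, Int.cast_mul, Int.cast_natCast,
      mul_div_cancel_left₀ _ hN', cellPerm_apply, Int.fract, one_mul]
    refine Prod.ext ?_ rfl
    push_cast
    ring
  · have hfix : σ ⌊x⌋ = ⌊x⌋ := by
      by_contra h
      exact (hσ _ h).not_ge (natCast_le_abs_floor hx)
    rw [cellPerm_apply, hfix, Int.floor_add_fract]

lemma cellPerm_swap_mem_cellularGroup (a b : ℤ) :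
    cellPerm (Equiv.swap a b) ∈ cellularGroup B := by
  have hbound (m : ℤ) (hm : Equiv.swap a b m ≠ m) : |m| < (a.natAbs + b.natAbs + 1 : ℕ) := by
    rw [Int.abs_eq_natAbs]
    rcases (Equiv.swap_apply_ne_self_iff.1 hm).2 with rfl | rfl <;> omega
  refine ⟨_, isCellular_cellPerm (Nat.succ_pos _) hbound, ?_⟩
  rw [← map_inv, Equiv.swap_inv]
  exact isCellular_cellPerm (Nat.succ_pos _) hbound

lemma isConj_twistHom_single (a b : ℤ) (t : B) (q : ℚ) :
    IsConj (twistHom (fun _ => t) (.ofAdd (Finsupp.single a q)))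
      (twistHom (fun _ => t) (.ofAdd (Finsupp.single b q))) := by
  refine isConj_iff.2 ⟨⟨_, cellPerm_swap_mem_cellularGroup a b⟩, mul_inv_eq_of_eq_mul ?_⟩
  have hsingle : ⇑(Finsupp.single b q) ∘ Equiv.swap a b = Finsupp.single a q := by
    ext m
    simp [Finsupp.single_apply, eq_comm (a := b), Equiv.swap_apply_eq_iff, eq_comm (a := a)]
  have h := cellPerm_mul_twist (Equiv.swap a b) (fun _ => t) (Finsupp.single b q)
  rw [hsingle] at h
  exact Subtype.ext h

end CellPerm

section Coordinates

variable {B K : Type*} [Group B] [Countable B]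

lemma exists_linearCombination_eq {V : Type*} [DivisionRing K] [AddCommGroup V] [Module K V]
    (θ : B →* Multiplicative V) :
    ∃ (t : ℕ → B) (ψ : B →* Multiplicative (ℕ →₀ K)),
      ∀ b, Finsupp.linearCombination K (fun i => (θ (t i)).toAdd) (ψ b).toAdd = (θ b).toAdd := by
  obtain ⟨s, hs, hspan, hli⟩ :=
    exists_linearIndependent K (Set.range fun b => (θ b).toAdd)
  choose t ht using fun i : s => hs i.2
  have ht_inj : Function.Injective t := fun i j h => Subtype.ext (by rw [← ht i, ← ht j, h])
  have := ht_inj.countable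
  obtain ⟨e, he⟩ := exists_injective_nat s
  have hmem (b : B) : (θ b).toAdd ∈ Submodule.span K (Set.range (Subtype.val : s → V)) := by
    rw [Subtype.range_coe, hspan]
    exact Submodule.subset_span ⟨b, rfl⟩
  have ht_ext : (fun i => (θ (Function.extend e t 1 i)).toAdd) ∘ e = Subtype.val := by
    ext i
    rw [Function.comp_apply, he.extend_apply]
    exact ht i
  refine ⟨Function.extend e t 1,
    { toFun b := .ofAdd (Finsupp.mapDomain e (hli.repr ⟨_, hmem b⟩))
      map_one' := ?_
      map_mul' b b' := ?_ }, fun b => ?_⟩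
  · have h : (⟨_, hmem 1⟩ : Submodule.span K (Set.range (Subtype.val : s → V))) = 0 :=
      Subtype.ext (by simp)
    rw [h, map_zero, Finsupp.mapDomain_zero, ofAdd_zero]
  · have h : (⟨_, hmem (b * b')⟩ : Submodule.span K (Set.range (Subtype.val : s → V))) =
        ⟨_, hmem b⟩ + ⟨_, hmem b'⟩ :=
      Subtype.ext (by simp)
    rw [h, map_add, Finsupp.mapDomain_add, ofAdd_add]
  · change Finsupp.linearCombination K _ (Finsupp.mapDomain e _) = _
    rw [Finsupp.linearCombination_mapDomain, ht_ext, hli.linearCombination_repr]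

/-- The action of a commutative ring on the additive maps out of it, by precomposition with
multiplications. -/
abbrev precompModule (K A : Type*) [CommRing K] [AddCommGroup A] : Module K (K →+ A) where
  smul r f := f.comp (AddMonoidHom.mulLeft r)
  one_smul f := AddMonoidHom.ext fun x => congrArg f (one_mul x)
  mul_smul r s f := AddMonoidHom.ext fun x => congrArg f (by
    simp only [AddMonoidHom.coe_mulLeft]
    ring)
  smul_zero _ := rfl
  smul_add _ _ _ := rfl
  zero_smul f := AddMonoidHom.ext fun x => (congrArg f (zero_mul x)).trans (map_zero f)
  add_smul r s f := AddMonoidHom.ext fun x => (congrArg f (add_mul r s x)).trans (map_add f _ _)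

lemma exists_liftAddHom_eq_apply_one {A : Type*} [Field K] [AddCommGroup A]
    (θ : B →* Multiplicative (K →+ A)) :
    ∃ (t : ℕ → B) (ψ : B →* Multiplicative (ℕ →₀ K)),
      ∀ b, Finsupp.liftAddHom (fun i => (θ (t i)).toAdd) (ψ b).toAdd = (θ b).toAdd 1 := by
  let _ := precompModule K A
  obtain ⟨t, ψ, hψ⟩ := exists_linearCombination_eq (K := K) θ
  refine ⟨t, ψ, fun b => ?_⟩
  rw [← hψ b, Finsupp.linearCombination_apply, Finsupp.liftAddHom_apply, Finsupp.sum, Finsupp.sum,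
    AddMonoidHom.finsetSum_apply]
  exact Finset.sum_congr rfl fun i _ => congrArg _ (mul_one _).symm

end Coordinates

section Abelianization

variable {B : Type*} [Group B]

lemma twistFun_single_zero_one (b : B) (p : ℚ × B) :
    twistFun (fun _ => b) (Finsupp.single (0 : ℤ) (1 : ℚ)) p =
      (p.1, if ⌊p.1⌋ = 0 then b * p.2 else p.2) := by
  split_ifs with hp
  · rw [twistFun_of_eq_intCast (k := 1) _ (by simp [hp]), zpow_one]
  · exact twistFun_of_eq_zero _ (Finsupp.single_eq_of_ne hp)

/-- The class of a twisted rotation in the abelianization of the cellular group, written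
additively. -/
noncomputable def twistClass (t : ℤ → B) :
    (ℤ →₀ ℚ) →+ Additive (Abelianization (cellularGroup B)) :=
  MonoidHom.toAdditiveRight (Abelianization.of.comp (twistHom t))

/-- The class of a twisted rotation of a single cell; it does not depend on the cell. -/
noncomputable def cellClass (t : B) : ℚ →+ Additive (Abelianization (cellularGroup B)) :=
  (twistClass fun _ => t).comp (Finsupp.singleAddHom 0)

lemma twistClass_single (t : ℤ → B) (m : ℤ) (q : ℚ) :
    twistClass t (Finsupp.single m q) = cellClass (t m) q := by
  have hcongr : twistHom t (.ofAdd (Finsupp.single m q)) =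
      twistHom (fun _ => t m) (.ofAdd (Finsupp.single m q)) :=
    twistHom_congr t fun i hi => by rw [(Finsupp.single_apply_ne_zero.1 hi).1]
  change Additive.ofMul (Abelianization.of (twistHom t _)) = Additive.ofMul (Abelianization.of _)
  rw [hcongr]
  exact congrArg _ (isConj_iff_eq.1
    (Abelianization.of.map_isConj (isConj_twistHom_single m 0 (t m) q)))

lemma addMonoidHom_rat_ext {A : Type*} [AddCommGroup A] {f g : ℚ →+ A}
    (h : ∀ q, 0 ≤ q → q ≤ 1 → f q = g q) : f = g := by
  ext q
  have hq : q = q.num • (q.den : ℚ)⁻¹ := by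
    rw [zsmul_eq_mul, ← div_eq_mul_inv, Rat.num_div_den]
  have hden : (1 : ℚ) ≤ q.den := by exact_mod_cast q.pos
  rw [hq, map_zsmul, map_zsmul, h _ (by positivity) (inv_le_one_of_one_le₀ hden)]

lemma cellClass_mul (t t' : B) :
    cellClass (t * t') = cellClass t - cellClass 1 + cellClass t' := by
  refine addMonoidHom_rat_ext fun q h0 h1 => ?_
  have hnonneg : (0 : ℤ → ℚ) ≤ Finsupp.single 0 q := Finsupp.single_nonneg.2 h0
  have hle : ⇑(Finsupp.single (0 : ℤ) q) ≤ 1 := fun m => by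
    rw [Finsupp.single_apply]
    split_ifs <;> simp [h1]
  have hmul : twistHom (fun _ => t) (.ofAdd (Finsupp.single 0 q)) *
      (twistHom (fun _ => 1) (.ofAdd (Finsupp.single 0 q)))⁻¹ *
      twistHom (fun _ => t') (.ofAdd (Finsupp.single 0 q)) =
      twistHom (fun _ => t * t') (.ofAdd (Finsupp.single 0 q)) := by
    rw [← map_inv]
    exact Subtype.ext (twist_mul_twist_neg_mul_twist hnonneg hle)
  have hclass := congrArg (Additive.ofMul ∘ Abelianization.of) hmul
  simp only [Function.comp_apply, map_mul, map_inv, ofMul_mul, ofMul_inv, ← sub_eq_add_neg]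
    at hclass
  exact hclass.symm

variable (B) in
/-- Up to the inverse of a rotation, the class of the twisted rotation of a single cell depends
multiplicatively on the twist. -/
noncomputable def relativeCellClass :
    B →* Multiplicative (ℚ →+ Additive (Abelianization (cellularGroup B))) :=
  MonoidHom.mk' (fun b => .ofAdd (cellClass b - cellClass 1)) fun b b' => by
    rw [← ofAdd_add, cellClass_mul]
    abel_nf

lemma toAdd_relativeCellClass (b : B) :
    (relativeCellClass B b).toAdd = cellClass b - cellClass 1 :=
  rfl

lemma cellClass_one_one : cellClass (1 : B) 1 = 0 := by
  have h : twistHom (fun _ => (1 : B)) (.ofAdd (Finsupp.single 0 1)) = 1 := by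
    refine Subtype.ext (Equiv.ext fun p => (twistFun_single_zero_one 1 p).trans ?_)
    simp
  exact congrArg (Additive.ofMul ∘ Abelianization.of) h

end Abelianization

section Embedding

variable {B : Type*} [Group B]

/-- The labels of the correcting twists: `t i` on the cell `i + 1`, and `1` on the cells
`-(i + 1)`. -/
def correctionLabel (t : ℕ → B) : ℤ → B
  | .ofNat (i + 1) => t i
  | _ => 1

/-- The angles of the correcting twists: `-v i` on the cell `i + 1`, and `v i` on the cell
`-(i + 1)`. -/
noncomputable def correctionAngle : (ℕ →₀ ℚ) →+ (ℤ →₀ ℚ) :=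
  Finsupp.mapDomain.addMonoidHom Int.negSucc -
    Finsupp.mapDomain.addMonoidHom fun i : ℕ => (i + 1 : ℤ)

lemma correctionAngle_single (i : ℕ) (q : ℚ) :
    correctionAngle (Finsupp.single i q) =
      Finsupp.single (Int.negSucc i) q - Finsupp.single (i + 1 : ℤ) q := by
  simp [correctionAngle]

lemma correctionAngle_apply_zero (v : ℕ →₀ ℚ) : correctionAngle v 0 = 0 := by
  have h : (Finsupp.applyAddHom (0 : ℤ)).comp correctionAngle = (0 : (ℕ →₀ ℚ) →+ ℚ) :=
    Finsupp.addHom_ext fun i q => by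
      have hne : (i : ℤ) + 1 ≠ 0 := by omega
      simp [correctionAngle_single, hne]
  exact DFunLike.congr_fun h v

lemma twistClass_correctionAngle (t : ℕ → B) (v : ℕ →₀ ℚ) :
    twistClass (correctionLabel t) (correctionAngle v) =
      -Finsupp.liftAddHom (fun i => (relativeCellClass B (t i)).toAdd) v := by
  have h : (twistClass (correctionLabel t)).comp correctionAngle =
      -Finsupp.liftAddHom fun i => (relativeCellClass B (t i)).toAdd :=
    Finsupp.addHom_ext fun i q => by
      rw [AddMonoidHom.comp_apply, correctionAngle_single, map_sub, twistClass_single,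
        twistClass_single, AddMonoidHom.neg_apply, Finsupp.liftAddHom_apply_single,
        toAdd_relativeCellClass, AddMonoidHom.sub_apply, neg_sub]
      rfl
  exact DFunLike.congr_fun h v

variable (B) in
/-- The action of `B` on the labels of the cell `0`. -/
noncomputable def fiberHom : B →* cellularGroup B :=
  MonoidHom.mk' (fun b => twistHom (fun _ => b) (.ofAdd (Finsupp.single 0 1))) fun b b' => by
    refine Subtype.ext (Equiv.ext fun p => ?_)
    change twistFun (fun _ => b * b') (Finsupp.single 0 1) p =
      twistFun (fun _ => b) (Finsupp.single 0 1)
        (twistFun (fun _ => b') (Finsupp.single 0 1) p)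
    simp only [twistFun_single_zero_one]
    split_ifs <;> simp [mul_assoc]

lemma commute_fiberHom_twistHom (b : B) (t : ℤ → B) {q : ℤ →₀ ℚ} (hq : q 0 = 0) :
    Commute (fiberHom B b) (twistHom t (.ofAdd q)) := by
  have hdisj (m : ℤ) : Finsupp.single (0 : ℤ) (1 : ℚ) m = 0 ∨ q m = 0 := by
    rcases eq_or_ne m 0 with rfl | hm
    · exact .inr hq
    · exact .inl (Finsupp.single_eq_of_ne hm)
  exact Subtype.ext (twist_disjoint hdisj).commute

/-- The action of `B` on the labels of the cell `0`, corrected by twisted rotations of the other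
cells. -/
noncomputable def correctedFiberHom (t : ℕ → B) (ψ : B →* Multiplicative (ℕ →₀ ℚ)) :
    B →* cellularGroup B :=
  ((fiberHom B).noncommCoprod
    ((twistHom (correctionLabel t)).comp (AddMonoidHom.toMultiplicative correctionAngle))
    fun b v => commute_fiberHom_twistHom b _ (correctionAngle_apply_zero v.toAdd)).comp
    ((MonoidHom.id B).prod ψ)

variable {t : ℕ → B} {ψ : B →* Multiplicative (ℕ →₀ ℚ)}

lemma correctedFiberHom_apply (b : B) :
    correctedFiberHom t ψ b =
      fiberHom B b * twistHom (correctionLabel t) (.ofAdd (correctionAngle (ψ b).toAdd)) :=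
  rfl

lemma correctedFiberHom_injective : Function.Injective (correctedFiberHom t ψ) := by
  have happly (b : B) : (correctedFiberHom t ψ b : Equiv.Perm (ℚ × B)) (0, 1) = (0, b) := by
    change twistFun (fun _ => b) (Finsupp.single 0 1)
      (twistFun (correctionLabel t) (correctionAngle (ψ b).toAdd) (0, 1)) = _
    have hzero : correctionAngle (ψ b).toAdd ⌊((0, 1) : ℚ × B).1⌋ = 0 := by
      rw [Int.floor_zero, correctionAngle_apply_zero]
    rw [twistFun_of_eq_zero _ hzero, twistFun_single_zero_one]
    simp
  intro b b' h
  simpa [happly] using congrArg (fun g : cellularGroup B => (g : Equiv.Perm (ℚ × B)) (0, 1)) h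

lemma correctedFiberHom_mem_commutator {b : B}
    (h : Finsupp.liftAddHom (fun i => (relativeCellClass B (t i)).toAdd) (ψ b).toAdd =
      (relativeCellClass B b).toAdd 1) :
    correctedFiberHom t ψ b ∈ commutator (cellularGroup B) := by
  rw [← Abelianization.ker_of, MonoidHom.mem_ker, correctedFiberHom_apply, map_mul]
  change cellClass b 1 + twistClass (correctionLabel t) (correctionAngle (ψ b).toAdd) = 0
  rw [twistClass_correctionAngle, h, toAdd_relativeCellClass, AddMonoidHom.sub_apply,
    cellClass_one_one, sub_zero, add_neg_cancel]

lemma exists_injective_forall_mem_commutator [Countable B] :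
    ∃ β : B →* cellularGroup B, Function.Injective β ∧ ∀ b, β b ∈ commutator (cellularGroup B) := by
  obtain ⟨t, ψ, hψ⟩ := exists_liftAddHom_eq_apply_one (relativeCellClass B)
  exact ⟨correctedFiberHom t ψ, correctedFiberHom_injective,
    fun b => correctedFiberHom_mem_commutator (hψ b)⟩

end Embedding

section Subexponential

open scoped commutatorElement

lemma exists_countable_mem_closure_image {ι G : Type*} [Group G] {f : ι → G} {g : G}
    (hg : g ∈ Subgroup.closure (Set.range f)) :
    ∃ s : Set ι, s.Countable ∧ g ∈ Subgroup.closure (f '' s) := by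
  induction hg using Subgroup.closure_induction with
  | mem _ h =>
    obtain ⟨i, rfl⟩ := h
    exact ⟨{i}, Set.countable_singleton i, Subgroup.subset_closure ⟨i, rfl, rfl⟩⟩
  | one => exact ⟨∅, Set.countable_empty, one_mem _⟩
  | mul g h _ _ ihg ihh =>
    obtain ⟨s, hs, hg⟩ := ihg
    obtain ⟨s', hs', hh⟩ := ihh
    refine ⟨s ∪ s', hs.union hs', mul_mem ?_ ?_⟩
    · exact Subgroup.closure_mono (Set.image_mono Set.subset_union_left) hg
    · exact Subgroup.closure_mono (Set.image_mono Set.subset_union_right) hh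
  | inv g _ ih =>
    obtain ⟨s, hs, hg⟩ := ih
    exact ⟨s, hs, inv_mem hg⟩

lemma exists_seq_subset_closure_range {ι G : Type*} [Nonempty ι] [Group G] {f : ι → G} {A : Set G}
    (hA : A.Countable) (hAf : A ⊆ Subgroup.closure (Set.range f)) :
    ∃ p : ℕ → ι, A ⊆ Subgroup.closure (Set.range (f ∘ p)) := by
  choose s hs hmem using fun g : A => exists_countable_mem_closure_image (hAf g.2)
  have := hA.to_subtype
  inhabit ι
  obtain ⟨p, hp⟩ := Set.countable_iff_exists_subset_range.1 (Set.countable_iUnion hs)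
  refine ⟨p, fun g hg => Subgroup.closure_mono ?_ (hmem ⟨g, hg⟩)⟩
  rw [Set.range_comp]
  exact Set.image_mono ((Set.subset_iUnion s ⟨g, hg⟩).trans hp)

lemma exists_seq_subset_closure_commutators {G : Type*} [Group G] {A : Set G} (hA : A.Countable)
    (hAG : A ⊆ commutator G) :
    ∃ p : ℕ → G × G, A ⊆ Subgroup.closure (Set.range fun k => ⁅(p k).1, (p k).2⁆) := by
  refine exists_seq_subset_closure_range (f := fun p : G × G => ⁅p.1, p.2⁆) hA ?_
  rw [commutator_eq_closure] at hAG
  refine hAG.trans (Subgroup.closure_mono ?_)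
  rintro _ ⟨g, h, rfl⟩
  exact ⟨(g, h), rfl⟩

variable {B : Type*} [Group B]

lemma SubexpBalls.exists_embedding {G : Type} [Group G] {F : Set G} (hF : SubexpBalls F)
    (hfin : F.Finite) (hinv : F⁻¹ = F) {φ : B →* G} (φ_injective : Function.Injective φ)
    (hφ : ∀ b, φ b ∈ Subgroup.closure F) :
    ∃ (W : Type) (_ : Group W) (S : Set W), S.Finite ∧ S⁻¹ = S ∧ Subgroup.closure S = ⊤ ∧
      HasSubexpGrowth S ∧ ∃ φ : B →* W, Function.Injective φ := by
  refine ⟨Subgroup.closure F, inferInstance, Subtype.val ⁻¹' F,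
    hfin.preimage Subtype.val_injective.injOn, ?_, Subgroup.closure_closure_coe_preimage,
    (hasSubexpGrowth_closure_iff hfin hinv).2 hF, φ.codRestrict _ hφ,
    (MonoidHom.injective_codRestrict _ _ _).2 φ_injective⟩
  ext x
  change (x : G)⁻¹ ∈ F ↔ (x : G) ∈ F
  rw [← Set.mem_inv, hinv]

universe u in
lemma LocallySubexp.exists_subexpBalls_embedding {B : Type u} [Group B] [Countable B]
    (hB : LocallySubexp B) :
    ∃ (G : Type u) (_ : Group G) (F : Set G), F.Finite ∧ F⁻¹ = F ∧ SubexpBalls F ∧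
      ∃ φ : B →* G, Function.Injective φ ∧ ∀ b, φ b ∈ Subgroup.closure F := by
  obtain ⟨β, β_injective, hβ⟩ := exists_injective_forall_mem_commutator (B := B)
  obtain ⟨p, hp⟩ := exists_seq_subset_closure_commutators (Set.countable_range β)
    (Set.range_subset_iff.2 hβ)
  obtain ⟨c, hc, hpc⟩ := exists_subexpBalls_generators p hB.cellularGroup
  have hle : Subgroup.closure (Set.range fun k => ⁅(p k).1, (p k).2⁆) ≤
      (Subgroup.closure (generators c)).comap del := by
    rw [Subgroup.closure_le]
    rintro _ ⟨k, rfl⟩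
    obtain ⟨j, hj⟩ := hpc ⟨k, rfl⟩
    change del ⁅(p k).1, (p k).2⁆ ∈ Subgroup.closure (generators c)
    rw [← hj]
    exact del_commutator_mem_closure_generators c j
  exact ⟨_, _, _, generators_finite c, generators_inv c, hc, del.comp β,
    del_injective.comp β_injective, fun b => hle (hp ⟨b, rfl⟩)⟩

end Subexponential

end SubexpEmbedding

/-- **Subgroups of groups of subexponential growth**: a group `B` embeds in a finitely
generated group of subexponential growth if and only if `B` is countable and locally of
subexponential growth (every finitely generated subgroup of `B`, with the symmetric
generating set coming from a finite subset `F`, has subexponential growth). -/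
theorem embeds_in_subexponential_iff (B : Type*) [Group B] :
    (∃ (W : Type) (_ : Group W) (S : Set W),
        S.Finite ∧ S⁻¹ = S ∧ Subgroup.closure S = ⊤ ∧ HasSubexpGrowth S ∧
        ∃ φ : B →* W, Function.Injective φ) ↔
    (Countable B ∧ ∀ F : Set B, F.Finite →
        HasSubexpGrowth
          {x : ↥(Subgroup.closure (F ∪ F⁻¹)) | (x : B) ∈ F ∪ F⁻¹}) := by
  rw [← SubexpEmbedding.locallySubexp_iff_hasSubexpGrowth]
  constructor
  · rintro ⟨W, _, S, hfin, hinv, hS, hgrowth, φ, hφ⟩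
    have := SubexpEmbedding.countable_of_finite_generating hfin hinv hS
    have hballs := (SubexpEmbedding.hasSubexpGrowth_iff_subexpBalls hfin hinv hS).1 hgrowth
    exact ⟨hφ.countable, (hballs.locallySubexp hfin hinv hS).of_injective hφ⟩
  · rintro ⟨_, hB⟩
    let e : Shrink.{0} B ≃* B := Shrink.mulEquiv
    have := e.injective.countable
    obtain ⟨G, _, F, hfin, hinv, hF, φ, φ_injective, hφ⟩ :=
      (hB.of_injective (φ := e.toMonoidHom) e.injective).exists_subexpBalls_embedding
    exact hF.exists_embedding hfin hinv (φ := φ.comp e.symm.toMonoidHom)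
      (φ_injective.comp e.symm.injective) fun b => hφ (e.symm b)
end

section
/- Groups of non-uniform exponential growth: Let η₊ be the unique positive real root of T³ − T² − 2T − 4 and set α = log 2 / log η₊ ≈ 0.76. Every countable group B embeds as a subgroup of a finitely generated group W of non-uniform exponential growth: for every finite symmetric generating set S of W the exponential growth rate λ_{W,S} = lim_{R→∞} (log v_{W,S}(R))/R is strictly positive, yet the infimum of λ_{W,S} over all finite symmetric generating sets S of W equals 0. Moreover W may be chosen with the following property: there is a constant K such that for every R > 0 there exists a finite symmetric generating set S of W with v_{W,S}(r) ≤ exp(K·r^α) for all r ∈ [0, R]. -/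
/-- The growth function `v_{G,S}(R) = #{g : ‖g‖_S ≤ R}` for a real radius `R`. -/
noncomputable def growthFnR {G : Type*} [Group G] (S : Set G) (R : ℝ) : ℕ :=
  Nat.card {g : G // (wordNorm S g : ℝ) ≤ R}

/-- The exponential growth rate `λ_{G,S}` exists and equals `lam`:
`(log v_{G,S}(R))/R → lam`. -/
def HasGrowthRate {G : Type*} [Group G] (S : Set G) (lam : ℝ) : Prop :=
  Filter.Tendsto (fun R : ℕ => Real.log (growthFn S R : ℝ) / (R : ℝ))
    Filter.atTop (nhds lam)

/-!
The Grigorchuk group acts on the rays of the binary tree. Given homomorphisms `t n` from a finite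
perfect group `A` into `Perm Y`, let `x ∈ A` act on `Ray × Y` by applying `t n x` to the fibers over
the rays `1ⁿ0c1^∞`, for all `n` at once, and let `W` be generated by the Grigorchuk group and `A`.
Commutators with elements that isolate one marked ray confine a decoration `t n x` to a single
fiber, because `A` is perfect. If every term of `t` recurs, the first `n` decorations can thus be
erased from the generators without changing `W`, so `W` has infinitely many finite generating sets
`S n`.

As long as the decorations at a level are trivial, `W` is self-similar there. With the weights of
Bartholdi, for `θ³ + θ² + θ = 2`, the two sections of an element have total weight at most `θ` times
the weight of the element, up to an additive constant. With respect to `S n` this may be iterated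
`n` times, and a ball of radius `(2 / θ) ^ k = η ^ k`, with `k ≤ n`, is determined by `2 ^ k`
elements of total weight `O(2 ^ k)`. It has at most `exp (C * 2 ^ k)` elements, and `2 ^ k` is the
`α`-th power of its radius.

A countable group is contained in a group generated by the images of countably many copies of
`A = A₅`, hence in `W`. Embedding `B × F₂` in place of `B` makes every growth rate positive.
-/

namespace NonuniformGrowth

open Equiv
open Stream' (cons const)
open scoped Pointwise commutatorElement

section Growth

variable {G : Type*} [Group G] {S : Set G}

/-- Finite symmetric generating sets of a group, the sets over which growth is measured. -/
structure IsFiniteSymmGenSet (S : Set G) : Prop where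
  finite : S.Finite
  inv_eq : S⁻¹ = S
  closure_eq_top : Subgroup.closure S = ⊤

lemma mem_insert_one_pow_iff {M : Type*} [Monoid M] {S : Set M} {n : ℕ} {g : M} :
    g ∈ insert 1 S ^ n ↔ ∃ l : List M, (∀ s ∈ l, s ∈ S) ∧ l.length ≤ n ∧ l.prod = g := by
  constructor
  · intro hg
    induction n generalizing g with
    | zero => exact ⟨[], by simp, le_rfl, by simpa [eq_comm] using hg⟩
    | succ n ih =>
      rw [pow_succ'] at hg
      obtain ⟨s, hs, h, hh, rfl⟩ := Set.mem_mul.1 hg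
      obtain ⟨l, hlS, hln, rfl⟩ := ih hh
      rcases hs with rfl | hs
      · exact ⟨l, hlS, hln.trans n.le_succ, (one_mul _).symm⟩
      · exact ⟨s :: l, by simpa [hs] using hlS, by simpa using hln, l.prod_cons⟩
  · rintro ⟨l, hlS, hln, rfl⟩
    refine Set.pow_subset_pow_right (Set.mem_insert 1 S) hln ?_
    clear hln
    induction l with
    | nil => simp
    | cons s l ih =>
      rw [List.forall_mem_cons] at hlS
      rw [List.prod_cons, List.length_cons, pow_succ']
      exact Set.mul_mem_mul (Set.mem_insert_of_mem 1 hlS.1) (ih hlS.2)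

namespace IsFiniteSymmGenSet

lemma exists_list_prod_eq (hS : IsFiniteSymmGenSet S) (g : G) :
    ∃ l : List G, (∀ s ∈ l, s ∈ S) ∧ l.prod = g := by
  refine Submonoid.exists_list_of_mem_closure ?_
  rw [← Set.union_self S, ← congrArg (S ∪ ·) hS.inv_eq, ← Subgroup.closure_toSubmonoid,
    hS.closure_eq_top]
  exact Subgroup.mem_top g

lemma wordNorm_le_iff (hS : IsFiniteSymmGenSet S) {n : ℕ} {g : G} :
    wordNorm S g ≤ n ↔ g ∈ insert 1 S ^ n := by
  rw [mem_insert_one_pow_iff]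
  constructor
  · obtain ⟨l, hlS, hprod⟩ := hS.exists_list_prod_eq g
    have hne : {n | ∃ l : List G, (∀ s ∈ l, s ∈ S) ∧ l.length = n ∧ l.prod = g}.Nonempty :=
      ⟨l.length, l, hlS, rfl, hprod⟩
    obtain ⟨l', hS', hlen, hprod⟩ := Nat.sInf_mem hne
    exact fun h => ⟨l', hS', hlen.trans_le h, hprod⟩
  · rintro ⟨l, hlS, hln, rfl⟩
    exact le_trans (Nat.sInf_le ⟨l, hlS, rfl, rfl⟩) hln

lemma growthFn_eq_natCard (hS : IsFiniteSymmGenSet S) (n : ℕ) :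
    growthFn S n = Nat.card (insert 1 S ^ n : Set G) :=
  Nat.card_congr (Equiv.subtypeEquivRight fun _ => hS.wordNorm_le_iff)

lemma finite_insert_one_pow (hS : IsFiniteSymmGenSet S) (n : ℕ) : (insert 1 S ^ n).Finite := by
  induction n with
  | zero => simp
  | succ n ih => exact pow_succ (insert 1 S) n ▸ ih.mul (hS.finite.insert 1)

lemma card_le_growthFn (hS : IsFiniteSymmGenSet S) {ι : Type*} {n : ℕ} {f : ι → G}
    (hf : Function.Injective f) (hfS : ∀ i, f i ∈ insert 1 S ^ n) :
    Nat.card ι ≤ growthFn S n := by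
  have := (hS.finite_insert_one_pow n).to_subtype
  rw [hS.growthFn_eq_natCard]
  exact Nat.card_le_card_of_injective (fun i => (⟨f i, hfS i⟩ : (insert 1 S ^ n : Set G)))
    fun _ _ h => hf (congrArg Subtype.val h)

lemma one_le_growthFn (hS : IsFiniteSymmGenSet S) (n : ℕ) : 1 ≤ growthFn S n := by
  have hone : (1 : G) ∈ insert 1 S ^ n := Set.one_mem_pow (Set.mem_insert 1 S)
  simpa using hS.card_le_growthFn (ι := Unit) (f := 1) (Function.injective_of_subsingleton _)
    fun _ => hone

lemma growthFn_zero (hS : IsFiniteSymmGenSet S) : growthFn S 0 = 1 := by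
  simp [hS.growthFn_eq_natCard]

lemma growthFn_add_le (hS : IsFiniteSymmGenSet S) (m n : ℕ) :
    growthFn S (m + n) ≤ growthFn S m * growthFn S n := by
  simp only [hS.growthFn_eq_natCard, pow_add]
  exact Set.natCard_mul_le

/-- By Fekete's lemma, the growth rate exists and is the infimum of `log v(n) / n`. -/
lemma exists_hasGrowthRate (hS : IsFiniteSymmGenSet S) :
    ∃ lam : ℝ, HasGrowthRate S lam ∧
      ∀ n : ℕ, n ≠ 0 → lam ≤ Real.log (growthFn S n) / n := by
  have hpos (n : ℕ) : (0 : ℝ) < growthFn S n := mod_cast hS.one_le_growthFn n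
  have hsub : Subadditive fun n => Real.log (growthFn S n) := fun m n => by
    rw [← Real.log_mul (hpos m).ne' (hpos n).ne']
    exact Real.log_le_log (hpos _) (mod_cast hS.growthFn_add_le m n)
  have hbdd : BddBelow (Set.range fun n : ℕ => Real.log (growthFn S n) / n) :=
    ⟨0, Set.forall_mem_range.2 fun n => by positivity⟩
  exact ⟨hsub.lim, hsub.tendsto_lim hbdd, fun n hn => hsub.lim_le_div hbdd hn⟩

lemma two_pow_le_growthFn (hS : IsFiniteSymmGenSet S) {f : FreeMonoid Bool →* G}
    (hf : Function.Injective f) {L : ℕ} (hL : ∀ b, wordNorm S (f (.of b)) ≤ L) (n : ℕ) :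
    2 ^ n ≤ growthFn S (L * n) := by
  let word (v : Fin n → Bool) : FreeMonoid Bool := FreeMonoid.ofList (List.ofFn v)
  have hinj : Function.Injective (f ∘ word) := hf.comp fun _ _ h => List.ofFn_injective h
  simpa using hS.card_le_growthFn hinj fun v => by
    rw [pow_mul, Function.comp_apply, ← FreeMonoid.lift_restrict f, FreeMonoid.lift_ofList,
      List.map_ofFn]
    exact Set.mem_pow.2 ⟨fun i => ⟨f (.of (v i)), hS.wordNorm_le_iff.1 (hL _)⟩, rfl⟩

lemma exists_pos_hasGrowthRate (hS : IsFiniteSymmGenSet S) {f : FreeMonoid Bool →* G}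
    (hf : Function.Injective f) : ∃ lam : ℝ, 0 < lam ∧ HasGrowthRate S lam := by
  obtain ⟨lam, hlam, -⟩ := hS.exists_hasGrowthRate
  obtain ⟨L, hLpos, hL⟩ : ∃ L > 0, ∀ b, wordNorm S (f (.of b)) ≤ L :=
    ⟨max (wordNorm S (f (.of true))) (wordNorm S (f (.of false))) + 1, by omega,
      fun b => by cases b <;> omega⟩
  have hLpos' : (0 : ℝ) < L := mod_cast hLpos
  have hsubseq : Filter.Tendsto (fun n : ℕ => L * n) .atTop .atTop :=
    Filter.tendsto_id.const_mul_atTop' hLpos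
  refine ⟨lam, (div_pos (Real.log_pos one_lt_two) hLpos').trans_le ?_, hlam⟩
  refine ge_of_tendsto (hlam.comp hsubseq) ?_
  filter_upwards [Filter.eventually_gt_atTop 0] with n hn
  have hn' : (0 : ℝ) < n := mod_cast hn
  have hgrowth : n * Real.log 2 ≤ Real.log (growthFn S (L * n)) := by
    rw [← Real.log_pow]
    exact Real.log_le_log (by positivity) (mod_cast hS.two_pow_le_growthFn hf hL n)
  rw [Function.comp_apply, Nat.cast_mul, div_le_div_iff₀ hLpos' (mul_pos hLpos' hn')]
  calc Real.log 2 * (L * n) = n * Real.log 2 * L := by ring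
    _ ≤ Real.log (growthFn S (L * n)) * L := by gcongr

end IsFiniteSymmGenSet

lemma growthFnR_eq_growthFn_floor {r : ℝ} (hr : 0 ≤ r) : growthFnR S r = growthFn S ⌊r⌋₊ :=
  Nat.card_congr (Equiv.subtypeEquivRight fun _ => (Nat.le_floor_iff hr).symm)

lemma exists_hasGrowthRate_lt {α K : ℝ} (hα : α < 1)
    (h : ∀ R : ℝ, 0 < R → ∃ S : Set G, IsFiniteSymmGenSet S ∧
      ∀ r : ℝ, 0 ≤ r → r ≤ R → (growthFnR S r : ℝ) ≤ Real.exp (K * r ^ α))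
    {ε : ℝ} (hε : 0 < ε) :
    ∃ S : Set G, IsFiniteSymmGenSet S ∧ ∃ lam : ℝ, lam < ε ∧ HasGrowthRate S lam := by
  have hlim : Filter.Tendsto (fun n : ℕ => K * (n : ℝ) ^ (-(1 - α))) .atTop (nhds 0) := by
    simpa using ((tendsto_rpow_neg_atTop (sub_pos.2 hα)).comp
      tendsto_natCast_atTop_atTop).const_mul K
  obtain ⟨n, hn, hnpos⟩ := ((hlim.eventually_lt_const hε).and
    (Filter.eventually_gt_atTop 0)).exists
  have hnpos' : (0 : ℝ) < n := mod_cast hnpos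
  obtain ⟨S, hS, hgrowth⟩ := h n hnpos'
  obtain ⟨lam, hlam, hle⟩ := hS.exists_hasGrowthRate
  refine ⟨S, hS, lam, (hle n hnpos.ne').trans_lt (lt_of_le_of_lt ?_ hn), hlam⟩
  have hn_growth : (growthFn S n : ℝ) ≤ Real.exp (K * n ^ α) := by
    simpa [growthFnR_eq_growthFn_floor] using hgrowth n hnpos'.le le_rfl
  rw [neg_sub, Real.rpow_sub_one hnpos'.ne', ← mul_div_assoc]
  gcongr
  exact (Real.log_le_iff_le_exp (mod_cast hS.one_le_growthFn n)).2 hn_growth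

end Growth

lemma isReduced_map_pair_true {ι : Type*} (l : List ι) :
    FreeGroup.IsReduced (l.map fun i => (i, true)) :=
  (List.isChain_map _).2 (List.pairwise_of_forall fun _ _ _ => rfl).isChain

lemma toWord_lift_of {ι : Type*} [DecidableEq ι] (w : FreeMonoid ι) :
    (FreeMonoid.lift FreeGroup.of w).toWord = w.toList.map fun i => (i, true) := by
  have hmk : FreeMonoid.lift FreeGroup.of w = FreeGroup.mk (w.toList.map fun i => (i, true)) := by
    induction w with
    | one => rfl
    | of i => rfl
    | mul u v hu hv =>
      rw [map_mul, hu, hv, FreeGroup.mul_mk, FreeMonoid.toList_mul, List.map_append]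
  rw [hmk, FreeGroup.toWord_mk]
  exact FreeGroup.IsReduced.reduce_eq (isReduced_map_pair_true _)

lemma freeMonoid_lift_freeGroup_of_injective {ι : Type*} :
    Function.Injective (FreeMonoid.lift (FreeGroup.of (α := ι))) := by
  classical
  intro u v h
  have hinj : Function.Injective fun i : ι => (i, true) := Prod.mk_left_injective true
  exact FreeMonoid.toList.injective <| hinj.list_map <| by
    rw [← toWord_lift_of, ← toWord_lift_of, h]

section Fibered

variable {X Y A : Type*}

/-- The group `X → Perm Y` acting on `X × Y` fiber by fiber. -/
def fiberwise : (X → Perm Y) →* Perm (X × Y) where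
  toFun φ := Equiv.prodCongrRight φ
  map_one' := rfl
  map_mul' _ _ := rfl

/-- The group `Perm X` acting on the base of the trivial fibration `X × Y → X`. Together with
`fiberwise` it generates the unrestricted permutational wreath product of `Perm Y` by `Perm X`. -/
def base : Perm X →* Perm (X × Y) where
  toFun γ := Equiv.prodCongr γ (Equiv.refl Y)
  map_one' := rfl
  map_mul' _ _ := rfl

@[simp] lemma fiberwise_apply (φ : X → Perm Y) (x : X) (y : Y) :
    fiberwise φ (x, y) = (x, φ x y) := rfl

lemma fiberwise_injective : Function.Injective (fiberwise (X := X) (Y := Y)) := fun φ ψ h => by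
  ext x y
  simpa using congrArg Prod.snd (Equiv.congr_fun h (x, y))

lemma base_inv_mul_fiberwise_mul_base (γ : Perm X) (φ : X → Perm Y) :
    (base γ)⁻¹ * fiberwise φ * base γ = fiberwise (φ ∘ γ) := by
  rw [mul_assoc, inv_mul_eq_iff_eq_mul]
  ext ⟨x, y⟩ <;> rfl

lemma base_mul_fiberwise_mul_base_inv (γ : Perm X) (φ : X → Perm Y) :
    base γ * fiberwise φ * (base γ)⁻¹ = fiberwise (φ ∘ ⇑γ⁻¹) := by
  rw [← base_inv_mul_fiberwise_mul_base, map_inv, inv_inv]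

variable [DecidableEq X]

lemma base_mul_fiberwise_mulSingle_mul_base_inv (γ : Perm X) (p : X) (h : Perm Y) :
    base γ * fiberwise (Pi.mulSingle p h) * (base γ)⁻¹ = fiberwise (Pi.mulSingle (γ p) h) := by
  rw [base_mul_fiberwise_mul_base_inv]
  congr 1
  funext x
  simp only [Function.comp_apply, Pi.mulSingle_apply, Perm.inv_eq_iff_eq, eq_comm (a := x)]

/-- The commutator of a fiberwise permutation with a `γ`-translate of another one is supported
where neither of the two is trivial; comparing it with the fiberwise commutator isolates `p`. -/
lemma fiberwise_mulSingle_commutator_mem_of_isolated [Group A] {f : X → A →* Perm Y}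
    {U : Subgroup (Perm (X × Y))} (hU : ∀ x, fiberwise (fun w => f w x) ∈ U)
    {γ : Perm X} (hγ : base γ ∈ U) {p : X} (hγp : f (γ p) = 1)
    (hne : ∀ w, w ≠ p → f w = 1 ∨ f (γ w) = f w) (x y : A) :
    fiberwise (Pi.mulSingle p (f p ⁅x, y⁆)) ∈ U := by
  have hcomm : ⁅fiberwise (fun w => f w x), (base γ)⁻¹ * fiberwise (fun w => f w y) * base γ⁆ ∈ U :=
    have hconj := U.mul_mem (U.mul_mem (U.inv_mem hγ) (hU y)) hγ
    U.mul_mem (U.mul_mem (U.mul_mem (hU x) hconj) (U.inv_mem (hU x))) (U.inv_mem hconj)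
  rw [base_inv_mul_fiberwise_mul_base, ← map_commutatorElement] at hcomm
  have hmem := U.mul_mem (U.inv_mem hcomm) (hU ⁅x, y⁆)
  rw [← map_inv, ← map_mul] at hmem
  convert hmem using 2
  funext w
  simp only [Pi.mul_apply, Pi.inv_apply, commutatorElement_def, Function.comp_apply, map_mul,
    map_inv]
  by_cases hw : w = p
  · subst hw
    simp [hγp]
  · rcases hne w hw with h | h
    · simp [hw, h]
    · rw [Pi.mulSingle_eq_of_ne hw, h]
      group

lemma fiberwise_mulSingle_mem_of_isolated [Group A] (hA : commutator A = ⊤)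
    {f : X → A →* Perm Y} {U : Subgroup (Perm (X × Y))}
    (hU : ∀ x, fiberwise (fun w => f w x) ∈ U) {γ : Perm X} (hγ : base γ ∈ U) {p : X}
    (hγp : f (γ p) = 1) (hne : ∀ w, w ≠ p → f w = 1 ∨ f (γ w) = f w) (x : A) :
    fiberwise (Pi.mulSingle p (f p x)) ∈ U := by
  have hle : commutator A ≤
      U.comap (fiberwise.comp ((MonoidHom.mulSingle (fun _ : X => Perm Y) p).comp (f p))) := by
    rw [commutator_eq_closure, Subgroup.closure_le]
    rintro _ ⟨x, y, rfl⟩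
    exact fiberwise_mulSingle_commutator_mem_of_isolated hU hγ hγp hne x y
  exact hle (hA ▸ Subgroup.mem_top x)

end Fibered

section Embedding

variable {I Z : Type*} [DecidableEq I]

/-- The action of `Perm I` on the base of `I × Z`, conjugated by `g` acting on the fiber over `i`.
-/
def twistedBase (i : I) (g : Perm Z) : Perm I →* Perm (I × Z) :=
  (MulAut.conj (fiberwise (Pi.mulSingle i g))).toMonoidHom.comp base

lemma twistedBase_apply (i : I) (g : Perm Z) (σ : Perm I) :
    twistedBase i g σ =
      fiberwise (Pi.mulSingle i g) * base σ * (fiberwise (Pi.mulSingle i g))⁻¹ := rfl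

lemma twistedBase_mul_inv (i : I) (g : Perm Z) (σ : Perm I) :
    twistedBase i g σ * (twistedBase i 1 σ)⁻¹ =
      fiberwise (Pi.mulSingle i g * Pi.mulSingle (σ i) g⁻¹) := by
  rw [map_mul, ← base_mul_fiberwise_mulSingle_mul_base_inv, Pi.mulSingle_inv, map_inv]
  simp [twistedBase_apply, mul_assoc]

lemma commutatorElement_mulSingle_mul_mulSingle {M : Type*} [Group M] {i j k : I} (hij : i ≠ j)
    (hik : i ≠ k) (hjk : j ≠ k) (g h : M) :
    ⁅(Pi.mulSingle i g * Pi.mulSingle j g⁻¹ : I → M),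
      (Pi.mulSingle i h * Pi.mulSingle k h⁻¹ : I → M)⁆ = Pi.mulSingle i ⁅g, h⁆ := by
  funext x
  simp only [commutatorElement_def, Pi.mul_apply, Pi.inv_apply]
  obtain rfl | hxi := eq_or_ne x i
  · simp [hij, hik]
  obtain rfl | hxj := eq_or_ne x j
  · simp [hxi, hjk]
  · simp [hxi, hxj]

lemma fiberwise_mulSingle_commutator_mem_of_twistedBase {U : Subgroup (Perm (I × Z))} {i : I}
    {σ τ : Perm I} (hσ : i ≠ σ i) (hτ : i ≠ τ i) (hστ : σ i ≠ τ i) {g h : Perm Z}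
    (hσ₁ : twistedBase i 1 σ ∈ U) (hτ₁ : twistedBase i 1 τ ∈ U)
    (hσg : twistedBase i g σ ∈ U) (hτh : twistedBase i h τ ∈ U) :
    fiberwise (Pi.mulSingle i ⁅g, h⁆) ∈ U := by
  have hg := U.mul_mem hσg (U.inv_mem hσ₁)
  have hh := U.mul_mem hτh (U.inv_mem hτ₁)
  rw [twistedBase_mul_inv] at hg hh
  rw [← commutatorElement_mulSingle_mul_mulSingle hσ hτ hστ, map_commutatorElement]
  exact U.mul_mem (U.mul_mem (U.mul_mem hg hh) (U.inv_mem hg)) (U.inv_mem hh)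

variable {B : Type*} [Group B]

/-- Left translation by `b` on the half line of fibers of `ℤ × B` over the nonnegative integers. -/
def halfLineTranslation (b : B) : Perm (ℤ × B) :=
  fiberwise fun n => if 0 ≤ n then MulAction.toPermHom B B b else 1

lemma halfLineTranslation_one : halfLineTranslation (1 : B) = 1 := by
  simp only [halfLineTranslation, map_one, ite_self]
  exact map_one fiberwise

/-- The translate of the half line by one cancels it except at its end point. -/
lemma commutatorElement_halfLineTranslation (b : B) :
    ⁅halfLineTranslation b, base (Equiv.addRight (1 : ℤ))⁆ =
      fiberwise (Pi.mulSingle 0 (MulAction.toPermHom B B b)) := by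
  rw [commutatorElement_def, halfLineTranslation, mul_assoc, mul_assoc, ← mul_assoc (base _),
    ← map_inv fiberwise, base_mul_fiberwise_mul_base_inv, ← map_mul]
  congr 1
  funext n
  have hshift : ((Equiv.addRight (1 : ℤ))⁻¹ : Perm ℤ) n = n - 1 := by
    simp [Perm.inv_def, sub_eq_add_neg]
  simp only [Pi.mul_apply, Function.comp_apply, Pi.inv_apply, hshift, Pi.mulSingle_apply]
  rcases lt_trichotomy n 0 with h | rfl | h
  · simp [h.not_ge, h.ne, (show ¬ 1 ≤ n by lia)]
  · simp
  · simp [h.le, h.ne', (show 1 ≤ n by lia)]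

lemma exists_recurrent_seq_alternatingGroup_hom (B : Type*) [Group B] [Countable B] :
    ∃ t : ℕ → alternatingGroup (Fin 5) →* Perm (Fin 5 × ℤ × B),
      (∀ n, ∃ m, n < m ∧ t m = t n) ∧
        ∃ φ : B →* Perm (Fin 5 × ℤ × B),
          Function.Injective φ ∧ φ.range ≤ ⨆ m, (t m).range := by
  obtain ⟨e, he⟩ := exists_surjective_nat (Option B)
  let g (o : Option B) : Perm (ℤ × B) := o.elim (base (Equiv.addRight 1)) halfLineTranslation
  let t (m : ℕ) := (twistedBase 0 (g (e m.unpair.1))).comp (alternatingGroup (Fin 5)).subtype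
  refine ⟨t, fun n => ⟨Nat.pair n.unpair.1 (n + 1), Nat.right_le_pair _ _, by simp [t]⟩,
    fiberwise.comp ((MonoidHom.mulSingle _ 0).comp (fiberwise.comp
      ((MonoidHom.mulSingle _ 0).comp (MulAction.toPermHom B B)))), ?_, ?_⟩
  · exact fiberwise_injective.comp <| (Pi.mulSingle_injective 0).comp <|
      fiberwise_injective.comp <| (Pi.mulSingle_injective 0).comp MulAction.toPerm_injective
  · rintro _ ⟨b, rfl⟩
    have hmem (o : Option B) {σ : Perm (Fin 5)} (hσ : σ ∈ alternatingGroup (Fin 5)) :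
        twistedBase 0 (g o) σ ∈ ⨆ m, (t m).range := by
      obtain ⟨m, rfl⟩ := he o
      exact Subgroup.mem_iSup_of_mem (Nat.pair m 0) ⟨⟨σ, hσ⟩, by simp [t]⟩
    have hσ : swap 0 1 * swap 2 3 ∈ alternatingGroup (Fin 5) := by
      rw [Perm.mem_alternatingGroup]; decide
    have hτ : swap 0 2 * swap 1 3 ∈ alternatingGroup (Fin 5) := by
      rw [Perm.mem_alternatingGroup]; decide
    have hone : g (some 1) = 1 := halfLineTranslation_one
    have hb := fiberwise_mulSingle_commutator_mem_of_twistedBase (by decide) (by decide)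
      (by decide) (hone ▸ hmem (some 1) hσ) (hone ▸ hmem (some 1) hτ) (hmem (some b) hσ)
      (hmem none hτ)
    rwa [show ⁅g (some b), g none⁆ = _ from commutatorElement_halfLineTranslation b] at hb

end Embedding

section Rays

/-- Infinite binary words, the boundary of the rooted binary tree. -/
abbrev Ray : Type := Stream' Bool

/-- The Klein four-group. In the usual notation of the Grigorchuk group, its nontrivial elements
are `b = (1, 0)`, `c = (1, 1)` and `d = (0, 1)`. -/
abbrev Klein : Type := Multiplicative (ZMod 2 × ZMod 2)

/-- The automorphism `b ↦ c ↦ d ↦ b` of the Klein four-group, which describes the action of its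
elements on the subtree below `1`. -/
def shift : Klein →* Klein where
  toFun k := .ofAdd (k.toAdd.1 + k.toAdd.2, k.toAdd.1)
  map_one' := by decide
  map_mul' := by decide

/-- Whether an element of the Klein four-group acts by the rooted flip on the subtree below `0`;
this is so for `b` and `c`. -/
def active (k : Klein) : Bool := k.toAdd.1 = 1

lemma shift_surjective : Function.Surjective shift := by decide

lemma active_mul : ∀ k l : Klein, active (k * l) = (active k ^^ active l) := by decide

lemma exists_eq_cons (w : Ray) : ∃ c v, w = cons c v := ⟨_, _, (Stream'.eta w).symm⟩

/-- The flip of the first letter, the generator `a` of the Grigorchuk group. -/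
def flipHead (w : Ray) : Ray := cons (!w.head) w.tail

@[simp] lemma flipHead_cons (c : Bool) (w : Ray) : flipHead (cons c w) = cons (!c) w := rfl

@[simp] lemma flipHead_flipHead (w : Ray) : flipHead (flipHead w) = w := by
  obtain ⟨c, v, rfl⟩ := exists_eq_cons w
  simp

/-- The action of the directed generators `b`, `c`, `d` of the Grigorchuk group. -/
def directedAct (k : Klein) (w : Ray) : Ray
  | 0 => w.head
  | n + 1 =>
    if w.head then directedAct (shift k) w.tail n
    else if active k then flipHead w.tail n else w.tail n

lemma directedAct_cons_true (k : Klein) (w : Ray) :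
    directedAct k (cons true w) = cons true (directedAct (shift k) w) := by
  ext n
  cases n <;> rfl

lemma directedAct_cons_false (k : Klein) (w : Ray) :
    directedAct k (cons false w) = cons false (if active k then flipHead w else w) := by
  ext n
  cases n with
  | zero => rfl
  | succ n => cases h : active k <;> simp [Stream'.get, directedAct, cons, h]

lemma directedAct_one (w : Ray) : directedAct 1 w = w := by
  ext n
  induction n generalizing w with
  | zero => rfl
  | succ n ih =>
    obtain ⟨_ | _, v, rfl⟩ := exists_eq_cons w
    · rw [directedAct_cons_false]
      rfl
    · rw [directedAct_cons_true, map_one]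
      exact ih v

lemma directedAct_mul (k l : Klein) (w : Ray) :
    directedAct (k * l) w = directedAct k (directedAct l w) := by
  ext n
  induction n generalizing k l w with
  | zero => rfl
  | succ n ih =>
    obtain ⟨_ | _, v, rfl⟩ := exists_eq_cons w
    · simp only [directedAct_cons_false, active_mul]
      cases active k <;> cases active l <;> simp
    · simp only [directedAct_cons_true, map_mul]
      exact ih (shift k) (shift l) v

/-- The generator `a` of the Grigorchuk group, as a permutation. -/
def rooted : Perm Ray := Function.Involutive.toPerm flipHead flipHead_flipHead

/-- The generators `1`, `b`, `c`, `d` of the Grigorchuk group, as permutations. -/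
def directed : Klein →* Perm Ray :=
  MonoidHom.toHomPerm (G := Klein)
    { toFun := directedAct
      map_one' := funext directedAct_one
      map_mul' k l := funext (directedAct_mul k l) }

@[simp] lemma rooted_apply (w : Ray) : rooted w = flipHead w := rfl

@[simp] lemma directed_apply (k : Klein) (w : Ray) : directed k w = directedAct k w := rfl

/-- The first Grigorchuk group, acting on the boundary of the binary tree. -/
def grigorchukGroup : Subgroup (Perm Ray) :=
  Subgroup.closure (insert rooted (Set.range directed))

lemma rooted_mem_grigorchukGroup : rooted ∈ grigorchukGroup :=
  Subgroup.subset_closure (Set.mem_insert _ _)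

lemma directed_mem_grigorchukGroup (k : Klein) : directed k ∈ grigorchukGroup :=
  Subgroup.subset_closure (Set.mem_insert_of_mem _ ⟨k, rfl⟩)

/-- The generators `rooted * directed b * rooted` and `directed k` realize all generators on the
subtree below `1`. -/
lemma exists_mem_grigorchukGroup_cons_true {γ : Perm Ray} (hγ : γ ∈ grigorchukGroup) :
    ∃ δ ∈ grigorchukGroup, ∀ w, δ (cons true w) = cons true (γ w) := by
  induction hγ using Subgroup.closure_induction with
  | mem γ hγ =>
    rcases hγ with rfl | ⟨k, rfl⟩
    · have hb : active (.ofAdd (1, 0)) := by decide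
      refine ⟨rooted * directed (.ofAdd (1, 0)) * rooted,
        mul_mem (mul_mem rooted_mem_grigorchukGroup (directed_mem_grigorchukGroup _))
          rooted_mem_grigorchukGroup, fun w => ?_⟩
      simp [directedAct_cons_false, hb]
    · obtain ⟨l, rfl⟩ := shift_surjective k
      exact ⟨directed l, directed_mem_grigorchukGroup l, directedAct_cons_true l⟩
  | one => exact ⟨1, one_mem _, fun _ => rfl⟩
  | mul γ γ' _ _ h h' =>
    obtain ⟨δ, hδ, hγ⟩ := h
    obtain ⟨δ', hδ', hγ'⟩ := h'
    exact ⟨δ * δ', mul_mem hδ hδ', fun w => by simp [hγ, hγ']⟩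
  | inv γ _ h =>
    obtain ⟨δ, hδ, hγ⟩ := h
    exact ⟨δ⁻¹, inv_mem hδ, fun w => by
      rw [Perm.inv_eq_iff_eq, hγ, ← Perm.mul_apply, mul_inv_cancel, Perm.one_apply]⟩

end Rays

section MarkedRays

/-- The ray `1ⁿ0c111…`. The marked rays with a given `n` are swapped or fixed by the directed
generators; they will carry the decorations of level `n`. -/
def markedRay : ℕ → Bool → Ray
  | 0, c => cons false (cons c (const true))
  | n + 1, c => cons true (markedRay n c)

lemma markedRay_succ (n : ℕ) (c : Bool) : markedRay (n + 1) c = cons true (markedRay n c) := rfl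

lemma markedRay_injective2 : Function.Injective2 markedRay := by
  intro m n c d h
  induction m generalizing n with
  | zero =>
    cases n with
    | zero =>
      have htail := (Stream'.cons_injective2 h).2
      exact ⟨rfl, (Stream'.cons_injective2 htail).1⟩
    | succ n => exact absurd (Stream'.cons_injective2 h).1 Bool.false_ne_true
  | succ m ih =>
    cases n with
    | zero => exact absurd (Stream'.cons_injective2 h).1.symm Bool.false_ne_true
    | succ n => exact (ih (Stream'.cons_injective2 h).2).imp_left (congrArg (· + 1))

lemma directedAct_const_true (k : Klein) : directedAct k (const true) = const true := by
  ext n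
  induction n generalizing k with
  | zero => rfl
  | succ n ih =>
    rw [Stream'.const_eq, directedAct_cons_true]
    exact ih (shift k)

lemma directedAct_markedRay (n : ℕ) (k : Klein) (c : Bool) :
    directedAct k (markedRay n c) = markedRay n (c ^^ active (shift^[n] k)) := by
  induction n generalizing k with
  | zero =>
    rw [markedRay, directedAct_cons_false]
    cases h : active k <;> simp [markedRay, h]
  | succ n ih => rw [markedRay_succ, directedAct_cons_true, ih]; rfl

lemma orbit_markedRay_eq_orbit_not (n : ℕ) (c : Bool) :
    MulAction.orbit grigorchukGroup (markedRay n c) =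
      MulAction.orbit grigorchukGroup (markedRay n !c) := by
  obtain ⟨k, hk⟩ : ∃ k, active k = true := ⟨.ofAdd (1, 0), by decide⟩
  obtain ⟨l, rfl⟩ := shift_surjective.iterate n k
  refine MulAction.orbit_eq_iff.2 ⟨⟨directed l, directed_mem_grigorchukGroup l⟩, ?_⟩
  change directedAct l _ = _
  rw [directedAct_markedRay, hk, Bool.xor_true, Bool.not_not]

lemma exists_mem_grigorchukGroup_markedRay_succ (n : ℕ) :
    ∃ γ ∈ grigorchukGroup, γ (markedRay n false) = markedRay (n + 1) true := by
  induction n with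
  | zero =>
    refine ⟨rooted, rooted_mem_grigorchukGroup, ?_⟩
    rw [markedRay_succ, markedRay, markedRay, rooted_apply, flipHead_cons, ← Stream'.const_eq]
    rfl
  | succ n ih =>
    obtain ⟨γ, hγ, hmap⟩ := ih
    obtain ⟨δ, hδ, hsection⟩ := exists_mem_grigorchukGroup_cons_true hγ
    exact ⟨δ, hδ, by rw [markedRay_succ, hsection, hmap, markedRay_succ (n + 1)]⟩

lemma orbit_markedRay (n : ℕ) (c : Bool) :
    MulAction.orbit grigorchukGroup (markedRay n c) =
      MulAction.orbit grigorchukGroup (markedRay 0 true) := by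
  induction n generalizing c with
  | zero => cases c; exacts [orbit_markedRay_eq_orbit_not 0 false, rfl]
  | succ n ih =>
    have htrue : MulAction.orbit grigorchukGroup (markedRay (n + 1) true) =
        MulAction.orbit grigorchukGroup (markedRay 0 true) := by
      obtain ⟨γ, hγ, hmap⟩ := exists_mem_grigorchukGroup_markedRay_succ n
      rw [← ih false]
      exact MulAction.orbit_eq_iff.2 ⟨⟨γ, hγ⟩, hmap⟩
    cases c
    exacts [(orbit_markedRay_eq_orbit_not (n + 1) false).trans htrue, htrue]

lemma exists_mem_grigorchukGroup_markedRay_eq (m n : ℕ) (c d : Bool) :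
    ∃ γ ∈ grigorchukGroup, γ (markedRay m c) = markedRay n d := by
  obtain ⟨γ, hγ⟩ := MulAction.orbit_eq_iff.1
    ((orbit_markedRay n d).trans (orbit_markedRay m c).symm)
  exact ⟨γ, γ.2, hγ⟩

lemma exists_mem_grigorchukGroup_isolating (n : ℕ) :
    ∃ γ ∈ grigorchukGroup, (∀ m c, γ (markedRay n false) ≠ markedRay m c) ∧
      ∀ m c, n ≤ m → markedRay m c ≠ markedRay n false → γ (markedRay m c) = markedRay m c := by
  induction n with
  | zero =>
    have hd : active (.ofAdd (0, 1)) = false ∧ active (shift (.ofAdd (0, 1))) = true := by decide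
    let γ := rooted * directed (.ofAdd (0, 1)) * rooted
    have htrue (v : Ray) : γ (cons true v) = cons true v := by
      simp [γ, directedAct_cons_false, hd.1]
    have hfalse (v : Ray) :
        γ (cons false v) = cons false (directedAct (shift (.ofAdd (0, 1))) v) := by
      simp [γ, directedAct_cons_true]
    refine ⟨γ, mul_mem (mul_mem rooted_mem_grigorchukGroup (directed_mem_grigorchukGroup _))
      rooted_mem_grigorchukGroup, fun m c h => ?_, fun m c _ hne => ?_⟩
    · rw [markedRay, hfalse, directedAct_cons_false, if_pos hd.2] at h
      cases m with
      | zero =>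
        have htail := (Stream'.cons_injective2 (Stream'.cons_injective2 h).2).2
        exact Bool.false_ne_true (congrArg Stream'.head htail)
      | succ m => exact Bool.false_ne_true (Stream'.cons_injective2 h).1
    · rcases m with _ | m
      · obtain rfl : c = true := by grind
        rw [markedRay, hfalse, ← Stream'.const_eq, directedAct_const_true]
      · exact htrue _
  | succ n ih =>
    obtain ⟨γ, hγ, hmove, hfix⟩ := ih
    obtain ⟨δ, hδ, hsection⟩ := exists_mem_grigorchukGroup_cons_true hγ
    refine ⟨δ, hδ, fun m c => ?_, fun m c hm hne => ?_⟩
    · rw [markedRay_succ, hsection]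
      cases m with
      | zero => exact fun h => Bool.false_ne_true (Stream'.cons_injective2 h).1.symm
      | succ m => exact fun h => hmove m c (Stream'.cons_injective2 h).2
    · obtain ⟨m, rfl⟩ := Nat.exists_eq_add_one.2 (n.succ_pos.trans_le hm)
      rw [markedRay_succ, hsection, hfix m c (by lia) fun h => hne (congrArg _ h)]

end MarkedRays

section Decoration

variable {A Y : Type*} [Group A] {t : ℕ → A →* Perm Y}

/-- The action of `A` on the fibers of `Ray × Y` which is given by `t n` over the two marked rays of
level `n` and is trivial over the other rays. -/
noncomputable def decoration (t : ℕ → A →* Perm Y) : Ray → A →* Perm Y :=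
  Function.extend (Function.uncurry markedRay) (fun p => t p.1) 1

lemma decoration_markedRay (t : ℕ → A →* Perm Y) (n : ℕ) (c : Bool) :
    decoration t (markedRay n c) = t n :=
  markedRay_injective2.uncurry.extend_apply _ _ (n, c)

lemma decoration_eq_one (t : ℕ → A →* Perm Y) {w : Ray} (hw : ∀ n c, markedRay n c ≠ w) :
    decoration t w = 1 :=
  Function.extend_apply' _ _ w fun ⟨p, hp⟩ => hw p.1 p.2 hp

lemma exists_eq_markedRay_or_ne (w : Ray) :
    (∃ n c, w = markedRay n c) ∨ ∀ n c, markedRay n c ≠ w := by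
  grind

lemma decoration_directedAct (t : ℕ → A →* Perm Y) (k : Klein) (w : Ray) :
    decoration t (directedAct k w) = decoration t w := by
  obtain ⟨n, c, rfl⟩ | hw := exists_eq_markedRay_or_ne w
  · simp only [directedAct_markedRay, decoration_markedRay]
  · rw [decoration_eq_one t hw, decoration_eq_one t fun n c h => ?_]
    refine hw n (c ^^ active (shift^[n] k⁻¹)) ?_
    rw [← directedAct_markedRay, h, ← directedAct_mul, inv_mul_cancel, directedAct_one]

lemma decoration_cons_true (t : ℕ → A →* Perm Y) (w : Ray) :
    decoration t (cons true w) = decoration (fun n => t (n + 1)) w := by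
  obtain ⟨n, c, rfl⟩ | hw := exists_eq_markedRay_or_ne w
  · rw [← markedRay_succ, decoration_markedRay, decoration_markedRay]
  · rw [decoration_eq_one _ hw, decoration_eq_one]
    rintro (_ | n) c h
    · exact Bool.false_ne_true (Stream'.cons_injective2 h).1
    · exact hw n c (Stream'.cons_injective2 h).2

lemma decoration_cons_false (ht : t 0 = 1) (w : Ray) : decoration t (cons false w) = 1 := by
  obtain ⟨_ | n, c, hw⟩ | hw := exists_eq_markedRay_or_ne (cons false w)
  · rw [hw, decoration_markedRay, ht]
  · exact absurd (Stream'.cons_injective2 hw).1 Bool.false_ne_true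
  · exact decoration_eq_one t hw

/-- The element `(k, x)` of `Klein × A` acts on `Ray × Y` by the product of the directed generator
`k` and the decoration of `x`, which commute. -/
noncomputable def letter (t : ℕ → A →* Perm Y) : Klein × A →* Perm (Ray × Y) :=
  (base.comp directed).noncommCoprod (fiberwise.comp (MonoidHom.pi (decoration t))) fun k x =>
    Equiv.ext fun ⟨w, y⟩ => by
      change (_, decoration t w x y) = (_, decoration t (directedAct k w) x y)
      rw [decoration_directedAct]
      rfl

lemma letter_mk (t : ℕ → A →* Perm Y) (k : Klein) (x : A) :
    letter t (k, x) = base (directed k) * fiberwise (fun w => decoration t w x) := rfl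

/-- The generators of the decorated Grigorchuk group: `rooted` and the letters. -/
def decoratedGenerators (t : ℕ → A →* Perm Y) : Set (Perm (Ray × Y)) :=
  insert (base rooted) (Set.range (letter t))

/-- The Grigorchuk group decorated by `t`: a subgroup of the permutational wreath product of
`Perm Y` by the Grigorchuk group. -/
def decoratedGroup (t : ℕ → A →* Perm Y) : Subgroup (Perm (Ray × Y)) :=
  Subgroup.closure (decoratedGenerators t)

lemma letter_mem_decoratedGroup (t : ℕ → A →* Perm Y) (v : Klein × A) :
    letter t v ∈ decoratedGroup t :=
  Subgroup.subset_closure (Set.mem_insert_of_mem _ ⟨v, rfl⟩)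

lemma base_mem_decoratedGroup (t : ℕ → A →* Perm Y) {γ : Perm Ray} (hγ : γ ∈ grigorchukGroup) :
    base γ ∈ decoratedGroup t := by
  have hle : grigorchukGroup ≤ (decoratedGroup t).comap base := by
    rw [grigorchukGroup, Subgroup.closure_le]
    rintro _ (rfl | ⟨k, rfl⟩)
    · exact Subgroup.subset_closure (Set.mem_insert _ _)
    · simpa [letter_mk, ← Pi.one_def] using letter_mem_decoratedGroup t (k, 1)
  exact hle hγ

lemma fiberwise_decoration_mem_decoratedGroup (t : ℕ → A →* Perm Y) (x : A) :
    fiberwise (fun w => decoration t w x) ∈ decoratedGroup t := by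
  simpa [letter_mk] using letter_mem_decoratedGroup t (1, x)

lemma decoratedGroup_le {U : Subgroup (Perm (Ray × Y))}
    (hbase : ∀ γ ∈ grigorchukGroup, base γ ∈ U)
    (hdec : ∀ x, fiberwise (fun w => decoration t w x) ∈ U) : decoratedGroup t ≤ U := by
  rw [decoratedGroup, Subgroup.closure_le]
  rintro _ (rfl | ⟨⟨k, x⟩, rfl⟩)
  · exact hbase _ rooted_mem_grigorchukGroup
  · exact U.mul_mem (hbase _ (directed_mem_grigorchukGroup k)) (hdec x)

end Decoration

section Truncation

variable {A Y : Type*} [Group A] {t : ℕ → A →* Perm Y}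

/-- The sequence `t` with its first `n` terms replaced by `1`. -/
def truncate {M : Type*} [One M] (n : ℕ) (t : ℕ → M) (j : ℕ) : M := if j < n then 1 else t j

lemma truncate_zero {M : Type*} [One M] (t : ℕ → M) : truncate 0 t = t := rfl

noncomputable instance : DecidableEq Ray := Classical.decEq _

lemma fiberwise_mulSingle_markedRay_mem {m n : ℕ} {c d : Bool} {h : Perm Y}
    (hmem : fiberwise (Pi.mulSingle (markedRay m c) h) ∈ decoratedGroup t) :
    fiberwise (Pi.mulSingle (markedRay n d) h) ∈ decoratedGroup t := by
  obtain ⟨γ, hγ, hmap⟩ := exists_mem_grigorchukGroup_markedRay_eq m n c d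
  rw [← hmap, ← base_mul_fiberwise_mulSingle_mul_base_inv]
  have hbase := base_mem_decoratedGroup t hγ
  exact mul_mem (mul_mem hbase hmem) (inv_mem hbase)

lemma fiberwise_mulSingle_mem_decoratedGroup_truncate (hA : commutator A = ⊤)
    (t : ℕ → A →* Perm Y) (m n : ℕ) (c : Bool) (x : A) :
    fiberwise (Pi.mulSingle (markedRay m c) (t n x)) ∈ decoratedGroup (truncate n t) := by
  obtain ⟨γ, hγ, hmove, hfix⟩ := exists_mem_grigorchukGroup_isolating n
  refine fiberwise_mulSingle_markedRay_mem (m := n) (c := false) ?_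
  have hn : decoration (truncate n t) (markedRay n false) = t n := by
    simp [decoration_markedRay, truncate]
  rw [← hn]
  refine fiberwise_mulSingle_mem_of_isolated hA (fiberwise_decoration_mem_decoratedGroup _)
    (base_mem_decoratedGroup _ hγ) (decoration_eq_one _ fun m c h => hmove m c h.symm)
    (fun w hw => ?_) x
  obtain ⟨m, c, rfl⟩ | hw' := exists_eq_markedRay_or_ne w
  · rcases lt_or_ge m n with hm | hm
    · exact .inl (by simp [decoration_markedRay, truncate, hm])
    · exact .inr (by rw [hfix m c hm hw])
  · exact .inl (decoration_eq_one _ hw')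

lemma decoration_truncate_eq_mul (t : ℕ → A →* Perm Y) (n : ℕ) (x : A) :
    (fun w => decoration (truncate n t) w x) = (fun w => decoration (truncate (n + 1) t) w x) *
      (Pi.mulSingle (markedRay n false) (t n x) * Pi.mulSingle (markedRay n true) (t n x)) := by
  funext w
  simp only [Pi.mul_apply, Pi.mulSingle_apply]
  obtain ⟨m, c, rfl⟩ | hw := exists_eq_markedRay_or_ne w
  · simp only [decoration_markedRay, truncate, markedRay_injective2.eq_iff]
    obtain rfl | hm := eq_or_ne m n
    · cases c <;> simp
    · have hlt : m < n + 1 ↔ m < n := by lia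
      simp [hm, hlt]
  · simp [decoration_eq_one _ hw, (hw n _).symm]

lemma decoratedGroup_truncate_antitone (hA : commutator A = ⊤) (t : ℕ → A →* Perm Y) :
    Antitone fun n => decoratedGroup (truncate n t) :=
  antitone_nat_of_succ_le fun n =>
    decoratedGroup_le (fun γ hγ => base_mem_decoratedGroup _ hγ) fun x => by
      have hmem := fiberwise_decoration_mem_decoratedGroup (truncate n t) x
      rw [decoration_truncate_eq_mul, map_mul, map_mul] at hmem
      have hsingle (c : Bool) := fiberwise_mulSingle_mem_decoratedGroup_truncate hA t n n c x
      exact (mul_mem_cancel_right (mul_mem (hsingle false) (hsingle true))).1 hmem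

/-- If every term of `t` recurs, the decorations removed by a truncation are recovered from later
ones. -/
lemma decoratedGroup_truncate (hA : commutator A = ⊤) (ht : ∀ n, ∃ m, n < m ∧ t m = t n) (n : ℕ) :
    decoratedGroup (truncate n t) = decoratedGroup t := by
  induction n with
  | zero => rw [truncate_zero]
  | succ n ih =>
    refine (decoratedGroup_truncate_antitone hA t n.le_succ).antisymm ?_ |>.trans ih
    refine decoratedGroup_le (fun γ hγ => base_mem_decoratedGroup _ hγ) fun x => ?_
    obtain ⟨m, hm, htm⟩ := ht n
    have hsingle (c : Bool) := decoratedGroup_truncate_antitone hA t (Nat.succ_le_of_lt hm)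
      (fiberwise_mulSingle_mem_decoratedGroup_truncate hA t n m c x)
    rw [decoration_truncate_eq_mul, map_mul, map_mul, ← htm]
    exact mul_mem (fiberwise_decoration_mem_decoratedGroup _ x)
      (mul_mem (hsingle false) (hsingle true))

lemma exists_injective_hom_decoratedGroup (hA : commutator A = ⊤) {B : Type*} [Group B]
    {φ : B →* Perm Y} (hφ : Function.Injective φ) (hrange : φ.range ≤ ⨆ m, (t m).range) :
    ∃ ψ : B →* decoratedGroup t, Function.Injective ψ := by
  let ι : Perm Y →* Perm (Ray × Y) :=
    fiberwise.comp (MonoidHom.mulSingle (fun _ : Ray => Perm Y) (markedRay 0 false))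
  have hι : Function.Injective ι :=
    fiberwise_injective.comp (Pi.mulSingle_injective (M := fun _ : Ray => Perm Y) _)
  have hle : ⨆ m, (t m).range ≤ (decoratedGroup t).comap ι := by
    refine iSup_le fun m => ?_
    rintro _ ⟨x, rfl⟩
    exact decoratedGroup_truncate_antitone hA t m.zero_le
      (fiberwise_mulSingle_mem_decoratedGroup_truncate hA t 0 m false x)
  exact ⟨(ι.comp φ).codRestrict _ fun b => hle (hrange ⟨b, rfl⟩),
    fun _ _ h => hφ (hι (congrArg Subtype.val h))⟩

end Truncation

section Weights

variable {A : Type*} [Group A] {θ : ℝ}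

lemma pos_of_cubic (hθ : θ ^ 3 + θ ^ 2 + θ = 2) : 0 < θ := by
  by_contra! h
  nlinarith [sq_nonneg θ, sq_nonneg (θ + 1)]

lemma lt_one_of_cubic (hθ : θ ^ 3 + θ ^ 2 + θ = 2) : θ < 1 := by
  by_contra! h
  linarith [one_le_pow₀ h (n := 3), one_le_pow₀ h (n := 2)]

lemma cube_lt_one_of_cubic (hθ : θ ^ 3 + θ ^ 2 + θ = 2) : θ ^ 3 < 1 :=
  pow_lt_one₀ (pos_of_cubic hθ).le (lt_one_of_cubic hθ) three_ne_zero

/-- Bartholdi's weights of the generators `b`, `c`, `d` of the Grigorchuk group; the weight of `a`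
is `1 - θ ^ 3`. They are chosen so that passing from `k * a` to its two sections multiplies the
total weight by exactly `θ`, which forces `θ ^ 3 + θ ^ 2 + θ = 2`. -/
def kleinWeight (θ : ℝ) (k : Klein) : ℝ :=
  if k = 1 then 0
  else if k = .ofAdd (1, 0) then θ ^ 3
  else if k = .ofAdd (1, 1) then 1 - θ ^ 2
  else 1 - θ

lemma klein_cases : ∀ k : Klein,
    k = 1 ∨ k = .ofAdd (1, 0) ∨ k = .ofAdd (1, 1) ∨ k = .ofAdd (0, 1) := by
  decide

lemma kleinWeight_one : kleinWeight θ 1 = 0 := if_pos rfl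

lemma one_sub_le_kleinWeight (hθ : θ ^ 3 + θ ^ 2 + θ = 2) {k : Klein} (hk : k ≠ 1) :
    1 - θ ≤ kleinWeight θ k := by
  have h0 := pos_of_cubic hθ
  have h1 := lt_one_of_cubic hθ
  obtain rfl | rfl | rfl | rfl := klein_cases k <;> simp +decide [kleinWeight] at hk ⊢ <;> nlinarith

lemma kleinWeight_mul_le (hθ : θ ^ 3 + θ ^ 2 + θ = 2) (k l : Klein) :
    kleinWeight θ (k * l) ≤ kleinWeight θ k + kleinWeight θ l := by
  have h0 := pos_of_cubic hθ
  have h1 := lt_one_of_cubic hθ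
  obtain rfl | rfl | rfl | rfl := klein_cases k <;>
    obtain rfl | rfl | rfl | rfl := klein_cases l <;>
    simp +decide only [kleinWeight, if_true, if_false] <;> nlinarith

lemma kleinWeight_shift (hθ : θ ^ 3 + θ ^ 2 + θ = 2) {k : Klein} (hk : k ≠ 1) :
    (if active k then 1 - θ ^ 3 else 0) + kleinWeight θ (shift k) =
      θ * (1 - θ ^ 3 + kleinWeight θ k) := by
  obtain rfl | rfl | rfl | rfl := klein_cases k <;> simp +decide [kleinWeight] at hk ⊢
  · linear_combination -hθ
  · linear_combination (θ - 1) * hθ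
  · linear_combination θ * hθ

lemma kleinWeight_nonneg (hθ : θ ^ 3 + θ ^ 2 + θ = 2) (k : Klein) : 0 ≤ kleinWeight θ k := by
  obtain rfl | hk := eq_or_ne k 1
  · exact kleinWeight_one.ge
  · exact (sub_nonneg.2 (lt_one_of_cubic hθ).le).trans (one_sub_le_kleinWeight hθ hk)

open Classical in
/-- The weight of an element of `A`: a nontrivial one weighs as much as the lightest nontrivial
element `d` of the Klein four-group. -/
noncomputable def fiberWeight (θ : ℝ) (x : A) : ℝ := if x = 1 then 0 else 1 - θ

lemma fiberWeight_one : fiberWeight θ (1 : A) = 0 := if_pos rfl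

lemma fiberWeight_of_ne_one {x : A} (hx : x ≠ 1) : fiberWeight θ x = 1 - θ := if_neg hx

lemma fiberWeight_nonneg (h1 : θ ≤ 1) (x : A) : 0 ≤ fiberWeight θ x := by
  rw [fiberWeight]
  split_ifs <;> linarith

lemma fiberWeight_le (h1 : θ ≤ 1) (x : A) : fiberWeight θ x ≤ 1 - θ := by
  rw [fiberWeight]
  split_ifs <;> linarith

lemma fiberWeight_mul_le (h1 : θ ≤ 1) (x y : A) :
    fiberWeight θ (x * y) ≤ fiberWeight θ x + fiberWeight θ y := by
  obtain rfl | hx := eq_or_ne x 1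
  · simp [fiberWeight_one]
  · rw [fiberWeight_of_ne_one hx]
    exact (fiberWeight_le h1 _).trans (le_add_of_nonneg_right (fiberWeight_nonneg h1 y))

/-- The weight of the letter `(k, x)`. -/
noncomputable def weight (θ : ℝ) (v : Klein × A) : ℝ := max (kleinWeight θ v.1) (fiberWeight θ v.2)

lemma weight_one : weight θ (1 : Klein × A) = 0 := by
  simp [weight, kleinWeight_one, fiberWeight_one]

lemma weight_nonneg (hθ : θ ^ 3 + θ ^ 2 + θ = 2) (v : Klein × A) : 0 ≤ weight θ v :=
  (kleinWeight_nonneg hθ v.1).trans (le_max_left _ _)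

lemma weight_le_one (hθ : θ ^ 3 + θ ^ 2 + θ = 2) (v : Klein × A) : weight θ v ≤ 1 := by
  have h0 := pos_of_cubic hθ
  have h1 := lt_one_of_cubic hθ
  refine max_le ?_ ((fiberWeight_le h1.le v.2).trans (sub_le_self 1 h0.le))
  rw [kleinWeight]
  split_ifs <;> nlinarith [cube_lt_one_of_cubic hθ]

lemma weight_mul_le (hθ : θ ^ 3 + θ ^ 2 + θ = 2) (u v : Klein × A) :
    weight θ (u * v) ≤ weight θ u + weight θ v :=
  (max_le_max (kleinWeight_mul_le hθ u.1 v.1)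
    (fiberWeight_mul_le (lt_one_of_cubic hθ).le u.2 v.2)).trans max_add_add_le_max_add_max

/-- The letter acting on the subtree below `1` when `v` acts on the whole tree. -/
def shiftLetter (v : Klein × A) : Klein × A := (shift v.1, v.2)

lemma weight_shiftLetter_le (hθ : θ ^ 3 + θ ^ 2 + θ = 2) (v : Klein × A) :
    (if active v.1 then 1 - θ ^ 3 else 0) + weight θ (shiftLetter v) ≤
      θ * (1 - θ ^ 3 + weight θ v) := by
  obtain ⟨k, x⟩ := v
  have h0 := pos_of_cubic hθ
  have h1 := lt_one_of_cubic hθ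
  obtain rfl | hk := eq_or_ne k 1
  · have hactive : active 1 = false := by decide
    have hx0 := fiberWeight_nonneg h1.le x
    have hx1 := fiberWeight_le h1.le x
    simp only [shiftLetter, weight, map_one, kleinWeight_one, hactive, max_eq_right hx0,
      Bool.false_eq_true, if_false, zero_add]
    have hθ' : θ * (1 - θ ^ 3) = 2 * (1 - θ) := by linear_combination (1 - θ) * hθ
    nlinarith
  · have hshift : shift k ≠ 1 := by revert k; decide
    have hle : fiberWeight θ x ≤ kleinWeight θ (shift k) :=
      (fiberWeight_le h1.le x).trans (one_sub_le_kleinWeight hθ hshift)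
    rw [shiftLetter, weight, max_eq_left hle, kleinWeight_shift hθ hk]
    gcongr
    exact le_max_left _ _

end Weights

section Words

/-- The alternating words `v₀ a v₁ a ⋯ a vₙ` with letters `vᵢ` in `V`. -/
inductive AltWord (V : Type*) : Type _
  | single (v : V) : AltWord V
  | cons (v : V) (w : AltWord V) : AltWord V

namespace AltWord

section Basic

variable {V : Type*}

/-- The number of occurrences of `a`. -/
def length : AltWord V → ℕ
  | single _ => 0
  | cons _ w => w.length + 1

/-- The parity of the number of occurrences of `a`, which tells whether the word acts on the first
letter of a ray by a flip. -/
def parity : AltWord V → Bool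
  | single _ => false
  | cons _ w => !w.parity

/-- The alternating word representing `v * w`. -/
def mulLeft [Mul V] (v : V) : AltWord V → AltWord V
  | single u => single (v * u)
  | cons u w => cons (v * u) w

end Basic

variable {A Y : Type*} [Group A] {θ : ℝ} {t : ℕ → A →* Perm Y}

/-- The total weight of the letters, where `a` has weight `1 - θ ^ 3`. -/
noncomputable def cost (θ : ℝ) : AltWord (Klein × A) → ℝ
  | single v => weight θ v
  | cons v w => weight θ v + (1 - θ ^ 3 + w.cost θ)

/-- The permutation represented by a word over the generators of `decoratedGroup t`. -/
noncomputable def eval (t : ℕ → A →* Perm Y) : AltWord (Klein × A) → Perm (Ray × Y)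
  | single v => letter t v
  | cons v w => letter t v * (base rooted * w.eval t)

lemma eval_mulLeft (v : Klein × A) (w : AltWord (Klein × A)) :
    (w.mulLeft v).eval t = letter t v * w.eval t := by
  cases w <;> simp [mulLeft, eval, mul_assoc]

lemma eval_cons_one (w : AltWord (Klein × A)) : (cons 1 w).eval t = base rooted * w.eval t := by
  simp [eval]

lemma cost_mulLeft_le (hθ : θ ^ 3 + θ ^ 2 + θ = 2) (v : Klein × A) (w : AltWord (Klein × A)) :
    (w.mulLeft v).cost θ ≤ weight θ v + w.cost θ := by
  cases w with
  | single u => exact weight_mul_le hθ v u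
  | cons u w =>
    rw [mulLeft, cost, cost]
    linarith [weight_mul_le hθ v u]

lemma cost_cons_one (w : AltWord (Klein × A)) : (cons 1 w).cost θ = 1 - θ ^ 3 + w.cost θ := by
  rw [cost, weight_one, zero_add]

lemma length_mul_le_cost (hθ : θ ^ 3 + θ ^ 2 + θ = 2) (w : AltWord (Klein × A)) :
    w.length * (1 - θ ^ 3) ≤ w.cost θ := by
  induction w with
  | single v => simpa [length, cost] using weight_nonneg hθ v
  | cons v w ih =>
    rw [length, cost]
    push_cast
    linarith [weight_nonneg hθ v]

lemma exists_eval_eq_prod (hθ : θ ^ 3 + θ ^ 2 + θ = 2) {l : List (Perm (Ray × Y))}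
    (hl : ∀ s ∈ l, s ∈ decoratedGenerators t) :
    ∃ w : AltWord (Klein × A), w.eval t = l.prod ∧ w.cost θ ≤ l.length := by
  induction l with
  | nil => exact ⟨single 1, by simp [eval], by simp [cost, weight_one]⟩
  | cons s l ih =>
    obtain ⟨hs, hl⟩ := List.forall_mem_cons.1 hl
    obtain ⟨w, hw, hcost⟩ := ih hl
    have hlength : ((s :: l).length : ℝ) = l.length + 1 := by simp
    rw [List.prod_cons, ← hw, hlength]
    obtain rfl | ⟨v, rfl⟩ := hs
    · refine ⟨cons 1 w, eval_cons_one w, ?_⟩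
      rw [cost_cons_one]
      linarith [pow_pos (pos_of_cubic hθ) 3]
    · refine ⟨w.mulLeft v, eval_mulLeft v w, (cost_mulLeft_le hθ v w).trans ?_⟩
      linarith [weight_le_one hθ v]

end AltWord

end Words

section Sections

variable {A Y : Type*} [Group A] {θ : ℝ} {t : ℕ → A →* Perm Y}

/-- The inclusion of `Ray × Y` into itself as the part over the subtree below `c`. -/
def graft (c : Bool) : Ray × Y → Ray × Y := Prod.map (Stream'.cons c) id

lemma base_rooted_graft (c : Bool) (z : Ray × Y) : base rooted (graft c z) = graft (!c) z := rfl

lemma letter_graft_true (v : Klein × A) (z : Ray × Y) :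
    letter t v (graft true z) = graft true (letter (fun n => t (n + 1)) (shiftLetter v) z) := by
  obtain ⟨w, y⟩ := z
  change (directedAct v.1 (cons true w), decoration t (cons true w) v.2 y) = _
  rw [directedAct_cons_true, decoration_cons_true]
  rfl

lemma letter_graft_false (ht : t 0 = 1) (v : Klein × A) (z : Ray × Y) :
    letter t v (graft false z) = graft false (if active v.1 then base rooted z else z) := by
  obtain ⟨w, y⟩ := z
  change (directedAct v.1 (cons false w), decoration t (cons false w) v.2 y) = _
  rw [directedAct_cons_false, decoration_cons_false ht]
  cases active v.1 <;> rfl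

namespace AltWord

/-- The word `w` multiplied by the section of the letter `v` at `c`. -/
def mulSection (v : Klein × A) (c : Bool) (w : AltWord (Klein × A)) : AltWord (Klein × A) :=
  if c then w.mulLeft (shiftLetter v) else if active v.1 then cons 1 w else w

/-- A word representing the section of `w` at `c`, that is, the map which `w` induces from the
subtree below `c` to the subtree below the image of `c`. -/
def sectionAt (c : Bool) : AltWord (Klein × A) → AltWord (Klein × A)
  | single v => mulSection v c (single 1)
  | cons v w => mulSection v (!(c ^^ w.parity)) (w.sectionAt c)

lemma letter_graft_eval (ht : t 0 = 1) (v : Klein × A) (c : Bool) (w : AltWord (Klein × A))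
    (z : Ray × Y) :
    letter t v (graft c (w.eval (fun n => t (n + 1)) z)) =
      graft c ((mulSection v c w).eval (fun n => t (n + 1)) z) := by
  cases c with
  | false =>
    rw [letter_graft_false ht, mulSection, if_neg Bool.false_ne_true]
    split_ifs
    · rw [eval_cons_one, Perm.mul_apply]
    · rfl
  | true => rw [letter_graft_true, mulSection, if_pos rfl, eval_mulLeft, Perm.mul_apply]

lemma eval_graft (ht : t 0 = 1) (w : AltWord (Klein × A)) (c : Bool) (z : Ray × Y) :
    w.eval t (graft c z) =
      graft (c ^^ w.parity) ((w.sectionAt c).eval (fun n => t (n + 1)) z) := by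
  induction w with
  | single v =>
    rw [parity, Bool.xor_false, sectionAt, ← letter_graft_eval ht]
    simp [eval]
  | cons v w ih =>
    rw [eval, Perm.mul_apply, Perm.mul_apply, ih, base_rooted_graft, letter_graft_eval ht, parity,
      sectionAt, Bool.xor_not]

lemma cost_mulSection_add_le (hθ : θ ^ 3 + θ ^ 2 + θ = 2) (v : Klein × A) (c : Bool)
    (w w' : AltWord (Klein × A)) :
    (mulSection v c w).cost θ + (mulSection v (!c) w').cost θ ≤
      θ * (1 - θ ^ 3 + weight θ v) + (w.cost θ + w'.cost θ) := by
  wlog hc : c = true generalizing c w w'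
  · have h := this (!c) w' w (by simpa using hc)
    rw [Bool.not_not] at h
    linarith
  have hactive : (mulSection v false w').cost θ =
      (if active v.1 then 1 - θ ^ 3 else 0) + w'.cost θ := by
    rw [mulSection, if_neg Bool.false_ne_true]
    split_ifs
    · exact cost_cons_one w'
    · exact (zero_add _).symm
  rw [hc, Bool.not_true, hactive, mulSection, if_pos rfl]
  linarith [cost_mulLeft_le hθ (shiftLetter v) w, weight_shiftLetter_le hθ v]

lemma cost_sectionAt_add_le (hθ : θ ^ 3 + θ ^ 2 + θ = 2) (w : AltWord (Klein × A)) :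
    (w.sectionAt true).cost θ + (w.sectionAt false).cost θ ≤ θ * (w.cost θ + (1 - θ ^ 3)) := by
  induction w with
  | single v =>
    have hone : (single (1 : Klein × A)).cost θ = 0 := weight_one
    have h := cost_mulSection_add_le hθ v true (single 1) (single 1)
    rw [hone, Bool.not_true] at h
    rw [sectionAt, sectionAt, cost]
    linarith
  | cons v w ih =>
    have h := cost_mulSection_add_le hθ v (!(true ^^ w.parity)) (w.sectionAt true)
      (w.sectionAt false)
    have hnot : (!(false ^^ w.parity)) = !(!(true ^^ w.parity)) := by simp
    rw [sectionAt, sectionAt, cost, hnot]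
    linarith

end AltWord

end Sections

section WordCounting

lemma card_filter_sum_le_mul_pow_le {α ι : Type*} [Fintype ι] [DecidableEq ι] (F : Finset α)
    (ℓ : α → ℕ) (N : ℕ) {x : ℝ} (hx0 : 0 ≤ x) (hx1 : x ≤ 1) :
    ({w ∈ Fintype.piFinset fun _ : ι => F | ∑ i, ℓ (w i) ≤ N}.card : ℝ) * x ^ N ≤
      (∑ a ∈ F, x ^ ℓ a) ^ Fintype.card ι := by
  let P := Fintype.piFinset fun _ : ι => F
  calc ({w ∈ P | ∑ i, ℓ (w i) ≤ N}.card : ℝ) * x ^ N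
      = ∑ w ∈ P with ∑ i, ℓ (w i) ≤ N, x ^ N := by rw [Finset.sum_const, nsmul_eq_mul]
    _ ≤ ∑ w ∈ P with ∑ i, ℓ (w i) ≤ N, ∏ i, x ^ ℓ (w i) :=
        Finset.sum_le_sum fun w hw => by
          rw [Finset.prod_pow_eq_pow_sum]
          exact pow_le_pow_of_le_one hx0 hx1 (Finset.mem_filter.1 hw).2
    _ ≤ ∑ w ∈ P, ∏ i, x ^ ℓ (w i) :=
        Finset.sum_le_sum_of_subset_of_nonneg (Finset.filter_subset _ _) fun w _ _ =>
          Finset.prod_nonneg fun i _ => pow_nonneg hx0 _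
    _ = (∑ a ∈ F, x ^ ℓ a) ^ Fintype.card ι := by
        rw [← Finset.card_univ, ← Finset.prod_const, Finset.prod_univ_sum]

namespace AltWord

lemma exists_finset_sum_inv_pow_length_le (V : Type*) [Fintype V] [Nonempty V] (N : ℕ) :
    ∃ F : Finset (AltWord V), (∀ w, w.length ≤ N → w ∈ F) ∧
      ∑ w ∈ F, ((2 * Fintype.card V : ℝ)⁻¹) ^ w.length ≤ 2 * Fintype.card V := by
  classical
  have hq : (0 : ℝ) < Fintype.card V := by exact_mod_cast Fintype.card_pos
  have hsingle : Function.Injective (single : V → AltWord V) := fun _ _ => single.inj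
  have hcons : Function.Injective fun p : V × AltWord V => cons p.1 p.2 := fun _ _ h =>
    Prod.ext (cons.inj h).1 (cons.inj h).2
  induction N with
  | zero =>
    refine ⟨Finset.univ.image single, fun w hw => ?_, ?_⟩
    · cases w <;> simp_all [length]
    · rw [Finset.sum_image hsingle.injOn]
      simp only [length, pow_zero, Finset.sum_const, Finset.card_univ, nsmul_eq_mul]
      linarith
  | succ N ih =>
    obtain ⟨F, hF, hsum⟩ := ih
    refine ⟨Finset.univ.image single ∪ (Finset.univ ×ˢ F).image fun p => cons p.1 p.2,
      fun w hw => ?_, ?_⟩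
    · cases w with
      | single v => simp
      | cons v w => simpa using hF w (Nat.succ_le_succ_iff.1 hw)
    · rw [Finset.sum_union (by simp [Finset.disjoint_left]), Finset.sum_image hsingle.injOn,
        Finset.sum_image hcons.injOn, Finset.sum_product]
      simp only [length, pow_zero, pow_succ, ← Finset.sum_mul, Finset.sum_const, Finset.card_univ,
        nsmul_eq_mul]
      generalize ∑ w ∈ F, (2 * Fintype.card V : ℝ)⁻¹ ^ w.length = s at hsum ⊢
      field_simp
      linarith

lemma encard_sum_length_le (V ι : Type*) [Fintype V] [Nonempty V] [Fintype ι] (N : ℕ) :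
    {w : ι → AltWord V | ∑ i, (w i).length ≤ N}.encard ≤
      ((2 * Fintype.card V) ^ (N + Fintype.card ι) : ℕ) := by
  classical
  obtain ⟨F, hF, hsum⟩ := exists_finset_sum_inv_pow_length_le V N
  have hq : (1 : ℝ) ≤ Fintype.card V := by exact_mod_cast Fintype.card_pos
  have heq : {w : ι → AltWord V | ∑ i, (w i).length ≤ N} =
      ({w ∈ Fintype.piFinset fun _ : ι => F | ∑ i, (w i).length ≤ N} : Finset _) := by
    ext w
    simp only [Set.mem_ofPred_eq, Finset.coe_filter, Fintype.mem_piFinset, iff_and_self]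
    exact fun hw i => hF _ ((Finset.single_le_sum (fun _ _ => Nat.zero_le _)
      (Finset.mem_univ i)).trans hw)
  rw [heq, Set.encard_coe_eq_coe_finsetCard, Nat.cast_le, ← Nat.cast_le (α := ℝ)]
  have hchernoff := (card_filter_sum_le_mul_pow_le (ι := ι) F length N (by positivity)
    (inv_le_one_of_one_le₀ (by linarith))).trans
    (pow_le_pow_left₀ (by positivity) hsum (Fintype.card ι))
  rw [inv_pow, ← div_eq_mul_inv, div_le_iff₀ (by positivity), ← pow_add, add_comm] at hchernoff
  exact_mod_cast hchernoff

end AltWord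

end WordCounting

section TupleCounting

variable {A Y : Type*} [Group A] {θ T : ℝ} {t : ℕ → A →* Perm Y}

/-- The families of permutations of `Ray × Y`, as maps, which are represented by families of words
of total cost at most `T`. -/
def evalTuples (θ : ℝ) (t : ℕ → A →* Perm Y) (ι : Type*) [Fintype ι] (T : ℝ) :
    Set (ι → Ray × Y → Ray × Y) :=
  (fun (w : ι → AltWord (Klein × A)) i => (w i).eval t) '' {w | ∑ i, (w i).cost θ ≤ T}

/-- The family of maps with the given parities and sections. -/
def assemble {ι : Type*} (p : (ι → Bool) × (ι × Bool → Ray × Y → Ray × Y)) (i : ι) (z : Ray × Y) :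
    Ray × Y :=
  graft (z.1.head ^^ p.1 i) (p.2 (i, z.1.head) (z.1.tail, z.2))

lemma evalTuples_subset_image_assemble (hθ : θ ^ 3 + θ ^ 2 + θ = 2) (ht : t 0 = 1) (ι : Type*)
    [Fintype ι] (T : ℝ) :
    evalTuples θ t ι T ⊆ assemble '' (Set.univ ×ˢ evalTuples θ (fun n => t (n + 1)) (ι × Bool)
      (θ * (T + Fintype.card ι * (1 - θ ^ 3)))) := by
  rintro _ ⟨w, hw, rfl⟩
  refine ⟨(fun i => (w i).parity, fun j => ((w j.1).sectionAt j.2).eval fun n => t (n + 1)),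
    ⟨Set.mem_univ _, ⟨fun j => (w j.1).sectionAt j.2, ?_, rfl⟩⟩, ?_⟩
  · calc ∑ j : ι × Bool, ((w j.1).sectionAt j.2).cost θ
        = ∑ i, (((w i).sectionAt true).cost θ + ((w i).sectionAt false).cost θ) := by
          simp only [Fintype.sum_prod_type, Fintype.sum_bool]
      _ ≤ ∑ i, θ * ((w i).cost θ + (1 - θ ^ 3)) :=
          Finset.sum_le_sum fun i _ => AltWord.cost_sectionAt_add_le hθ (w i)
      _ = θ * (∑ i, (w i).cost θ + Fintype.card ι * (1 - θ ^ 3)) := by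
          rw [← Finset.mul_sum, Finset.sum_add_distrib, Finset.sum_const, Finset.card_univ,
            nsmul_eq_mul]
      _ ≤ θ * (T + Fintype.card ι * (1 - θ ^ 3)) :=
          mul_le_mul_of_nonneg_left (add_le_add_left hw _) (pos_of_cubic hθ).le
  · funext i ⟨v, y⟩
    rw [assemble, ← AltWord.eval_graft ht]
    exact congrArg _ (Prod.ext (Stream'.eta v) rfl)

lemma encard_evalTuples_le [Fintype A] (hθ : θ ^ 3 + θ ^ 2 + θ = 2) (t : ℕ → A →* Perm Y)
    (ι : Type*) [Fintype ι] {N : ℕ} (hT : T ≤ N * (1 - θ ^ 3)) :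
    (evalTuples θ t ι T).encard ≤
      ((2 * Fintype.card (Klein × A)) ^ (N + Fintype.card ι) : ℕ) := by
  have hsubset : {w : ι → AltWord (Klein × A) | ∑ i, (w i).cost θ ≤ T} ⊆
      {w | ∑ i, (w i).length ≤ N} := fun w hw => by
    have hlength : (∑ i, ((w i).length : ℝ)) * (1 - θ ^ 3) ≤ N * (1 - θ ^ 3) := by
      rw [Finset.sum_mul]
      exact (Finset.sum_le_sum fun i _ => (w i).length_mul_le_cost hθ).trans (hw.trans hT)
    exact_mod_cast le_of_mul_le_mul_right hlength (sub_pos.2 (cube_lt_one_of_cubic hθ))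
  exact (Set.encard_image_le _ _).trans
    ((Set.encard_le_encard hsubset).trans (AltWord.encard_sum_length_le _ _ _))

lemma encard_evalTuples_le_pow_card [Fintype A] (hθ : θ ^ 3 + θ ^ 2 + θ = 2) (t : ℕ → A →* Perm Y)
    (ι : Type*) [Fintype ι] (hT : T ≤ Fintype.card ι * 2) :
    (evalTuples θ t ι T).encard ≤
      (((2 * Fintype.card (Klein × A)) ^ (⌈2 / (1 - θ ^ 3)⌉₊ + 1)) ^ Fintype.card ι : ℕ) := by
  have hceil : 2 ≤ ⌈2 / (1 - θ ^ 3)⌉₊ * (1 - θ ^ 3) :=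
    (div_le_iff₀ (sub_pos.2 (cube_lt_one_of_cubic hθ))).1 (Nat.le_ceil _)
  have hbound : T ≤ (⌈2 / (1 - θ ^ 3)⌉₊ * Fintype.card ι : ℕ) * (1 - θ ^ 3) := by
    rw [Nat.cast_mul, mul_right_comm, mul_comm _ (Fintype.card ι : ℝ)]
    exact hT.trans (mul_le_mul_of_nonneg_left hceil (Nat.cast_nonneg _))
  exact (encard_evalTuples_le hθ t ι hbound).trans_eq (by rw [← add_one_mul, pow_mul])

lemma encard_evalTuples_le_mul (hθ : θ ^ 3 + θ ^ 2 + θ = 2) (ht : t 0 = 1) (ι : Type*) [Fintype ι]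
    (T : ℝ) :
    (evalTuples θ t ι T).encard ≤ (2 ^ Fintype.card ι : ℕ) *
      (evalTuples θ (fun n => t (n + 1)) (ι × Bool)
        (θ * (T + Fintype.card ι * (1 - θ ^ 3)))).encard := by
  classical
  refine (Set.encard_le_encard (evalTuples_subset_image_assemble hθ ht ι T)).trans
    ((Set.encard_image_le _ _).trans_eq ?_)
  rw [Set.encard_prod, Set.encard_univ, ENat.card_eq_coe_fintype_card, Fintype.card_fun,
    Fintype.card_bool]

lemma mul_add_mul_one_sub_cube_le (hθ : θ ^ 3 + θ ^ 2 + θ = 2) {c : ℝ} (hc : 0 ≤ c) {k : ℕ}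
    (hT : T ≤ c * ((2 / θ) ^ (k + 1) + 1)) :
    θ * (T + c * (1 - θ ^ 3)) ≤ c * 2 * ((2 / θ) ^ k + 1) := by
  have hθ0 := pos_of_cubic hθ
  calc θ * (T + c * (1 - θ ^ 3))
      ≤ θ * (c * ((2 / θ) ^ (k + 1) + 1) + c * 1) := by
        gcongr
        linarith [pow_pos hθ0 3]
    _ = c * (2 * (2 / θ) ^ k + 2 * θ) := by
        rw [pow_succ]
        field_simp
        ring
    _ ≤ c * (2 * (2 / θ) ^ k + 2 * 1) := by gcongr; exact (lt_one_of_cubic hθ).le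
    _ = c * 2 * ((2 / θ) ^ k + 1) := by ring

lemma exists_encard_evalTuples_le [Finite A] (hθ : θ ^ 3 + θ ^ 2 + θ = 2) :
    ∃ M : ℕ, 1 ≤ M ∧ ∀ (k : ℕ) (t : ℕ → A →* Perm Y), (∀ j < k, t j = 1) →
      ∀ (ι : Type*) [Fintype ι] (T : ℝ), T ≤ Fintype.card ι * ((2 / θ) ^ k + 1) →
        (evalTuples θ t ι T).encard ≤ (M ^ (Fintype.card ι * (2 ^ (k + 1) - 1)) : ℕ) := by
  have := Fintype.ofFinite A
  let M := (2 * Fintype.card (Klein × A)) ^ (⌈2 / (1 - θ ^ 3)⌉₊ + 1)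
  have hM : 2 ≤ M :=
    (Nat.le_mul_of_pos_right 2 Fintype.card_pos).trans (Nat.le_self_pow (Nat.succ_ne_zero _) _)
  refine ⟨M, one_le_two.trans hM, fun k => ?_⟩
  induction k with
  | zero =>
    intro t _ ι _ T hT
    rw [pow_zero, one_add_one_eq_two] at hT
    simpa only [zero_add, pow_one, Nat.add_one_sub_one, mul_one] using
      encard_evalTuples_le_pow_card hθ t ι hT
  | succ k ih =>
    intro t ht ι _ T hT
    have hcard : Fintype.card (ι × Bool) = Fintype.card ι * 2 := by
      rw [Fintype.card_prod, Fintype.card_bool]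
    have hbound : θ * (T + Fintype.card ι * (1 - θ ^ 3)) ≤
        Fintype.card (ι × Bool) * ((2 / θ) ^ k + 1) := by
      rw [hcard, Nat.cast_mul, Nat.cast_two]
      exact mul_add_mul_one_sub_cube_le hθ (Nat.cast_nonneg _) hT
    refine (encard_evalTuples_le_mul hθ (ht 0 k.succ_pos) ι T).trans ?_
    refine (mul_le_mul_right (ih _ (fun j hj => ht _ (Nat.succ_lt_succ hj)) _ _ hbound) _).trans ?_
    rw [← Nat.cast_mul, Nat.cast_le]
    refine (Nat.mul_le_mul_right _ (Nat.pow_le_pow_left hM _)).trans_eq ?_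
    rw [← pow_add, hcard, mul_assoc, ← mul_one_add, pow_succ 2 (k + 1)]
    have hpow : 1 ≤ 2 ^ (k + 1) := Nat.one_le_two_pow
    congr 2
    omega

end TupleCounting

section TruncatedGenerators

variable {A Y : Type*} [Group A] {t : ℕ → A →* Perm Y}

lemma finite_decoratedGenerators [Finite A] (t : ℕ → A →* Perm Y) :
    (decoratedGenerators t).Finite :=
  (Set.finite_range _).insert _

lemma inv_decoratedGenerators (t : ℕ → A →* Perm Y) :
    (decoratedGenerators t)⁻¹ = decoratedGenerators t := by
  have hrooted : (base rooted : Perm (Ray × Y))⁻¹ = base rooted := (map_inv base rooted).symm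
  have hletter : (Set.range (letter t))⁻¹ = Set.range (letter t) := by
    rw [← MonoidHom.coe_range, inv_coe_set]
  rw [decoratedGenerators, Set.inv_insert, hrooted, hletter]

/-- The trace of the generating set of `decoratedGroup (truncate n t)` on `decoratedGroup t`. -/
def truncatedGenerators (t : ℕ → A →* Perm Y) (n : ℕ) : Set (decoratedGroup t) :=
  Subtype.val ⁻¹' decoratedGenerators (truncate n t)

lemma closure_val_preimage_eq_top {G : Type*} [Group G] {S : Set G} {H : Subgroup G}
    (h : Subgroup.closure S = H) : Subgroup.closure ((↑) ⁻¹' S : Set H) = ⊤ := by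
  subst h
  exact Subgroup.closure_closure_coe_preimage

lemma isFiniteSymmGenSet_truncatedGenerators [Finite A] (hA : commutator A = ⊤)
    (ht : ∀ n, ∃ m, n < m ∧ t m = t n) (n : ℕ) :
    IsFiniteSymmGenSet (truncatedGenerators t n) where
  finite := (finite_decoratedGenerators _).preimage Subtype.val_injective.injOn
  inv_eq := by
    ext g
    rw [Set.mem_inv, truncatedGenerators, Set.mem_preimage, Set.mem_preimage, Subgroup.coe_inv,
      ← Set.mem_inv, inv_decoratedGenerators]
  closure_eq_top := closure_val_preimage_eq_top (decoratedGroup_truncate hA ht n)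

lemma growthFn_truncatedGenerators_le [Finite A] (hA : commutator A = ⊤)
    (ht : ∀ n, ∃ m, n < m ∧ t m = t n) {θ : ℝ} (hθ : θ ^ 3 + θ ^ 2 + θ = 2) (n m : ℕ) :
    growthFn (truncatedGenerators t n) m ≤ (evalTuples θ (truncate n t) Unit m).encard := by
  have hS := isFiniteSymmGenSet_truncatedGenerators hA ht n
  have hinj : Function.Injective fun (g : decoratedGroup t) (_ : Unit) => ⇑(g : Perm (Ray × Y)) :=
    fun g h e => Subtype.ext (DFunLike.coe_injective (congrFun e ()))
  rw [hS.growthFn_eq_natCard, Nat.card_coe_set_eq, (hS.finite_insert_one_pow m).cast_ncard_eq,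
    ← hinj.encard_image]
  refine Set.encard_le_encard ?_
  rintro _ ⟨g, hg, rfl⟩
  obtain ⟨l, hl, hlength, rfl⟩ := mem_insert_one_pow_iff.1 hg
  obtain ⟨w, hw, hcost⟩ := AltWord.exists_eval_eq_prod hθ (l := l.map (decoratedGroup t).subtype)
    (List.forall_mem_map.2 hl)
  rw [List.length_map] at hcost
  refine ⟨fun _ => w, ?_, ?_⟩
  · simpa using hcost.trans (Nat.cast_le.2 hlength)
  · simp only [hw, ← map_list_prod, Subgroup.subtype_apply]

lemma exists_growthFn_truncatedGenerators_le_exp [Finite A] (hA : commutator A = ⊤)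
    (ht : ∀ n, ∃ m, n < m ∧ t m = t n) {θ : ℝ} (hθ : θ ^ 3 + θ ^ 2 + θ = 2) :
    ∃ C : ℝ, 0 ≤ C ∧ ∀ n k m : ℕ, k ≤ n → (m : ℝ) ≤ (2 / θ) ^ k →
      (growthFn (truncatedGenerators t n) m : ℝ) ≤ Real.exp (C * 2 ^ k) := by
  obtain ⟨M, hM, hcount⟩ := exists_encard_evalTuples_le (A := A) (Y := Y) hθ
  have hM' : (1 : ℝ) ≤ M := Nat.one_le_cast.2 hM
  refine ⟨2 * Real.log M, mul_nonneg zero_le_two (Real.log_nonneg hM'), fun n k m hkn hm => ?_⟩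
  have hgrowth : growthFn (truncatedGenerators t n) m ≤ M ^ (2 ^ (k + 1) - 1) := by
    have hle := (growthFn_truncatedGenerators_le hA ht hθ n m).trans
      (hcount k (truncate n t) (fun j hj => if_pos (hj.trans_le hkn)) Unit m
        (by rw [Fintype.card_unit]; linarith))
    rw [Fintype.card_unit, one_mul] at hle
    exact_mod_cast hle
  calc (growthFn (truncatedGenerators t n) m : ℝ)
      ≤ (M : ℝ) ^ (2 ^ (k + 1) - 1) := mod_cast hgrowth
    _ ≤ (M : ℝ) ^ 2 ^ (k + 1) := pow_le_pow_right₀ hM' (Nat.sub_le _ _)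
    _ = Real.exp (2 * Real.log M * 2 ^ k) := by
        rw [← Real.exp_log (pow_pos (one_pos.trans_le hM') _), Real.log_pow]
        push_cast
        ring_nf

end TruncatedGenerators

section Interpolation

lemma two_pow_ceil_le {η r : ℝ} (hη : 1 < η) (hr : 1 ≤ r) :
    (2 : ℝ) ^ ⌈Real.log r / Real.log η⌉₊ ≤ 2 * r ^ (Real.log 2 / Real.log η) := by
  have hlog : 0 ≤ Real.log r / Real.log η :=
    div_nonneg (Real.log_nonneg hr) (Real.log_pos hη).le
  calc (2 : ℝ) ^ ⌈Real.log r / Real.log η⌉₊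
      ≤ 2 ^ (Real.log r / Real.log η + 1) := by
        rw [← Real.rpow_natCast]
        exact Real.rpow_le_rpow_of_exponent_le one_le_two (Nat.ceil_lt_add_one hlog).le
    _ = 2 * 2 ^ (Real.log r / Real.log η) := by
        rw [Real.rpow_add_one two_ne_zero, mul_comm]
    _ = 2 * r ^ (Real.log 2 / Real.log η) := by
        rw [Real.rpow_def_of_pos two_pos, Real.rpow_def_of_pos (one_pos.trans_le hr)]
        ring_nf

lemma exists_growthFnR_le_exp_rpow {G : Type*} [Group G] {η C : ℝ} (hη : 1 < η) (hC : 0 ≤ C)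
    {S : ℕ → Set G} (hS : ∀ n, IsFiniteSymmGenSet (S n))
    (hgrowth : ∀ n k m : ℕ, k ≤ n → (m : ℝ) ≤ η ^ k →
      (growthFn (S n) m : ℝ) ≤ Real.exp (C * 2 ^ k)) (R : ℝ) :
    ∃ n, ∀ r : ℝ, 0 ≤ r → r ≤ R →
      (growthFnR (S n) r : ℝ) ≤ Real.exp (2 * C * r ^ (Real.log 2 / Real.log η)) := by
  have hlogη : 0 < Real.log η := Real.log_pos hη
  refine ⟨⌈Real.log R / Real.log η⌉₊, fun r hr0 hrR => ?_⟩
  rw [growthFnR_eq_growthFn_floor hr0]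
  rcases lt_or_ge r 1 with hr | hr
  · rw [Nat.floor_eq_zero.2 hr, (hS _).growthFn_zero, Nat.cast_one]
    exact Real.one_le_exp (by positivity)
  · have hrpos : 0 < r := one_pos.trans_le hr
    have hmono : ⌈Real.log r / Real.log η⌉₊ ≤ ⌈Real.log R / Real.log η⌉₊ :=
      Nat.ceil_mono (div_le_div_of_nonneg_right (Real.log_le_log hrpos hrR) hlogη.le)
    have hrpow : r ≤ η ^ ⌈Real.log r / Real.log η⌉₊ := by
      rw [← Real.log_le_log_iff hrpos (pow_pos (one_pos.trans hη) _), Real.log_pow,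
        ← div_le_iff₀ hlogη]
      exact Nat.le_ceil _
    refine (hgrowth _ _ _ hmono ((Nat.floor_le hr0).trans hrpow)).trans (Real.exp_le_exp.2 ?_)
    calc C * 2 ^ ⌈Real.log r / Real.log η⌉₊
        ≤ C * (2 * r ^ (Real.log 2 / Real.log η)) :=
          mul_le_mul_of_nonneg_left (two_pow_ceil_le hη hr) hC
      _ = 2 * C * r ^ (Real.log 2 / Real.log η) := by ring

end Interpolation

section Root

variable {η : ℝ}

lemma two_lt_of_root (hroot : η ^ 3 - η ^ 2 - 2 * η - 4 = 0) : 2 < η := by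
  by_contra! h
  nlinarith [mul_nonneg (sub_nonneg.2 h) (sq_nonneg (η + 1))]

lemma cubic_two_div_of_root (hroot : η ^ 3 - η ^ 2 - 2 * η - 4 = 0) :
    (2 / η) ^ 3 + (2 / η) ^ 2 + 2 / η = 2 := by
  have hη : η ≠ 0 := (two_pos.trans (two_lt_of_root hroot)).ne'
  field_simp
  linarith

lemma log_two_div_log_lt_one (hη : 2 < η) : Real.log 2 / Real.log η < 1 :=
  (div_lt_one (Real.log_pos (one_lt_two.trans hη))).2 (Real.log_lt_log two_pos hη)

end Root

theorem exists_injective_hom_growthFnR_le_exp_rpow.{u} {η : ℝ}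
    (hroot : η ^ 3 - η ^ 2 - 2 * η - 4 = 0) (B : Type u) [Group B] [Countable B] :
    ∃ (W : Type u) (_ : Group W), (∃ φ : B →* W, Function.Injective φ) ∧
      ∃ K : ℝ, ∀ R : ℝ, ∃ S : Set W, IsFiniteSymmGenSet S ∧ ∀ r : ℝ, 0 ≤ r → r ≤ R →
        (growthFnR S r : ℝ) ≤ Real.exp (K * r ^ (Real.log 2 / Real.log η)) := by
  have hA : commutator (alternatingGroup (Fin 5)) = ⊤ :=
    commutator_alternatingGroup_eq_top (by simp)
  obtain ⟨t, ht, φ, hφ, hrange⟩ := exists_recurrent_seq_alternatingGroup_hom B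
  obtain ⟨C, hC, hgrowth⟩ :=
    exists_growthFn_truncatedGenerators_le_exp hA ht (cubic_two_div_of_root hroot)
  rw [div_div_cancel₀ two_ne_zero] at hgrowth
  have hS := isFiniteSymmGenSet_truncatedGenerators hA ht
  have hη : 1 < η := one_lt_two.trans (two_lt_of_root hroot)
  refine ⟨decoratedGroup t, inferInstance, exists_injective_hom_decoratedGroup hA hφ hrange,
    2 * C, fun R => ?_⟩
  obtain ⟨n, hn⟩ := exists_growthFnR_le_exp_rpow hη hC hS hgrowth R
  exact ⟨_, hS n, hn⟩

end NonuniformGrowth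

open NonuniformGrowth

/-- **Groups of non-uniform exponential growth**: let `η₊` be the positive root of
`T³ − T² − 2T − 4` and `α = log 2 / log η₊`.  Every countable group `B` embeds in a
finitely generated group `W` such that: for every finite symmetric generating set `S`
of `W` the entropy `λ_{W,S}` is strictly positive; yet the infimum of the entropies over
all finite symmetric generating sets is `0` (for every `ε > 0` there is a generating set
with entropy `< ε`).  Moreover `W` may be chosen so that for some constant `K`, for every
`R > 0` there is a finite symmetric generating set `S` of `W` with
`v_{W,S}(r) ≤ exp(K·r^α)` for all `r ∈ [0, R]`. -/
theorem exists_nonuniform_exponential_growth_embedding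
    (η : ℝ) (hη : 0 < η) (hroot : η ^ 3 - η ^ 2 - 2 * η - 4 = 0)
    (B : Type*) [Group B] [Countable B] :
    ∃ (W : Type) (_ : Group W),
      (∃ S : Set W, S.Finite ∧ S⁻¹ = S ∧ Subgroup.closure S = ⊤) ∧
      (∃ φ : B →* W, Function.Injective φ) ∧
      (∀ S : Set W, S.Finite → S⁻¹ = S → Subgroup.closure S = ⊤ →
        ∃ lam : ℝ, 0 < lam ∧ HasGrowthRate S lam) ∧
      (∀ ε : ℝ, 0 < ε →
        ∃ S : Set W, S.Finite ∧ S⁻¹ = S ∧ Subgroup.closure S = ⊤ ∧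
          ∃ lam : ℝ, lam < ε ∧ HasGrowthRate S lam) ∧
      (∃ K : ℝ, ∀ R : ℝ, 0 < R →
        ∃ S : Set W, S.Finite ∧ S⁻¹ = S ∧ Subgroup.closure S = ⊤ ∧
          ∀ r : ℝ, 0 ≤ r → r ≤ R →
            (growthFnR S r : ℝ) ≤ Real.exp (K * r ^ (Real.log 2 / Real.log η))) := by
  have : Countable (Shrink.{0} B) := (equivShrink.{0} B).symm.injective.countable
  obtain ⟨W, _, ⟨φ, hφ⟩, K, hK⟩ :=
    exists_injective_hom_growthFnR_le_exp_rpow hroot (Shrink.{0} B × FreeGroup Bool)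
  have hfree : Function.Injective
      ((φ.comp (MonoidHom.inr _ _)).comp (FreeMonoid.lift FreeGroup.of) : FreeMonoid Bool →* W) :=
    (hφ.comp (Prod.mk_right_injective 1)).comp freeMonoid_lift_freeGroup_of_injective
  refine ⟨W, inferInstance, (hK 0).imp fun S hS => ⟨hS.1.finite, hS.1.inv_eq, hS.1.closure_eq_top⟩,
    ⟨(φ.comp (MonoidHom.inl _ _)).comp Shrink.mulEquiv.{0}.symm.toMonoidHom, ?_⟩,
    fun S hfin hinv hclosure => ?_, fun ε hε => ?_, K, fun R _ => ?_⟩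
  · exact (hφ.comp (Prod.mk_left_injective 1)).comp Shrink.mulEquiv.{0}.symm.injective
  · exact IsFiniteSymmGenSet.exists_pos_hasGrowthRate ⟨hfin, hinv, hclosure⟩ hfree
  · obtain ⟨S, hS, h⟩ := exists_hasGrowthRate_lt
      (log_two_div_log_lt_one (two_lt_of_root hroot)) (fun R _ => hK R) hε
    exact ⟨S, hS.finite, hS.inv_eq, hS.closure_eq_top, h⟩
  · obtain ⟨S, hS, h⟩ := hK R
    exact ⟨S, hS.finite, hS.inv_eq, hS.closure_eq_top, h⟩
end
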